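/- arXiv:1902.10564 — 2 statements merged into one kernel-verified Lean document; each statement's English description precedes it below -/
import Mathlib

section
/- Let K be a Cantor set in ℝ. Then every finitely generated periodic subgroup of diff^{1+Lip}(K) is finite. -/
open Set

/-- `K` is a Cantor set in `ℝ`: nonempty, compact, totally disconnected, perfect. -/
def IsCantorInR (K : Set ℝ) : Prop :=
  K.Nonempty ∧ IsCompact K ∧ IsTotallyDisconnected K ∧ Perfect K

open Classical in
/-- Apply a permutation of `K` to a real number (identity outside `K`). -/
noncomputable def apK (K : Set ℝ) (f : Equiv.Perm K) (y : ℝ) : ℝ :=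
  if h : y ∈ K then (f ⟨y, h⟩ : ℝ) else y

/-- `f` locally coincides with a `C¹` embedding of an open interval with
nowhere-vanishing derivative. -/
def IsD1 (K : Set ℝ) (f : Equiv.Perm K) : Prop :=
  ∀ x : K, ∃ a b : ℝ, (x : ℝ) ∈ Set.Ioo a b ∧
    ∃ F F' : ℝ → ℝ,
      (∀ y ∈ Set.Ioo a b, HasDerivAt F (F' y) y ∧ F' y ≠ 0) ∧
      ContinuousOn F' (Set.Ioo a b) ∧
      Set.InjOn F (Set.Ioo a b) ∧
      (∀ y : ℝ, y ∈ Set.Ioo a b → y ∈ K → F y = apK K f y)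

/-- `f` locally coincides with a `C¹` embedding of an open interval with
nowhere-vanishing derivative whose log-derivative is Lipschitz. -/
def IsD1Lip (K : Set ℝ) (f : Equiv.Perm K) : Prop :=
  ∀ x : K, ∃ a b : ℝ, (x : ℝ) ∈ Set.Ioo a b ∧
    ∃ F F' : ℝ → ℝ,
      (∀ y ∈ Set.Ioo a b, HasDerivAt F (F' y) y ∧ F' y ≠ 0) ∧
      ContinuousOn F' (Set.Ioo a b) ∧
      Set.InjOn F (Set.Ioo a b) ∧
      (∃ C : NNReal, LipschitzOnWith C (fun y => Real.log |F' y|) (Set.Ioo a b)) ∧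
      (∀ y : ℝ, y ∈ Set.Ioo a b → y ∈ K → F y = apK K f y)

/-- membership in `diff¹(K)`: a homeomorphism of `K` locally coinciding
with `C¹` diffeomorphisms of intervals of `ℝ`. -/
def MemDiff1 (K : Set ℝ) (f : Equiv.Perm K) : Prop :=
  Continuous (fun x : K => f x) ∧ Continuous (fun x : K => f.symm x) ∧ IsD1 K f

/-- membership in `diff^{1+Lip}(K)`. -/
def MemDiffLip (K : Set ℝ) (f : Equiv.Perm K) : Prop :=
  Continuous (fun x : K => f x) ∧ Continuous (fun x : K => f.symm x) ∧ IsD1Lip K f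

/-- The derivative of `f` at `x`, as a limit of difference quotients within `K`. -/
def HasDerivOnK (K : Set ℝ) (f : Equiv.Perm K) (x d : ℝ) : Prop :=
  Filter.Tendsto (fun y : ℝ => (apK K f y - apK K f x) / (y - x))
    (nhdsWithin x (K \ {x})) (nhds d)

/-- `f` is increasing on the interval `I`: it coincides on `I ∩ K` with an
increasing `C¹` diffeomorphism of `I` onto an interval of `ℝ`. -/
def IncreasingOnK (K : Set ℝ) (f : Equiv.Perm K) (I : Set ℝ) : Prop :=
  ∃ F F' : ℝ → ℝ,
    StrictMonoOn F I ∧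
    (∀ y ∈ I, HasDerivWithinAt F (F' y) I y ∧ 0 < F' y) ∧
    ContinuousOn F' I ∧
    (∀ y ∈ I, y ∈ K → F y = apK K f y)

/-- `A` is invariant under the subgroup `G`. -/
def IsInvariantSet (K : Set ℝ) (G : Subgroup (Equiv.Perm K)) (A : Set ℝ) : Prop :=
  ∀ g ∈ G, ∀ x ∈ A, apK K g x ∈ A

/-- `A` is a minimal invariant set for the action of `G` on `K`. -/
def IsMinimalInvariantSet (K : Set ℝ) (G : Subgroup (Equiv.Perm K)) (A : Set ℝ) : Prop :=
  A.Nonempty ∧ A ⊆ K ∧ IsClosed A ∧ IsInvariantSet K G A ∧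
    ∀ B : Set ℝ, B.Nonempty → B ⊆ A → IsClosed B → IsInvariantSet K G B → B = A

/-- The set of points of `K` fixed by every element of `H`. -/
def fixedSet (K : Set ℝ) (H : Subgroup (Equiv.Perm K)) : Set ℝ :=
  {x | x ∈ K ∧ ∀ g ∈ H, apK K g x = x}

/-- `a, b` generate a free subsemigroup: distinct nonempty positive words in
`a` and `b` define distinct elements. -/
def IsFreePair {M : Type*} [Monoid M] (a b : M) : Prop :=
  ∀ w₁ w₂ : List Bool, w₁ ≠ [] → w₂ ≠ [] →
    (w₁.map (fun t => if t then a else b)).prod = (w₂.map (fun t => if t then a else b)).prod →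
    w₁ = w₂

/-- `G` contains no free subsemigroup on two generators. -/
def HasNoFreeSubsemigroup {Γ : Type*} [Group Γ] (G : Subgroup Γ) : Prop :=
  ¬ ∃ a ∈ G, ∃ b ∈ G, IsFreePair a b

/-- `p` is accumulated on the left by `A`. -/
def AccLeft (p : ℝ) (A : Set ℝ) : Prop := ∀ α > 0, (Set.Ico (p - α) p ∩ A).Nonempty

/-- `p` is accumulated on the right by `A`. -/
def AccRight (p : ℝ) (A : Set ℝ) : Prop := ∀ α > 0, (Set.Ioc p (p + α) ∩ A).Nonempty


/-!
An order-preserving germ of finite order is trivial, so for a point `x` with finite orbit the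
elements acting trivially near `x` form a subgroup of finite index. This subgroup is finitely
generated, hence acts trivially on one common neighbourhood of `x`, and finiteness of all orbits
gives finiteness of the group by compactness.

If some orbit is infinite, the points with infinite orbit form a closed invariant set, which
contains an infinite minimal set `M`. By uniform continuity a generator maps all but finitely many
gaps of `M` to gaps, so some gap can be moved through infinitely many small ones along paths
without repetition. The gaps have summable lengths, so the classical Denjoy–Sacksteder distortion
estimate, which is where the Lipschitz condition on `log |f'|` enters, shows that a fixed ball
around an endpoint of the initial gap shrinks together with the gap. By minimality the tiny image
can be brought back strictly inside the ball it came from, which no element of finite order can do.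
-/

open Filter Topology MulAction Function Metric MeasureTheory
open scoped NNReal Pointwise

section OrderDynamics

variable {α : Type*} [LinearOrder α]

theorem isFixedPt_of_monotoneOn_of_isPeriodicPt {f : α → α} {s : Set α} (hf : MonotoneOn f s)
    (hs : MapsTo f s s) {x : α} (hx : x ∈ s) {n : ℕ} (hn : 0 < n) (h : IsPeriodicPt f n x) :
    IsFixedPt f x := by
  have hmono : Monotone (hs.restrict f s s) := fun a b hab => hf a.2 b.2 hab
  have hper : (hs.restrict f s s)^[n] ⟨x, hx⟩ = id^[n] ⟨x, hx⟩ := by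
    rw [iterate_id]
    exact Subtype.ext ((hs.coe_iterate_restrict _ _).trans h)
  exact congrArg Subtype.val
    ((Commute.id_right.iterate_pos_eq_iff_map_eq hmono strictMono_id hn).1 hper)

end OrderDynamics

section GroupActions

variable {G X : Type*} [Group G] [MulAction G X]

theorem finiteIndex_stabilizer_iff {x : X} :
    (stabilizer G x).FiniteIndex ↔ (orbit G x).Finite := by
  rw [Subgroup.finiteIndex_iff, index_stabilizer]
  exact ⟨finite_of_ncard_ne_zero, fun h => ((ncard_pos h).2 (nonempty_orbit x)).ne'⟩

theorem orbit_subset_of_forall_smul_mem {T : Set G} (hT : Submonoid.closure T = ⊤) {s : Set X}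
    (hs : ∀ t ∈ T, ∀ y ∈ s, t • y ∈ s) {x : X} (hx : x ∈ s) : orbit G x ⊆ s := by
  rintro _ ⟨g, rfl⟩
  have hg : g ∈ Submonoid.closure T := hT ▸ Submonoid.mem_top g
  induction hg using Submonoid.closure_induction_left with
  | one => simpa using hx
  | mul_left t ht g _ ih => simpa only [mul_smul] using hs t ht _ ih

theorem not_isOfFinOrder_of_mapsTo_ssubset {g : G} {s t : Set X} (hg : MapsTo (g • ·) s t)
    (hts : t ⊂ s) : ¬ IsOfFinOrder g := by
  intro h
  obtain ⟨n, hn, hgn⟩ := isOfFinOrder_iff_pow_eq_one.1 h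
  obtain ⟨x, hxs, hxt⟩ := exists_of_ssubset hts
  obtain ⟨m, rfl⟩ := Nat.exists_eq_succ_of_ne_zero hn.ne'
  have hm : g ^ m • x ∈ s := by
    simpa only [smul_iterate] using (hg.mono_right hts.subset).iterate m hxs
  have : g • g ^ m • x ∈ t := hg hm
  rw [smul_smul, ← pow_succ', hgn, one_smul] at this
  exact hxt this

theorem finiteIndex_of_mul_mem_of_notMem {H : Subgroup G}
    (h : ∀ a ∉ H, ∀ b ∉ H, a * b ∈ H) : H.FiniteIndex := by
  by_cases htop : H = ⊤
  · rw [htop]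
    infer_instance
  obtain ⟨a, ha⟩ : ∃ a, a ∉ H := by simpa [Subgroup.eq_top_iff'] using htop
  have hindex : H.index = 2 := Subgroup.index_eq_two_iff.2 ⟨a, fun b => by
    by_cases hb : b ∈ H
    · exact Or.inr ⟨hb, fun hba => ha ((H.mul_mem_cancel_left hb).1 hba)⟩
    · exact Or.inl ⟨h b hb a ha, hb⟩⟩
  exact ⟨by simp [hindex]⟩

theorem exists_finite_inv_mem_submonoidClosure_eq_top (G : Type*) [Group G] [Group.FG G] :
    ∃ T : Set G, T.Finite ∧ (∀ t ∈ T, t⁻¹ ∈ T) ∧ Submonoid.closure T = ⊤ := by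
  obtain ⟨S, hS, hSfin⟩ := Group.fg_iff.1 ‹Group.FG G›
  refine ⟨S ∪ S⁻¹, hSfin.union hSfin.inv, fun t ht => by simpa [or_comm] using ht, ?_⟩
  rw [← Subgroup.closure_toSubmonoid, hS, Subgroup.top_toSubmonoid]

end GroupActions

section TopologicalActions

variable {G X : Type*} [Group G] [TopologicalSpace X] [MulAction G X]

/-- The subgroup of elements acting as the identity on a neighbourhood of `x`, i.e. with the same
germ at `x` as the identity. -/
def germFixingSubgroup (G : Type*) [Group G] [MulAction G X] (x : X) : Subgroup G where
  carrier := {g | ∀ᶠ y in 𝓝 x, g • y = y}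
  mul_mem' {g h} hg hh := by
    filter_upwards [hg, hh] with y hgy hhy
    rw [mul_smul, hhy, hgy]
  one_mem' := by simp
  inv_mem' {g} hg := by
    filter_upwards [hg] with y hy
    rw [inv_smul_eq_iff, hy]

theorem mem_germFixingSubgroup {x : X} {g : G} :
    g ∈ germFixingSubgroup G x ↔ ∀ᶠ y in 𝓝 x, g • y = y :=
  Iff.rfl

theorem germFixingSubgroup_le_stabilizer (x : X) : germFixingSubgroup G x ≤ stabilizer G x :=
  fun _ hg => (mem_germFixingSubgroup.1 hg).self_of_nhds

theorem eventually_le_stabilizer_of_fg {x : X} {H : Subgroup G} (hH : H.FG)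
    (hx : H ≤ germFixingSubgroup G x) : ∀ᶠ y in 𝓝 x, H ≤ stabilizer G y := by
  obtain ⟨S, rfl, hS⟩ := (Subgroup.fg_iff _).1 hH
  filter_upwards [(eventually_all_finite hS).2 fun s hs => hx (Subgroup.subset_closure hs)]
    with y hy
  exact (Subgroup.closure_le _).2 hy

theorem eventually_germFixingSubgroup_le_stabilizer [Group.FG G] {x : X}
    (h : (germFixingSubgroup G x).FiniteIndex) :
    ∀ᶠ y in 𝓝 x, germFixingSubgroup G x ≤ stabilizer G y :=
  have := h
  eventually_le_stabilizer_of_fg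
    ((Group.fg_iff_subgroup_fg (germFixingSubgroup G x)).1 (Subgroup.fg_of_index_ne_zero _)) le_rfl

theorem isOpen_setOf_orbit_finite [Group.FG G]
    (h : ∀ x : X, (orbit G x).Finite → (germFixingSubgroup G x).FiniteIndex) :
    IsOpen {x : X | (orbit G x).Finite} := by
  refine isOpen_iff_mem_nhds.2 fun x hx => ?_
  filter_upwards [eventually_germFixingSubgroup_le_stabilizer (h x hx)] with y hy
  have := h x hx
  exact finiteIndex_stabilizer_iff.1 (Subgroup.finiteIndex_of_le hy)

theorem finite_of_forall_finiteIndex_germFixingSubgroup [Group.FG G] [CompactSpace X]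
    [FaithfulSMul G X] (h : ∀ x : X, (germFixingSubgroup G x).FiniteIndex) : Finite G := by
  obtain ⟨s, -, hs⟩ := isCompact_univ.elim_nhds_subcover
    _ fun x _ => eventually_germFixingSubgroup_le_stabilizer (h x)
  have hfin : (⨅ x : s, germFixingSubgroup G (x : X)).FiniteIndex :=
    Subgroup.finiteIndex_iInf fun x => h x
  have hbot : ⨅ x : s, germFixingSubgroup G (x : X) = ⊥ := by
    refine (Subgroup.eq_bot_iff_forall _).2 fun g hg =>
      FaithfulSMul.eq_of_smul_eq_smul (α := X) fun y => ?_
    obtain ⟨x, hx, hxy⟩ := mem_iUnion₂.1 (hs (mem_univ y))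
    rw [one_smul]
    exact hxy (Subgroup.mem_iInf.1 hg ⟨x, hx⟩)
  rw [hbot, Subgroup.finiteIndex_iff, Subgroup.index_bot] at hfin
  exact Nat.finite_of_card_ne_zero hfin

theorem infinite_orbit_of_isMinimal [IsMinimal G X] [T1Space X] [Infinite X] (x : X) :
    (orbit G x).Infinite := fun h =>
  infinite_univ ((h.isClosed.closure_eq.symm.trans (dense_orbit G x).closure_eq) ▸ h)

variable [ContinuousConstSMul G X]

theorem exists_mem_nhds_subset_forall_smul_mem [Finite G] {x : X} (hx : ∀ g : G, g • x = x)
    {U : Set X} (hU : U ∈ 𝓝 x) : ∃ V ∈ 𝓝 x, V ⊆ U ∧ ∀ g : G, ∀ y ∈ V, g • y ∈ V := by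
  refine ⟨{y | ∀ g : G, g • y ∈ U}, eventually_all.2 fun g => ?_,
    fun y hy => by simpa using hy 1, fun g y hy h => by simpa only [mul_smul] using hy (h * g)⟩
  exact (continuous_const_smul g).continuousAt.eventually_mem (by rwa [hx g])

theorem exists_isMinimal_subMulAction_le [CompactSpace X] {A : SubMulAction G X}
    (hA : IsClosed (A : Set X)) (hne : (A : Set X).Nonempty) :
    ∃ M ≤ A, IsClosed (M : Set X) ∧ (M : Set X).Nonempty ∧ IsMinimal G M := by
  obtain ⟨M, hMA, ⟨hMc, hMne, hMinv⟩, hMmin⟩ := zorn_superset_nonempty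
    {B : Set X | IsClosed B ∧ B.Nonempty ∧ ∀ (g : G), ∀ x ∈ B, g • x ∈ B} (by
      intro c hc hchain hcne
      refine ⟨⋂₀ c, ⟨isClosed_sInter fun B hB => (hc hB).1, ?_, ?_⟩,
        fun B hB => sInter_subset_of_mem hB⟩
      · have : Nonempty c := hcne.to_subtype
        rw [sInter_eq_iInter]
        exact IsCompact.nonempty_iInter_of_directed_nonempty_isCompact_isClosed _
          (hchain.symm.directedOn (r := fun s t : Set X => s ⊇ t)).directed_val
          (fun B => (hc B.2).2.1) (fun B => (hc B.2).1.isCompact) (fun B => (hc B.2).1)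
      · exact fun g x hx B hB => (hc hB).2.2 g x (hx B hB))
    A ⟨hA, hne, fun g _ hx => A.smul_mem g hx⟩
  let M' : SubMulAction G X := ⟨M, fun g {x} hx => hMinv g x hx⟩
  refine ⟨M', hMA, hMc, hMne, ⟨fun p => Subtype.dense_iff.2 ?_⟩⟩
  rw [SubMulAction.val_image_orbit]
  refine hMmin ⟨isClosed_closure, (nonempty_orbit _).closure, fun g x hx => ?_⟩
    (closure_minimal ?_ hMc)
  · exact map_mem_closure (continuous_const_smul g) hx fun y hy => mem_orbit_of_mem_orbit g hy
  · rintro _ ⟨g, rfl⟩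
    exact hMinv g p p.2

theorem neBot_nhdsNE_of_isMinimal [IsMinimal G X] [CompactSpace X] [Infinite X] (x : X) :
    NeBot (𝓝[≠] x) := by
  refine ⟨fun hx => ?_⟩
  obtain ⟨I, hI⟩ := isCompact_univ.exists_finite_cover_smul G
    ((isOpen_singleton_iff_punctured_nhds x).2 hx) (singleton_nonempty x)
  refine infinite_univ ((I.finite_toSet.biUnion fun g _ => ?_).subset hI)
  simp

end TopologicalActions

section MonotoneGerms

variable {X : Type*} [LinearOrder X] [TopologicalSpace X]

/-- `f` is strictly monotone, in either direction, on a neighbourhood of `x`. -/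
def IsStrictMonoOrAntiAt (f : X → X) (x : X) : Prop :=
  ∃ U ∈ 𝓝 x, StrictMonoOn f U ∨ StrictAntiOn f U

variable {G : Type*} [Group G] [MulAction G X] [ContinuousConstSMul G X]

theorem mem_germFixingSubgroup_of_monotoneOn {g : G} (hg : IsOfFinOrder g) {x : X}
    (hx : g • x = x) {U : Set X} (hU : U ∈ 𝓝 x) (hmono : MonotoneOn (g • · : X → X) U) :
    g ∈ germFixingSubgroup G x := by
  have : Finite (Subgroup.zpowers g) := hg.finite_zpowers
  have : ContinuousConstSMul (Subgroup.zpowers g) X := ⟨fun h => continuous_const_smul (h : G)⟩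
  obtain ⟨V, hV, hVU, hVinv⟩ := exists_mem_nhds_subset_forall_smul_mem
    (G := Subgroup.zpowers g) (fun h => Subgroup.zpowers_le.2 (mem_stabilizer_iff.2 hx) h.2) hU
  refine mem_germFixingSubgroup.2 (eventually_of_mem hV fun y hy => ?_)
  refine isFixedPt_of_monotoneOn_of_isPeriodicPt (hmono.mono hVU)
    (hVinv ⟨g, Subgroup.mem_zpowers g⟩) hy hg.orderOf_pos ?_
  rw [IsPeriodicPt, IsFixedPt, smul_iterate_apply, pow_orderOf_eq_one, one_smul]

theorem exists_mem_nhds_antitoneOn_of_notMem_germFixingSubgroup {g : G} (hg : IsOfFinOrder g)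
    {x : X} (hx : g • x = x) (hmono : IsStrictMonoOrAntiAt (g • · : X → X) x)
    (hgerm : g ∉ germFixingSubgroup G x) : ∃ U ∈ 𝓝 x, AntitoneOn (g • · : X → X) U := by
  obtain ⟨U, hU, h | h⟩ := hmono
  · exact absurd (mem_germFixingSubgroup_of_monotoneOn hg hx hU h.monotoneOn) hgerm
  · exact ⟨U, hU, h.antitoneOn⟩

theorem mul_mem_germFixingSubgroup_of_antitoneOn {g h : G} (hgh : IsOfFinOrder (g * h)) {x : X}
    (hg : g • x = x) (hh : h • x = x) {U V : Set X} (hU : U ∈ 𝓝 x) (hV : V ∈ 𝓝 x)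
    (hganti : AntitoneOn (g • · : X → X) U) (hhanti : AntitoneOn (h • · : X → X) V) :
    g * h ∈ germFixingSubgroup G x := by
  have hpre : (h • ·) ⁻¹' U ∈ 𝓝 x :=
    (continuous_const_smul h).continuousAt.preimage_mem_nhds (by rwa [hh])
  refine mem_germFixingSubgroup_of_monotoneOn hgh (by rw [mul_smul, hh, hg])
    (inter_mem hV hpre) fun y hy z hz hyz => ?_
  simpa only [mul_smul] using hganti hz.2 hy.2 (hhanti hy.1 hz.1 hyz)

theorem finiteIndex_germFixingSubgroup {x : X} (hper : ∀ g : G, IsOfFinOrder g)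
    (hmono : ∀ g : G, IsStrictMonoOrAntiAt (g • · : X → X) x) (hx : (orbit G x).Finite) :
    (germFixingSubgroup G x).FiniteIndex := by
  have hstab := finiteIndex_stabilizer_iff.2 hx
  have hrel : ((germFixingSubgroup G x).subgroupOf (stabilizer G x)).FiniteIndex := by
    refine finiteIndex_of_mul_mem_of_notMem fun a ha b hb => ?_
    rw [Subgroup.mem_subgroupOf] at ha hb ⊢
    obtain ⟨U, hU, hUanti⟩ :=
      exists_mem_nhds_antitoneOn_of_notMem_germFixingSubgroup (hper _) a.2 (hmono _) ha
    obtain ⟨V, hV, hVanti⟩ :=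
      exists_mem_nhds_antitoneOn_of_notMem_germFixingSubgroup (hper _) b.2 (hmono _) hb
    exact mul_mem_germFixingSubgroup_of_antitoneOn (hper _) a.2 b.2 hU hV hUanti hVanti
  rw [Subgroup.finiteIndex_iff, ← Subgroup.relIndex_mul_index (germFixingSubgroup_le_stabilizer x)]
  exact mul_ne_zero hrel.index_ne_zero hstab.index_ne_zero

end MonotoneGerms

section Distortion

variable {X Y : Type*} [PseudoMetricSpace X] [PseudoMetricSpace Y]

/-- The distance from `z` to `p.1`, in units of the distance between `p.1` and `p.2`. When the
latter distance is zero the unit is degenerate and the value is the junk `0`. -/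
noncomputable def relDist (p : X × X) (z : X) : ℝ :=
  dist z p.1 / dist p.1 p.2

theorem relDist_nonneg (p : X × X) (z : X) : 0 ≤ relDist p z :=
  div_nonneg dist_nonneg dist_nonneg

/-- Among the points of `s`, the map `f` increases relative distances at scale `d` by a factor of
at most `exp (C * d)`. This is the only trace of the Lipschitz condition on `log |f'|` that the
dynamical argument uses. -/
def HasDistortionOn (f : X → Y) (C : ℝ≥0) (s : Set X) : Prop :=
  ∀ p : X × X, p.1 ∈ s → p.2 ∈ s → ∀ z ∈ s, relDist p z ≤ 1 →
    relDist (f p.1, f p.2) (f z) ≤ Real.exp (C * dist p.1 p.2) * relDist p z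

theorem HasDistortionOn.mono {f : X → Y} {C D : ℝ≥0} {s t : Set X} (h : HasDistortionOn f C t)
    (hCD : C ≤ D) (hst : s ⊆ t) : HasDistortionOn f D s := fun p hp₁ hp₂ z hz hpz =>
  (h p (hst hp₁) (hst hp₂) z (hst hz) hpz).trans <| by
    gcongr
    exact relDist_nonneg p z

theorem HasDistortionOn.relDist_le {f : X → Y} {C : ℝ≥0} {p : X × X} {z : X} {δ : ℝ}
    (h : HasDistortionOn f C (ball p.1 δ)) (hp : dist p.1 p.2 < δ) (hp₀ : 0 < dist p.1 p.2)
    (hz : relDist p z ≤ 1) :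
    relDist (f p.1, f p.2) (f z) ≤ Real.exp (C * dist p.1 p.2) * relDist p z :=
  h p (mem_ball_self (hp₀.trans hp)) (by rwa [mem_ball']) z
    (((div_le_one hp₀).1 hz).trans_lt hp) hz

theorem eventually_forall_hasDistortionOn_ball [CompactSpace X] {f : X → Y}
    (hf : ∀ x, ∃ C, ∃ U ∈ 𝓝 x, HasDistortionOn f C U) :
    ∀ᶠ p : ℝ × ℝ≥0 in 𝓝[>] 0 ×ˢ atTop, ∀ x, HasDistortionOn f p.2 (ball x p.1) := by
  suffices h : ∀ᶠ p : ℝ × ℝ≥0 in 𝓝[>] 0 ×ˢ atTop,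
      ∀ x ∈ univ, HasDistortionOn f p.2 (ball x p.1) by
    simpa only [mem_univ, true_imp_iff] using h
  refine isCompact_univ.induction_on (by simp) (fun s t hst h => ?_) (fun s t hs ht => ?_)
    fun x _ => ?_
  · exact h.mono fun p hp x hx => hp x (hst hx)
  · filter_upwards [hs, ht] with p hps hpt x hx
    exact hx.elim (hps x) (hpt x)
  · obtain ⟨C, U, hU, h⟩ := hf x
    obtain ⟨ε, hε, hεU⟩ := Metric.mem_nhds_iff.1 hU
    have hsmall : ∀ᶠ p : ℝ × ℝ≥0 in 𝓝[>] 0 ×ˢ atTop, p.1 < ε / 2 ∧ C ≤ p.2 :=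
      (eventually_nhdsWithin_of_eventually_nhds (eventually_lt_nhds (half_pos hε))).prod_mk
        (eventually_ge_atTop C)
    refine ⟨ball x (ε / 2), mem_nhdsWithin_of_mem_nhds (ball_mem_nhds x (half_pos hε)), ?_⟩
    filter_upwards [hsmall] with p hp y hy
    refine h.mono hp.2 ((ball_subset_ball' ?_).trans hεU)
    linarith [hp.1, mem_ball.1 hy]

end Distortion

section TameMaps

variable {X Y : Type*} [LinearOrder X] [PseudoMetricSpace X] [LinearOrder Y] [PseudoMetricSpace Y]

/-- `f` is strictly monotone near `x`, in either direction, and has bounded distortion there. -/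
structure IsTameAt (f : X → X) (x : X) : Prop where
  isStrictMonoOrAntiAt : IsStrictMonoOrAntiAt f x
  exists_hasDistortionOn : ∃ C, ∃ U ∈ 𝓝 x, HasDistortionOn f C U

theorem IsTameAt.of_orderEmbedding (e : X ↪o Y) (he : Isometry e) {F : Y → Y} {f : X → X} {x : X}
    (h : IsTameAt F (e x)) (hef : ∀ᶠ y in 𝓝 x, F (e y) = e (f y)) : IsTameAt f x where
  isStrictMonoOrAntiAt := by
    obtain ⟨U, hU, hmono⟩ := h.isStrictMonoOrAntiAt
    refine ⟨_, inter_mem (he.continuous.continuousAt.preimage_mem_nhds hU) hef,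
      hmono.imp (fun hF y hy z hz hyz => ?_) fun hF y hy z hz hyz => ?_⟩
    all_goals
      rw [← e.lt_iff_lt, ← hy.2.out, ← hz.2.out]
      exact hF hy.1 hz.1 (e.lt_iff_lt.2 hyz)
  exists_hasDistortionOn := by
    obtain ⟨C, U, hU, hF⟩ := h.exists_hasDistortionOn
    refine ⟨C, _, inter_mem (he.continuous.continuousAt.preimage_mem_nhds hU) hef,
      fun p hp₁ hp₂ z hz hpz => ?_⟩
    have := hF (e p.1, e p.2) hp₁.1 hp₂.1 (e z) hz.1
    simp only [relDist, hp₁.2.out, hp₂.2.out, hz.2.out, he.dist_eq] at this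
    exact this hpz

theorem exists_forall_strictMonoOn_or_strictAntiOn_ball [CompactSpace X] {f : X → X}
    (hf : ∀ x, IsStrictMonoOrAntiAt f x) :
    ∃ δ > 0, ∀ x, StrictMonoOn f (ball x δ) ∨ StrictAntiOn f (ball x δ) := by
  choose U hU hmono using hf
  obtain ⟨δ, hδ, h⟩ := lebesgue_number_lemma_of_metric isCompact_univ
    (c := fun x => interior (U x)) (fun _ => isOpen_interior)
    fun x _ => mem_iUnion.2 ⟨x, mem_interior_iff_mem_nhds.2 (hU x)⟩
  refine ⟨δ, hδ, fun x => ?_⟩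
  obtain ⟨y, hy⟩ := h x (mem_univ x)
  exact (hmono y).imp (·.mono (hy.trans interior_subset)) (·.mono (hy.trans interior_subset))

end TameMaps

section Gaps

theorem covBy_of_strictMonoOn {α β : Type*} [LinearOrder α] [LinearOrder β] {f : α → β}
    {s : Set α} (hf : StrictMonoOn f s) (hsurj : Surjective f) {a b : α} (ha : a ∈ s) (hb : b ∈ s)
    (hs : f ⁻¹' Ioo (f a) (f b) ⊆ s) (hab : a ⋖ b) : f a ⋖ f b := by
  refine ⟨hf ha hb hab.lt, fun c hac hcb => ?_⟩
  obtain ⟨z, rfl⟩ := hsurj c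
  have hz : z ∈ s := hs ⟨hac, hcb⟩
  exact hab.2 ((hf.lt_iff_lt ha hz).1 hac) ((hf.lt_iff_lt hz hb).1 hcb)

theorem infinite_setOf_covBy {X : Type*} [LinearOrder X] [Infinite X]
    (h : ∀ x y : X, x < y → ∃ a b, a ⋖ b ∧ x ≤ a ∧ b ≤ y) :
    {q : X × X | q.1 ⋖ q.2}.Infinite := by
  intro hfin
  let below (x : X) : 𝒫 {q : X × X | q.1 ⋖ q.2} :=
    ⟨{q | q.1 ⋖ q.2 ∧ q.2 ≤ x}, fun _ hq => hq.1⟩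
  have hbelow : StrictMono below := fun x y hxy => by
    obtain ⟨a, b, hab, hxa, hby⟩ := h x y hxy
    refine Subtype.coe_lt_coe.1 ((ssubset_iff_of_subset ?_).2 ⟨(a, b), ⟨hab, hby⟩, ?_⟩)
    · exact fun q hq => ⟨hq.1, hq.2.trans hxy.le⟩
    · exact fun hq => (hab.lt.trans_le hq.2).not_ge hxa
  have := hfin.powerset.to_subtype
  exact not_finite_iff_infinite.2 ‹Infinite X› (Finite.of_injective below hbelow.injective)

/-- The pairs of consecutive points. Both orientations are included, so that order-reversing maps
act on gaps too. -/
def gaps (X : Type*) [LinearOrder X] : Set (X × X) :=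
  {q | q.1 ⋖ q.2 ∨ q.2 ⋖ q.1}

theorem map_mem_gaps {X : Type*} [LinearOrder X] {f : X → X} {s : Set X}
    (hf : StrictMonoOn f s ∨ StrictAntiOn f s) (hsurj : Surjective f) {q : X × X}
    (h₁ : q.1 ∈ s) (h₂ : q.2 ∈ s) (hs : f ⁻¹' uIcc (f q.1) (f q.2) ⊆ s) (hq : q ∈ gaps X) :
    (f q.1, f q.2) ∈ gaps X := by
  have hs₁ : f ⁻¹' Ioo (f q.1) (f q.2) ⊆ s :=
    (preimage_mono (Ioo_subset_Icc_self.trans Icc_subset_uIcc)).trans hs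
  have hs₂ : f ⁻¹' Ioo (f q.2) (f q.1) ⊆ s :=
    (preimage_mono (Ioo_subset_Icc_self.trans Icc_subset_uIcc')).trans hs
  rcases hf with hf | hf
  · exact hq.imp (covBy_of_strictMonoOn hf hsurj h₁ h₂ hs₁)
      (covBy_of_strictMonoOn hf hsurj h₂ h₁ hs₂)
  · have hanti {a b : X} (ha : a ∈ s) (hb : b ∈ s) (hs : f ⁻¹' Ioo (f b) (f a) ⊆ s)
        (hab : a ⋖ b) : f b ⋖ f a :=
      toDual_covBy_toDual_iff.1 (covBy_of_strictMonoOn hf.dual_right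
        (OrderDual.toDual.surjective.comp hsurj) ha hb (fun z hz => hs ⟨hz.2, hz.1⟩) hab)
    exact hq.symm.imp (hanti h₂ h₁ hs₁) (hanti h₁ h₂ hs₂)

theorem pairwise_disjoint_Ioo_of_covBy {X Y : Type*} [LinearOrder X] [LinearOrder Y] (e : X ↪o Y) :
    Pairwise (Disjoint on fun q : {q : X × X | q.1 ⋖ q.2} => Ioo (e q.1.1) (e q.1.2)) := by
  intro p q hpq
  refine disjoint_left.2 fun t htp htq => hpq ?_
  have h₁ : p.1.1 < q.1.2 := e.lt_iff_lt.1 (htp.1.trans htq.2)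
  have h₂ : q.1.1 < p.1.2 := e.lt_iff_lt.1 (htq.1.trans htp.2)
  exact Subtype.ext (Prod.ext ((q.2.out.le_of_lt h₁).antisymm (p.2.out.le_of_lt h₂))
    ((p.2.out.ge_of_gt h₁).antisymm (q.2.out.ge_of_gt h₂)))

section Compact

variable {X Y : Type*} [LinearOrder X] [TopologicalSpace X] [CompactSpace X]
  [LinearOrder Y] [TopologicalSpace Y] [OrderClosedTopology Y]

theorem exists_covBy_of_notMem_range (e : X ↪o Y) (he : Continuous e) {x y : X} {t : Y}
    (ht : t ∈ Icc (e x) (e y)) (hte : t ∉ range e) : ∃ a b, a ⋖ b ∧ x ≤ a ∧ b ≤ y := by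
  obtain ⟨a, hat, ha⟩ := (isClosed_le he continuous_const).isCompact.exists_isMaxOn
    (⟨x, ht.1⟩ : {z | e z ≤ t}.Nonempty) he.continuousOn
  obtain ⟨b, hbt, hb⟩ := (isClosed_le continuous_const he).isCompact.exists_isMinOn
    (⟨y, ht.2⟩ : {z | t ≤ e z}.Nonempty) he.continuousOn
  have hne (z : X) : e z ≠ t := fun h => hte ⟨z, h⟩
  have hab : a < b := e.lt_iff_lt.1 ((hat.out.lt_of_ne (hne a)).trans_le hbt)
  refine ⟨a, b, ⟨hab, fun z haz hzb => ?_⟩, e.le_iff_le.1 (ha ht.1), e.le_iff_le.1 (hb ht.2)⟩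
  rcases le_total (e z) t with hz | hz
  · exact haz.not_ge (e.le_iff_le.1 (ha hz))
  · exact hzb.not_ge (e.le_iff_le.1 (hb hz))

end Compact

variable {X : Type*} [LinearOrder X] [PseudoMetricSpace X] [CompactSpace X]

theorem summable_dist_covBy (e : X ↪o ℝ) (he : Isometry e) :
    Summable fun q : {q : X × X | q.1 ⋖ q.2} => dist q.1.1 q.1.2 := by
  have hrange := (isCompact_range he.continuous).isBounded.subset_Icc_sInf_sSup
  have hsum : ∑' q : {q : X × X | q.1 ⋖ q.2}, volume (Ioo (e q.1.1) (e q.1.2)) ≠ ⊤ := by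
    refine ne_top_of_le_ne_top (measure_Icc_lt_top (a := sInf (range e)) (b := sSup (range e))).ne
      ((tsum_meas_le_meas_iUnion_of_disjoint _ (fun _ => measurableSet_Ioo)
        (pairwise_disjoint_Ioo_of_covBy e)).trans (measure_mono ?_))
    exact iUnion_subset fun q => Ioo_subset_Icc_self.trans
      (Icc_subset_Icc (hrange (mem_range_self _)).1 (hrange (mem_range_self _)).2)
  refine (ENNReal.summable_toReal hsum).congr fun q => ?_
  have hle : 0 ≤ e q.1.2 - e q.1.1 := sub_nonneg.2 (e.monotone q.2.out.le)
  rw [Real.volume_Ioo, ENNReal.toReal_ofReal hle, ← he.dist_eq, dist_comm, Real.dist_eq,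
    abs_of_nonneg hle]

theorem summable_dist_gaps (e : X ↪o ℝ) (he : Isometry e) :
    Summable fun q : gaps X => dist q.1.1 q.1.2 := by
  let d (q : X × X) : ℝ := dist q.1 q.2
  let up : X × X → ℝ := {q : X × X | q.1 ⋖ q.2}.indicator d
  have hup : Summable up := summable_subtype_iff_indicator.1 (summable_dist_covBy e he)
  have hup₀ (q : X × X) : 0 ≤ up q := indicator_nonneg (fun _ _ => dist_nonneg) q
  have hle : (gaps X).indicator d ≤ fun q => up q + up q.swap := by
    refine indicator_le' (fun q hq => ?_) fun q _ => add_nonneg (hup₀ _) (hup₀ _)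
    rcases hq with hq | hq
    · exact le_add_of_le_of_nonneg (indicator_of_mem (s := {q : X × X | q.1 ⋖ q.2}) hq d).ge
        (hup₀ _)
    · refine le_add_of_nonneg_of_le (hup₀ _) ?_
      exact (dist_comm _ _).trans_le
        (indicator_of_mem (s := {q : X × X | q.1 ⋖ q.2}) (a := q.swap) hq d).ge
  exact summable_subtype_iff_indicator.2 (.of_nonneg_of_le
    (indicator_nonneg fun _ _ => dist_nonneg) hle
      (hup.add ((Equiv.prodComm X X).summable_iff.2 hup)))

theorem finite_setOf_le_dist_gaps (e : X ↪o ℝ) (he : Isometry e) {ε : ℝ} (hε : 0 < ε) :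
    {q ∈ gaps X | ε ≤ dist q.1 q.2}.Finite := by
  have h := (summable_dist_gaps e he).tendsto_cofinite_zero.eventually_lt_const hε
  refine (Finite.image Subtype.val (eventually_cofinite.1 h)).subset ?_
  rintro q ⟨hq, hεq⟩
  exact ⟨⟨q, hq⟩, not_lt.2 hεq, rfl⟩

end Gaps

section GapDynamics

section Topological

variable {G X : Type*} [Group G] [LinearOrder X] [TopologicalSpace X]

theorem exists_mem_lt_and_exists_mem_gt_of_Ioo_subset_range {e : X ↪o ℝ} (he : IsInducing e)
    {a b : ℝ} (hab : Ioo a b ⊆ range e) {w : X} (hw : e w ∈ Ioo a b) {U : Set X} (hU : U ∈ 𝓝 w) :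
    (∃ y ∈ U, y < w) ∧ ∃ z ∈ U, w < z := by
  obtain ⟨W, hW, hWU⟩ := mem_comap.1 (he.nhds_eq_comap w ▸ hU)
  obtain ⟨l, u, hlu, hsub⟩ :=
    mem_nhds_iff_exists_Ioo_subset.1 (inter_mem hW (Ioo_mem_nhds hw.1 hw.2))
  have hmem {t : ℝ} (ht : t ∈ Ioo l u) : ∃ z ∈ U, e z = t := by
    obtain ⟨z, rfl⟩ := hab (hsub ht).2
    exact ⟨z, hWU (hsub ht).1, rfl⟩
  obtain ⟨s, hs⟩ := exists_between hlu.1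
  obtain ⟨t, ht⟩ := exists_between hlu.2
  obtain ⟨y, hyU, rfl⟩ := hmem ⟨hs.1, hs.2.trans hlu.2⟩
  obtain ⟨z, hzU, rfl⟩ := hmem ⟨hlu.1.trans ht.1, ht.2⟩
  exact ⟨⟨y, hyU, e.lt_iff_lt.1 hs.2⟩, ⟨z, hzU, e.lt_iff_lt.1 ht.1⟩⟩

variable [CompactSpace X] [MulAction G X] [IsMinimal G X]

theorem exists_mem_Ioo_notMem_range_of_isMinimal (e : X ↪o ℝ) (he : IsInducing e)
    (hmono : ∀ (g : G) (x : X), IsStrictMonoOrAntiAt (g • · : X → X) x) {x y : X} (hxy : x < y) :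
    ∃ t ∈ Ioo (e x) (e y), t ∉ range e := by
  by_contra! hrange
  -- A translate of the maximum `m` into a full interval has neighbours on both sides, one of which
  -- is carried beyond `m` on the way back.
  obtain ⟨m, -, hm⟩ :=
    isCompact_univ.exists_isMaxOn ⟨x, mem_univ x⟩ he.continuous.continuousOn
  have hmax (z : X) : ¬ m < z := (e.le_iff_le.1 (hm (mem_univ z))).not_gt
  obtain ⟨c, hc⟩ := nonempty_Ioo.2 (e.lt_iff_lt.2 hxy)
  obtain ⟨z, rfl⟩ := hrange c hc
  obtain ⟨g, hg⟩ := (isOpen_Ioo.preimage he.continuous).exists_smul_mem G m ⟨z, hc⟩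
  obtain ⟨U, hU, hgU⟩ := hmono g⁻¹ (g • m)
  have hgm : g • m ∈ U := mem_of_mem_nhds hU
  obtain ⟨⟨u, huU, hu⟩, v, hvU, hv⟩ :=
    exists_mem_lt_and_exists_mem_gt_of_Ioo_subset_range he hrange hg hU
  rcases hgU with h | h
  · exact hmax (g⁻¹ • v) (by simpa using h hgm hvU hv)
  · exact hmax (g⁻¹ • u) (by simpa using h huU hgm hu)

theorem infinite_gaps_of_isMinimal [Infinite X] (e : X ↪o ℝ) (he : IsInducing e)
    (hmono : ∀ (g : G) (x : X), IsStrictMonoOrAntiAt (g • · : X → X) x) : (gaps X).Infinite := by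
  refine (infinite_setOf_covBy fun x y hxy => ?_).mono fun q hq => Or.inl hq
  obtain ⟨t, ht, hte⟩ := exists_mem_Ioo_notMem_range_of_isMinimal e he hmono hxy
  exact exists_covBy_of_notMem_range e he.continuous (Ioo_subset_Icc_self ht) hte

end Topological

section Metric

variable {G X : Type*} [Group G] [LinearOrder X] [PseudoMetricSpace X] [CompactSpace X]
  [MulAction G X] [ContinuousConstSMul G X]

theorem finite_setOf_smul_notMem_gaps (e : X ↪o ℝ) (he : Isometry e) {g : G}
    (hg : ∀ x, IsStrictMonoOrAntiAt (g • · : X → X) x) :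
    {q ∈ gaps X | g • q ∉ gaps X}.Finite := by
  obtain ⟨δ, hδ, hmono⟩ := exists_forall_strictMonoOn_or_strictAntiOn_ball hg
  have huc (h : G) : UniformContinuous (h • · : X → X) :=
    CompactSpace.uniformContinuous_of_continuous (continuous_const_smul h)
  obtain ⟨δ', hδ', hinv⟩ := Metric.uniformContinuous_iff.1 (huc g⁻¹) δ hδ
  obtain ⟨ε, hε, hcont⟩ := Metric.uniformContinuous_iff.1 (huc g) δ' hδ'
  refine (finite_setOf_le_dist_gaps e he (lt_min hε hδ)).subset ?_
  rintro q ⟨hq, hgq⟩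
  refine ⟨hq, not_lt.1 fun hlt => hgq ?_⟩
  obtain ⟨hqε, hqδ⟩ := lt_min_iff.1 hlt
  refine map_mem_gaps (hmono q.1) (MulAction.surjective g) (mem_ball_self hδ) (by rwa [mem_ball'])
    (fun z hz => ?_) hq
  have hz' : dist (g • q.1) (g • z) ≤ dist (g • q.1) (g • q.2) := by
    rw [← he.dist_eq, ← he.dist_eq (g • q.1)]
    exact Real.dist_left_le_of_mem_uIcc (e.monotone.mapsTo_uIcc hz)
  have := hinv (hz'.trans_lt (hcont hqε))
  rwa [inv_smul_smul, inv_smul_smul, ← mem_ball'] at this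

/-- The pairs of consecutive points at distance less than `δ`: the gaps at whose scale the maps
considered have controlled distortion. -/
def smallGaps (X : Type*) [LinearOrder X] [PseudoMetricSpace X] (δ : ℝ) : Set (X × X) :=
  {q ∈ gaps X | dist q.1 q.2 < δ}

theorem finite_setOf_smul_notMem_smallGaps (e : X ↪o ℝ) (he : Isometry e) {T : Set G}
    (hT : T.Finite) (hmono : ∀ t ∈ T, ∀ x : X, IsStrictMonoOrAntiAt (t • · : X → X) x)
    {δ : ℝ} (hδ : 0 < δ) :
    {p ∈ smallGaps X δ | ∃ t ∈ T, t • p ∉ smallGaps X δ}.Finite := by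
  refine (hT.biUnion fun t ht => (finite_setOf_smul_notMem_gaps e he (hmono t ht)).union
    ((finite_setOf_le_dist_gaps e he hδ).preimage (MulAction.injective t).injOn)).subset ?_
  rintro p ⟨hp, t, ht, htp⟩
  refine mem_biUnion ht ?_
  by_cases htp' : t • p ∈ gaps X
  · exact Or.inr ⟨htp', not_lt.1 fun h => htp ⟨htp', h⟩⟩
  · exact Or.inl ⟨hp.1, htp'⟩

end Metric

end GapDynamics

section Contraction

theorem exists_walk_sum_support_le_tsum {V : Type*} {Γ : SimpleGraph V} {f : V → ℝ}
    (hf : Summable f) (hf₀ : ∀ v, 0 ≤ f v) {u v : V} (h : Γ.Reachable u v) :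
    ∃ w : Γ.Walk u v, (w.support.map f).sum ≤ ∑' v, f v := by
  classical
  obtain ⟨w, hw⟩ := h.exists_isPath
  refine ⟨w, ?_⟩
  rw [← List.sum_toFinset f hw.support_nodup]
  exact hf.sum_le_tsum _ fun v _ => hf₀ v

variable {G : Type*} [Group G]

/-- The Schreier graph of the action for the set `T`, restricted to `A`: two points of `A` are
adjacent when an element of `T` moves one to the other. -/
def moveGraph {α : Type*} [MulAction G α] (T : Set G) (A : Set α) : SimpleGraph A :=
  SimpleGraph.fromRel fun p q => ∃ t ∈ T, t • (p : α) = q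

section SchreierGraph

variable {α : Type*} [MulAction G α] {T : Set G} {A : Set α}

theorem moveGraph_reachable_of_smul_eq {t : G} (ht : t ∈ T) {p q : A} (h : t • (p : α) = q) :
    (moveGraph T A).Reachable p q := by
  by_cases hpq : p = q
  · exact hpq ▸ .refl p
  · exact SimpleGraph.Adj.reachable
      ((SimpleGraph.fromRel_adj _ _ _).2 ⟨hpq, Or.inl ⟨t, ht, h⟩⟩)

theorem exists_smul_eq_of_moveGraph_adj (hT : ∀ t ∈ T, t⁻¹ ∈ T) {p q : A}
    (h : (moveGraph T A).Adj p q) : ∃ t ∈ T, t • (p : α) = q := by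
  obtain ⟨-, ⟨t, ht, h⟩ | ⟨t, ht, h⟩⟩ := (SimpleGraph.fromRel_adj _ _ _).1 h
  · exact ⟨t, ht, h⟩
  · exact ⟨t⁻¹, hT t ht, inv_smul_eq_iff.2 h.symm⟩

theorem exists_infinite_setOf_moveGraph_reachable (hT : Submonoid.closure T = ⊤)
    (hA : A.Infinite) (horb : ∀ p ∈ A, (orbit G p).Infinite)
    (hbad : {p ∈ A | ∃ t ∈ T, t • p ∉ A}.Finite) :
    ∃ p : A, {q | (moveGraph T A).Reachable p q}.Infinite := by
  by_contra! hfin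
  have hexit (p : A) : ∃ q : A, (∃ t ∈ T, t • (q : α) ∉ A) ∧ (moveGraph T A).Reachable p q := by
    by_contra! hp
    -- A component that `T` never leaves is invariant, hence contains a whole orbit.
    refine horb p p.2 (((hfin p).image Subtype.val).subset
      (orbit_subset_of_forall_smul_mem hT ?_ (mem_image_of_mem _ (.refl p))))
    rintro t ht _ ⟨q, hq, rfl⟩
    have htq : t • (q : α) ∈ A := by
      by_contra htq
      exact hp q ⟨t, ht, htq⟩ hq
    exact ⟨⟨t • q, htq⟩, hq.trans (moveGraph_reachable_of_smul_eq ht rfl), rfl⟩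
  have := hA.to_subtype
  have hbad' : {q : A | ∃ t ∈ T, t • (q : α) ∉ A}.Finite :=
    (hbad.preimage Subtype.val_injective.injOn).subset fun q hq => ⟨q.2, hq⟩
  refine infinite_univ ((hbad'.biUnion fun q _ => hfin q).subset fun p _ => ?_)
  obtain ⟨q, hq, hpq⟩ := hexit p
  exact mem_biUnion hq hpq.symm

end SchreierGraph

variable {X : Type*} [PseudoMetricSpace X] [MulAction G X] {T : Set G} {A : Set (X × X)}

theorem exists_forall_relDist_smul_le_one (hT : ∀ t ∈ T, t⁻¹ ∈ T) {C : ℝ≥0}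
    (hstep : ∀ t ∈ T, ∀ p ∈ A, ∀ z, relDist p z ≤ 1 →
      relDist (t • p) (t • z) ≤ Real.exp (C * dist p.1 p.2) * relDist p z)
    {p q : A} (w : (moveGraph T A).Walk p q) :
    ∃ g : G, ∀ z, Real.exp (C * (w.support.map fun v => dist v.1.1 v.1.2).sum) *
      relDist p.1 z ≤ 1 → relDist q.1 (g • z) ≤ 1 := by
  have hsum (l : List A) : 0 ≤ (l.map fun v => dist v.1.1 v.1.2).sum :=
    List.sum_nonneg (List.forall_mem_map.2 fun _ _ => dist_nonneg)
  have hone (l : List A) : 1 ≤ Real.exp (C * (l.map fun v => dist v.1.1 v.1.2).sum) :=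
    Real.one_le_exp (mul_nonneg C.2 (hsum l))
  induction w with
  | nil =>
    refine ⟨1, fun z hz => ?_⟩
    rw [one_smul]
    exact (le_mul_of_one_le_left (relDist_nonneg _ z) (hone _)).trans hz
  | @cons p p' q hpp' w ih =>
    obtain ⟨g, hg⟩ := ih
    obtain ⟨t, ht, htp⟩ := exists_smul_eq_of_moveGraph_adj hT hpp'
    refine ⟨g * t, fun z hz => ?_⟩
    rw [mul_smul]
    refine hg (t • z) ?_
    set S := (w.support.map fun v => dist v.1.1 v.1.2).sum
    have hpz : relDist p.1 z ≤ 1 :=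
      (le_mul_of_one_le_left (relDist_nonneg _ z) (hone _)).trans hz
    rw [SimpleGraph.Walk.support_cons, List.map_cons, List.sum_cons] at hz
    calc Real.exp (C * S) * relDist p'.1 (t • z)
        ≤ Real.exp (C * S) * (Real.exp (C * dist p.1.1 p.1.2) * relDist p.1 z) := by
          rw [← htp]
          gcongr
          exact hstep t ht p p.2 z hpz
      _ = Real.exp (C * (dist p.1.1 p.1.2 + S)) * relDist p.1 z := by
          rw [mul_add, Real.exp_add]
          ring
      _ ≤ 1 := hz

theorem exists_forall_exists_mapsTo_closedBall_ball (hT : ∀ t ∈ T, t⁻¹ ∈ T)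
    (hTtop : Submonoid.closure T = ⊤) (hA : A.Infinite) (hpos : ∀ p ∈ A, 0 < dist p.1 p.2)
    (hsum : Summable fun p : A => dist p.1.1 p.1.2) (horb : ∀ p ∈ A, (orbit G p).Infinite)
    (hbad : {p ∈ A | ∃ t ∈ T, t • p ∉ A}.Finite) {C : ℝ≥0}
    (hstep : ∀ t ∈ T, ∀ p ∈ A, ∀ z, relDist p z ≤ 1 →
      relDist (t • p) (t • z) ≤ Real.exp (C * dist p.1 p.2) * relDist p z) :
    ∃ x : X, ∃ r > 0, ∀ ρ > 0, ∃ (g : G) (c : X), MapsTo (g • ·) (closedBall x r) (ball c ρ) := by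
  obtain ⟨p, hp⟩ := exists_infinite_setOf_moveGraph_reachable hTtop hA horb hbad
  set L := ∑' q : A, dist q.1.1 q.1.2
  have hp₀ := hpos p p.2
  refine ⟨p.1.1, Real.exp (-(C * L)) * dist p.1.1 p.1.2, by positivity, fun ρ hρ => ?_⟩
  obtain ⟨q, hpq, hqρ⟩ := ((frequently_cofinite_iff_infinite.2 hp).and_eventually
    (hsum.tendsto_cofinite_zero.eventually_lt_const hρ)).exists
  obtain ⟨w, hw⟩ := exists_walk_sum_support_le_tsum hsum (fun _ => dist_nonneg) hpq
  obtain ⟨g, hg⟩ := exists_forall_relDist_smul_le_one hT hstep w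
  refine ⟨g, q.1.1, fun z hz => ?_⟩
  have hgz : relDist q.1 (g • z) ≤ 1 := hg z <| calc
    _ ≤ Real.exp (C * L) * Real.exp (-(C * L)) := by
      gcongr
      · exact relDist_nonneg _ z
      · exact (div_le_iff₀ hp₀).2 hz
    _ = 1 := by rw [← Real.exp_add, add_neg_cancel, Real.exp_zero]
  exact ((div_le_one (hpos q q.2)).1 hgz).trans_lt hqρ

end Contraction

section MinimalActions

variable {G X : Type*} [Group G] [MulAction G X]

theorem exists_forall_exists_mapsTo_ball_of_isMinimal [PseudoMetricSpace X] [CompactSpace X]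
    [ContinuousConstSMul G X] [IsMinimal G X] {V : Set X} (hV : IsOpen V) (hne : V.Nonempty) :
    ∃ ρ > 0, ∀ c, ∃ h : G, MapsTo (h • ·) (ball c ρ) V := by
  obtain ⟨ρ, hρ, h⟩ := lebesgue_number_lemma_of_metric isCompact_univ
    (fun g : G => hV.preimage (continuous_const_smul g)) (hV.iUnion_preimage_smul G hne).ge
  exact ⟨ρ, hρ, fun c => h c (mem_univ c)⟩

variable [MetricSpace X] [CompactSpace X] [ContinuousConstSMul G X] [IsMinimal G X] [Infinite X]

theorem exists_not_isOfFinOrder_of_isMinimal {x : X} {r : ℝ} (hr : 0 < r)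
    (h : ∀ ρ > 0, ∃ (g : G) (c : X), MapsTo (g • ·) (closedBall x r) (ball c ρ)) :
    ∃ g : G, ¬ IsOfFinOrder g := by
  have := neBot_nhdsNE_of_isMinimal (G := G) x
  obtain ⟨w, hwr, hwx⟩ := nonempty_of_mem (f := 𝓝[≠] x)
    (inter_mem (mem_nhdsWithin_of_mem_nhds (closedBall_mem_nhds x hr)) self_mem_nhdsWithin)
  have hw : 0 < dist w x := dist_pos.2 hwx
  obtain ⟨ρ, hρ, hback⟩ := exists_forall_exists_mapsTo_ball_of_isMinimal (G := G)
    (isOpen_ball (x := x) (ε := dist w x)) ⟨x, mem_ball_self hw⟩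
  obtain ⟨g, c, hg⟩ := h ρ hρ
  obtain ⟨k, hk⟩ := hback c
  refine ⟨k * g, not_isOfFinOrder_of_mapsTo_ssubset (s := closedBall x r) (fun z hz => ?_)
    ((ssubset_iff_of_subset fun z hz => (mem_ball.1 hz).le.trans hwr).2
      ⟨w, hwr, fun h => lt_irrefl _ (mem_ball.1 h)⟩)⟩
  simpa only [mul_smul] using hk (hg hz)

variable [LinearOrder X]

theorem exists_not_isOfFinOrder_of_isTameAt [Group.FG G] (e : X ↪o ℝ) (he : Isometry e)
    (htame : ∀ (g : G) (x : X), IsTameAt (g • · : X → X) x) : ∃ g : G, ¬ IsOfFinOrder g := by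
  have hmono (g : G) (x : X) := (htame g x).isStrictMonoOrAntiAt
  obtain ⟨T, hTfin, hTinv, hTtop⟩ := exists_finite_inv_mem_submonoidClosure_eq_top G
  obtain ⟨⟨δ, C⟩, hδ, hdist⟩ : ∃ p : ℝ × ℝ≥0, 0 < p.1 ∧
      ∀ t ∈ T, ∀ x : X, HasDistortionOn (t • · : X → X) p.2 (ball x p.1) := by
    have hpos : ∀ᶠ p : ℝ × ℝ≥0 in 𝓝[>] 0 ×ˢ atTop, 0 < p.1 :=
      eventually_mem_nhdsWithin.prod_inl _
    exact (hpos.and ((eventually_all_finite hTfin).2 fun t _ =>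
      eventually_forall_hasDistortionOn_ball fun x => (htame t x).exists_hasDistortionOn)).exists
  have hpos : ∀ q ∈ smallGaps X δ, 0 < dist q.1 q.2 := fun q hq =>
    dist_pos.2 (hq.1.elim CovBy.ne CovBy.ne')
  have hinf : (smallGaps X δ).Infinite :=
    ((infinite_gaps_of_isMinimal e he.isEmbedding.isInducing hmono).sdiff
      (finite_setOf_le_dist_gaps e he hδ)).mono fun q hq => ⟨hq.1, not_le.1 fun h => hq.2 ⟨hq.1, h⟩⟩
  have hsum : Summable fun q : smallGaps X δ => dist q.1.1 q.1.2 :=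
    (summable_dist_gaps e he).comp_injective (inclusion_injective (sep_subset (gaps X) _))
  have horb (q : X × X) : (orbit G q).Infinite := by
    refine Infinite.of_image Prod.fst ((infinite_orbit_of_isMinimal (G := G) q.1).mono ?_)
    rintro _ ⟨g, rfl⟩
    exact ⟨g • q, mem_orbit q g, rfl⟩
  obtain ⟨x, r, hr, h⟩ := exists_forall_exists_mapsTo_closedBall_ball hTinv hTtop hinf hpos hsum
    (fun q _ => horb q) (finite_setOf_smul_notMem_smallGaps e he hTfin (fun t _ => hmono t) hδ)
    fun t ht q hq _ hz => (hdist t ht q.1).relDist_le hq.2 (hpos q hq) hz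
  exact exists_not_isOfFinOrder_of_isMinimal hr h

end MinimalActions

section OrbitFiniteness

variable {G X : Type*} [Group G] [Group.FG G] [LinearOrder X] [MetricSpace X] [CompactSpace X]
  [MulAction G X] [ContinuousConstSMul G X]

theorem orbit_finite_of_isTameAt (e : X ↪o ℝ) (he : Isometry e) (hper : ∀ g : G, IsOfFinOrder g)
    (htame : ∀ (g : G) (x : X), IsTameAt (g • · : X → X) x) (x : X) : (orbit G x).Finite := by
  by_contra hx
  have hopen : IsOpen {y : X | (orbit G y).Finite} := isOpen_setOf_orbit_finite fun y =>
    finiteIndex_germFixingSubgroup hper fun g => (htame g y).isStrictMonoOrAntiAt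
  let A : SubMulAction G X :=
    ⟨{y | (orbit G y).Infinite}, fun g {y} hy => by rwa [mem_ofPred_eq, orbit_smul]⟩
  obtain ⟨M, hMA, hMclosed, hMne, hMmin⟩ :=
    exists_isMinimal_subMulAction_le (A := A) hopen.isClosed_compl ⟨x, hx⟩
  have : CompactSpace M := isCompact_iff_compactSpace.1 hMclosed.isCompact
  have : ContinuousConstSMul G M :=
    ⟨fun g => ((continuous_const_smul g).comp continuous_subtype_val).subtype_mk _⟩
  obtain ⟨y, hy⟩ := hMne
  have : Infinite M :=
    ((hMA hy : (orbit G y).Infinite).mono (range_subset_iff.2 fun g => M.smul_mem g hy)).to_subtype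
  obtain ⟨g, hg⟩ := exists_not_isOfFinOrder_of_isTameAt (G := G) (X := M)
    ((OrderEmbedding.subtype (· ∈ M)).trans e) (he.comp isometry_subtype_coe) fun g z =>
      (htame g z).of_orderEmbedding (OrderEmbedding.subtype (· ∈ M)) isometry_subtype_coe
        (Eventually.of_forall fun _ => rfl)
  exact hg (hper g)

theorem finite_of_isTameAt [FaithfulSMul G X] (e : X ↪o ℝ) (he : Isometry e)
    (hper : ∀ g : G, IsOfFinOrder g) (htame : ∀ (g : G) (x : X), IsTameAt (g • · : X → X) x) :
    Finite G :=
  finite_of_forall_finiteIndex_germFixingSubgroup fun x => finiteIndex_germFixingSubgroup hper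
    (fun g => (htame g x).isStrictMonoOrAntiAt) (orbit_finite_of_isTameAt e he hper htame x)

end OrbitFiniteness

section MeanValue

variable {s : Set ℝ} {F F' : ℝ → ℝ}

theorem exists_mem_uIcc_dist_eq_mul_dist (hs : s.OrdConnected)
    (hF : ∀ y ∈ s, HasDerivAt F (F' y) y) {u v : ℝ} (hu : u ∈ s) (hv : v ∈ s) :
    ∃ c ∈ uIcc u v, dist (F u) (F v) = |F' c| * dist u v := by
  wlog huv : u ≤ v generalizing u v
  · obtain ⟨c, hc, h⟩ := this hv hu (le_of_not_ge huv)
    exact ⟨c, uIcc_comm u v ▸ hc, by rw [dist_comm, h, dist_comm]⟩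
  rcases huv.eq_or_lt with rfl | huv
  · exact ⟨u, left_mem_uIcc, by simp⟩
  have hsub : Icc u v ⊆ s := hs.out hu hv
  obtain ⟨c, hc, h⟩ := exists_hasDerivAt_eq_slope F F' huv
    (fun y hy => (hF y (hsub hy)).continuousAt.continuousWithinAt)
    (fun y hy => hF y (hsub (Ioo_subset_Icc_self hy)))
  refine ⟨c, Icc_subset_uIcc (Ioo_subset_Icc_self hc), ?_⟩
  rw [h, Real.dist_eq, Real.dist_eq, abs_sub_comm, abs_sub_comm u, ← abs_mul,
    div_mul_cancel₀ _ (sub_pos.2 huv).ne']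

theorem abs_le_exp_mul_abs_of_lipschitzOnWith_log {C : ℝ≥0}
    (hlip : LipschitzOnWith C (fun y => Real.log |F' y|) s) {c d : ℝ} (hc : c ∈ s) (hd : d ∈ s)
    (hc₀ : F' c ≠ 0) (hd₀ : F' d ≠ 0) : |F' c| ≤ Real.exp (C * dist c d) * |F' d| := by
  have h := (le_abs_self _).trans (hlip.dist_le_mul c hc d hd)
  rw [← Real.exp_log (abs_pos.2 hc₀), ← Real.exp_log (abs_pos.2 hd₀), ← Real.exp_add]
  exact Real.exp_le_exp.2 (sub_le_iff_le_add.1 h)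

theorem hasDistortionOn_of_lipschitzOnWith_log_abs_deriv (hs : s.OrdConnected)
    (hF : ∀ y ∈ s, HasDerivAt F (F' y) y) (hF' : ∀ y ∈ s, F' y ≠ 0) {C : ℝ≥0}
    (hlip : LipschitzOnWith C (fun y => Real.log |F' y|) s) : HasDistortionOn F (2 * C) s := by
  rintro ⟨u, v⟩ hu hv z hz hzuv
  obtain ⟨c, hc, hcF⟩ := exists_mem_uIcc_dist_eq_mul_dist hs hF hu hv
  obtain ⟨d, hd, hdF⟩ := exists_mem_uIcc_dist_eq_mul_dist hs hF hu hz
  rw [dist_comm, dist_comm u] at hdF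
  have hcs : c ∈ s := hs.uIcc_subset hu hv hc
  have hds : d ∈ s := hs.uIcc_subset hu hz hd
  rcases (dist_nonneg : 0 ≤ dist u v).eq_or_lt with h₀ | h₀
  · simp [relDist, hcF, ← h₀]
  have hdc : dist d c ≤ 2 * dist u v := by
    have hzu : dist u z ≤ dist u v := by rw [dist_comm]; exact (div_le_one h₀).1 hzuv
    linarith [Real.dist_left_le_of_mem_uIcc hc, Real.dist_left_le_of_mem_uIcc hd,
      dist_triangle_left d c u]
  have hratio : |F' d| / |F' c| ≤ Real.exp ((2 * C : ℝ≥0) * dist u v) := by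
    refine (div_le_iff₀ (abs_pos.2 (hF' c hcs))).2
      ((abs_le_exp_mul_abs_of_lipschitzOnWith_log hlip hds hcs (hF' d hds) (hF' c hcs)).trans ?_)
    rw [NNReal.coe_mul, NNReal.coe_ofNat, mul_comm (2 : ℝ), mul_assoc]
    gcongr
  calc relDist (F u, F v) (F z)
      = |F' d| / |F' c| * relDist (u, v) z := by
        rw [relDist, relDist, hcF, hdF, mul_div_mul_comm]
    _ ≤ Real.exp ((2 * C : ℝ≥0) * dist u v) * relDist (u, v) z := by
        gcongr
        exact relDist_nonneg _ z

end MeanValue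

theorem IsD1Lip.isTameAt {K : Set ℝ} {f : Equiv.Perm K} (hf : IsD1Lip K f) (x : K) :
    IsTameAt f x := by
  obtain ⟨a, b, hx, F, F', hF, -, hinj, ⟨C, hlip⟩, heq⟩ := hf x
  have hmono : StrictMonoOn F (Ioo a b) ∨ StrictAntiOn F (Ioo a b) :=
    ContinuousOn.strictMonoOn_of_injOn_Ioo (hx.1.trans hx.2)
      (fun y hy => (hF y hy).1.continuousAt.continuousWithinAt) hinj
  have hdist : HasDistortionOn F (2 * C) (Ioo a b) :=
    hasDistortionOn_of_lipschitzOnWith_log_abs_deriv ordConnected_Ioo (fun y hy => (hF y hy).1)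
      (fun y hy => (hF y hy).2) hlip
  have hnhds : Ioo a b ∈ 𝓝 (x : ℝ) := Ioo_mem_nhds hx.1 hx.2
  have hFx : IsTameAt F x := ⟨⟨_, hnhds, hmono⟩, _, _, hnhds, hdist⟩
  refine hFx.of_orderEmbedding (OrderEmbedding.subtype (· ∈ K)) isometry_subtype_coe ?_
  filter_upwards [continuous_subtype_val.continuousAt.eventually_mem hnhds] with y hy
  exact (heq y hy y.2).trans (dif_pos y.2)

theorem burnside_property_general {K : Set ℝ} (hK : IsCompact K) (G : Subgroup (Equiv.Perm K))
    (hdiff : ∀ g ∈ G, MemDiffLip K g) (hFG : G.FG) (hper : ∀ g ∈ G, IsOfFinOrder g) :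
    (G : Set (Equiv.Perm K)).Finite := by
  have : CompactSpace K := isCompact_iff_compactSpace.1 hK
  have : ContinuousConstSMul G K := ⟨fun g => (hdiff g g.2).1⟩
  have : Group.FG G := (Group.fg_iff_subgroup_fg G).2 hFG
  exact Set.finite_coe_iff.1 <| finite_of_isTameAt (X := K) (OrderEmbedding.subtype (· ∈ K))
    isometry_subtype_coe (fun g => Submonoid.isOfFinOrder_coe.1 (hper g g.2))
    fun g x => (hdiff g g.2).2.2.isTameAt x

/-- Every finitely generated periodic subgroup of
`diff^{1+Lip}(K)` of a Cantor set `K ⊆ ℝ` is finite. -/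
theorem burnside_property (K : Set ℝ) (hK : IsCantorInR K)
    (G : Subgroup (Equiv.Perm K))
    (hdiff : ∀ g ∈ G, MemDiffLip K g)
    (hFG : G.FG)
    (hper : ∀ g ∈ G, IsOfFinOrder g) :
    (G : Set (Equiv.Perm K)).Finite :=
  burnside_property_general hK.2.1 G hdiff hFG hper
end

section
/- Let K be a Cantor set in ℝ, let n ≥ 3 and let Γ be a finite-index subgroup of SL_n(ℤ). Then every group homomorphism from Γ to diff^{1+Lip}(K) has finite image. -/
/-!
If `a b = c b a` in `diff^{1+Lip}(K)` with `c` commuting with `a` and `b`, then `c` has finite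
order. Indeed, every orbit closure of `⟨a, b⟩` contains a minimal set `M`. If `M` were infinite,
then bounded distortion along the orbit of a gap of `M`, as in Sacksteder's theorem, would produce
elements contracting a fixed neighbourhood to a point, and two of these playing ping-pong would
violate the law `(AB)(BA) = (BA)(AB)` of groups of nilpotency class two. So `M` is finite, powers
of `a` and `b` fix a point of `M`, and an argument in the spirit of Kopell's lemma shows that a
power of `c` is the identity near that point; `c` being central, this holds near every point of
`K`.

For `n ≥ 3` an elementary matrix is the commutator in such a triple of elementary matrices, so the
kernel of a homomorphism from `Γ` contains a power of each elementary matrix and of its conjugates.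
A normal subgroup of `SL_n(ℤ)` containing the `q`-th powers of all elementary matrices has finite
index.
-/

open Set

section HeisenbergTriple

/-- `a`, `b` and `c = ⁅a, b⁆` satisfy the relations of the discrete Heisenberg group. The relations
are free of inverses so that they make sense for self-maps of a space. -/
structure HeisenbergTriple {G : Type*} [Monoid G] (a b c : G) : Prop where
  mul_eq : a * b = c * (b * a)
  commute_left : Commute c a
  commute_right : Commute c b

namespace HeisenbergTriple

section Monoid

variable {G : Type*} [Monoid G] {a b c : G}

theorem map {H F : Type*} [Monoid H] [FunLike F G H] [MonoidHomClass F G H]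
    (h : HeisenbergTriple a b c) (f : F) : HeisenbergTriple (f a) (f b) (f c) :=
  ⟨by simpa only [map_mul] using congrArg f h.mul_eq, h.commute_left.map f, h.commute_right.map f⟩

theorem of_map {H F : Type*} [Monoid H] [FunLike F G H] [MonoidHomClass F G H] {f : F}
    (hf : Function.Injective f) (h : HeisenbergTriple (f a) (f b) (f c)) :
    HeisenbergTriple a b c :=
  ⟨hf (by simpa only [map_mul] using h.mul_eq), h.commute_left.of_map hf,
    h.commute_right.of_map hf⟩

theorem pow_left (h : HeisenbergTriple a b c) (m : ℕ) : HeisenbergTriple (a ^ m) b (c ^ m) := by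
  refine ⟨?_, (h.commute_left.pow_pow m m), h.commute_right.pow_left m⟩
  induction m with
  | zero => simp
  | succ m ih =>
    rw [pow_succ', mul_assoc, ih, ← mul_assoc, (h.commute_left.pow_left m).symm.eq, mul_assoc,
      ← mul_assoc a, h.mul_eq]
    simp only [pow_succ, mul_assoc]

theorem pow_right (h : HeisenbergTriple a b c) (n : ℕ) : HeisenbergTriple a (b ^ n) (c ^ n) := by
  refine ⟨?_, h.commute_left.pow_left n, h.commute_right.pow_pow n n⟩
  induction n with
  | zero => simp
  | succ n ih =>
    rw [pow_succ, ← mul_assoc, ih, mul_assoc, mul_assoc, h.mul_eq, ← mul_assoc (b ^ n),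
      (h.commute_right.pow_right n).symm.eq, pow_succ]
    simp only [mul_assoc]

theorem pow_pow (h : HeisenbergTriple a b c) (m n : ℕ) :
    HeisenbergTriple (a ^ m) (b ^ n) (c ^ (m * n)) := by
  simpa only [pow_mul] using (h.pow_left m).pow_right n

end Monoid

section Group

variable {G : Type*} [Group G] {a b c : G}

open scoped commutatorElement in
theorem eq_commutatorElement (h : HeisenbergTriple a b c) : c = ⁅a, b⁆ := by
  rw [commutatorElement_def, eq_mul_inv_iff_mul_eq, eq_mul_inv_iff_mul_eq, h.mul_eq, mul_assoc]

theorem swap (h : HeisenbergTriple a b c) : HeisenbergTriple b a c⁻¹ :=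
  ⟨by rw [h.mul_eq, inv_mul_cancel_left], h.commute_right.inv_left, h.commute_left.inv_left⟩

theorem inv_left (h : HeisenbergTriple a b c) : HeisenbergTriple a⁻¹ b c⁻¹ := by
  refine ⟨?_, h.commute_left.inv_inv, h.commute_right.inv_left⟩
  rw [inv_mul_eq_iff_eq_mul, ← mul_assoc, h.commute_left.inv_left.symm.eq, mul_assoc,
    ← mul_assoc a, h.mul_eq]
  group

theorem inv_right (h : HeisenbergTriple a b c) : HeisenbergTriple a b⁻¹ c⁻¹ := by
  simpa only [inv_inv] using h.swap.inv_left.swap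

theorem of_sign_change (h : HeisenbergTriple a b c) {a' b' c' : G} (ha : a' = a ∨ a' = a⁻¹)
    (hb : b' = b ∨ b' = b⁻¹) (hc : c' = c ∨ c' = c⁻¹) :
    HeisenbergTriple a' b' c' ∨ HeisenbergTriple b' a' c' := by
  have hinv := h.inv_left
  rcases ha with rfl | rfl <;> rcases hb with rfl | rfl <;> rcases hc with rfl | rfl
  · exact .inl h
  · exact .inr h.swap
  · exact .inr (by simpa using h.inv_right.swap)
  · exact .inl h.inv_right
  · exact .inr (by simpa using hinv.swap)
  · exact .inl hinv
  · exact .inl (by simpa using hinv.inv_right)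
  · exact .inr (by simpa using hinv.inv_right.swap)

theorem commute_of_mem_closure (h : HeisenbergTriple a b c) {x : G}
    (hx : x ∈ Subgroup.closure {a, b}) : Commute c x := by
  suffices Subgroup.closure {a, b} ≤ Subgroup.centralizer {c} from
    (Subgroup.mem_centralizer_singleton_iff.1 (this hx)).symm
  rw [Subgroup.closure_le]
  rintro y (rfl | rfl)
  exacts [Subgroup.mem_centralizer_singleton_iff.2 h.commute_left.symm.eq,
    Subgroup.mem_centralizer_singleton_iff.2 h.commute_right.symm.eq]

theorem exists_zpow_mul_of_mem_closure (h : HeisenbergTriple a b c) {x : G} {m n : ℤ}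
    (ha : x * a = c ^ m * (a * x)) (hb : x * b = c ^ n * (b * x)) {y : G}
    (hy : y ∈ Subgroup.closure {a, b}) : ∃ k : ℤ, x * y = c ^ k * (y * x) := by
  have hcomm {z : G} (hz : z ∈ Subgroup.closure {a, b}) (k : ℤ) : Commute (c ^ k) z :=
    (h.commute_of_mem_closure hz).zpow_left k
  induction hy using Subgroup.closure_induction with
  | mem y hy =>
    obtain rfl | rfl := hy
    exacts [⟨m, ha⟩, ⟨n, hb⟩]
  | one => exact ⟨0, by simp⟩
  | mul y z hy _ ihy ihz =>
    obtain ⟨k, hk⟩ := ihy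
    obtain ⟨l, hl⟩ := ihz
    refine ⟨k + l, ?_⟩
    calc x * (y * z) = c ^ k * (y * (x * z)) := by rw [← mul_assoc, hk]; simp only [mul_assoc]
      _ = c ^ k * (c ^ l * (y * (z * x))) := by rw [hl, (hcomm hy l).symm.left_comm]
      _ = c ^ (k + l) * (y * z * x) := by rw [zpow_add]; simp only [mul_assoc]
  | inv y hy ihy =>
    obtain ⟨k, hk⟩ := ihy
    have hyx : y⁻¹ * x = c ^ k * (x * y⁻¹) := by
      rw [inv_mul_eq_iff_eq_mul, ← (hcomm hy k).left_comm, ← mul_assoc y, ← mul_assoc, ← hk,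
        mul_inv_cancel_right]
    exact ⟨-k, by rw [hyx, zpow_neg, inv_mul_cancel_left]⟩

theorem exists_zpow_mul (h : HeisenbergTriple a b c) {x y : G}
    (hx : x ∈ Subgroup.closure {a, b}) (hy : y ∈ Subgroup.closure {a, b}) :
    ∃ n : ℤ, x * y = c ^ n * (y * x) := by
  have symm {u v : G} : (∃ n : ℤ, u * v = c ^ n * (v * u)) → ∃ n : ℤ, v * u = c ^ n * (u * v) := by
    rintro ⟨n, hn⟩
    exact ⟨-n, by rw [hn, ← mul_assoc, ← zpow_add, neg_add_cancel, zpow_zero, one_mul]⟩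
  obtain ⟨m, hm⟩ := symm <| h.exists_zpow_mul_of_mem_closure (x := a) (m := 0) (n := 1) (by simp)
    (by rw [zpow_one, h.mul_eq]) hy
  obtain ⟨n, hn⟩ := symm <| h.exists_zpow_mul_of_mem_closure (x := b) (m := -1) (n := 0)
    (by rw [zpow_neg_one, h.swap.mul_eq]) (by simp) hy
  exact symm (h.exists_zpow_mul_of_mem_closure hm hn hx)

theorem mul_mul_mul_comm (h : HeisenbergTriple a b c) {x y : G}
    (hx : x ∈ Subgroup.closure {a, b}) (hy : y ∈ Subgroup.closure {a, b}) :
    x * y * (y * x) = y * x * (x * y) := by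
  obtain ⟨n, hn⟩ := h.exists_zpow_mul hx hy
  have hc : Commute (c ^ n) (y * x) := (h.commute_of_mem_closure (mul_mem hy hx)).zpow_left n
  rw [hn, mul_assoc, hc.left_comm]

end Group

end HeisenbergTriple

end HeisenbergTriple

section ElementaryGroup

open Matrix Matrix.SpecialLinearGroup

variable {ι R : Type*} [Fintype ι] [DecidableEq ι]

section CommRing

variable [CommRing R]

theorem transvection_smul_apply {i j : ι} (h : i ≠ j) (c : R) (v : ι → R) (l : ι) :
    (transvection h c • v) l = v l + if l = i then c * v j else 0 := by
  rw [Matrix.SpecialLinearGroup.smul_def, smul_eq_mulVec, transvection_coe, add_mulVec, one_mulVec,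
    single_mulVec]
  simp [Function.update_apply]

theorem transvection_smul_single_of_ne {i j l : ι} (h : i ≠ j) (hl : l ≠ j) (c : R) :
    transvection h c • (Pi.single l 1 : ι → R) = Pi.single l 1 := by
  ext x
  simp [transvection_smul_apply, Pi.single_apply, hl.symm]

theorem transvection_zpow {i j : ι} (h : i ≠ j) (c : R) (n : ℤ) :
    transvection h c ^ n = transvection h (n * c) := by
  induction n with
  | zero => simp
  | succ n ih =>
    rw [_root_.zpow_add_one, ih, ← transvection_add, Int.cast_add, Int.cast_one, add_one_mul]
  | pred n ih =>
    rw [_root_.zpow_sub_one, ih, transvection_inv, ← transvection_add, Int.cast_sub, Int.cast_one,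
      sub_one_mul, sub_eq_add_neg]

theorem transvection_commute {i j k l : ι} (hij : i ≠ j) (hkl : k ≠ l) (hjk : j ≠ k)
    (hli : l ≠ i) (c d : R) : Commute (transvection hij c) (transvection hkl d) := by
  apply Subtype.ext
  simp only [Matrix.SpecialLinearGroup.coe_mul, transvection_coe, add_mul, mul_add, one_mul,
    mul_one, single_mul_single_of_ne _ _ _ _ hjk, single_mul_single_of_ne _ _ _ _ hli]
  abel

theorem smul_single_one_apply (A : Matrix.SpecialLinearGroup ι R) (i j : ι) :
    (A • (Pi.single j 1 : ι → R)) i = A i j := by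
  rw [Matrix.SpecialLinearGroup.smul_def, smul_eq_mulVec, mulVec_single_one, col_apply]

theorem eq_one_of_smul_single {A : Matrix.SpecialLinearGroup ι R}
    (h : ∀ j, A • (Pi.single j 1 : ι → R) = Pi.single j 1) : A = 1 := by
  ext i j
  rw [← smul_single_one_apply, h, ← smul_single_one_apply, one_smul]

theorem smul_eq_self_of_smul_single {A : Matrix.SpecialLinearGroup ι R} {s : Set ι}
    (h : ∀ j ∉ s, A • (Pi.single j 1 : ι → R) = Pi.single j 1) {v : ι → R}
    (hv : ∀ j ∈ s, v j = 0) : A • v = v := by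
  rw [pi_eq_sum_univ v, Finset.smul_sum]
  refine Finset.sum_congr rfl fun j _ => ?_
  by_cases hj : j ∈ s
  · simp [hv j hj]
  · have : (fun l => if j = l then (1 : R) else 0) = Pi.single j 1 := by
      ext l
      simp [Pi.single_apply, eq_comm]
    rw [smul_comm, this, h j hj]

theorem apply_self_eq_one_of_smul_single {A : Matrix.SpecialLinearGroup ι R} {k : ι}
    (h : ∀ j ≠ k, A • (Pi.single j 1 : ι → R) = Pi.single j 1) : A k k = 1 := by
  have hA : (A : Matrix ι ι R) = (1 : Matrix ι ι R).updateCol k fun i => A i k := by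
    ext i j
    obtain rfl | hj := eq_or_ne j k
    · simp
    · rw [updateCol_ne hj, ← smul_single_one_apply, h j hj, one_apply, Pi.single_apply]
  have hdet := A.det_coe
  rw [hA, ← cramer_apply] at hdet
  simpa using hdet

theorem isUnit_apply_self_of_smul_single {A : Matrix.SpecialLinearGroup ι R} {s : Set ι} {k : ι}
    (h : ∀ j ∉ insert k s, A • (Pi.single j 1 : ι → R) = Pi.single j 1)
    (h0 : ∀ i ∈ s, A i k = 0) : IsUnit (A k k) := by
  set r : ι → R := A • (Pi.single k 1 : ι → R) - A k k • Pi.single k 1 with hr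
  have hrk : r k = 0 := by simp [hr, smul_single_one_apply]
  have hfix : A • r = r := smul_eq_self_of_smul_single h fun j hj => by
    obtain rfl | hjk := eq_or_ne j k
    · exact hrk
    · simp [hr, hjk, smul_single_one_apply, h0 j (hj.resolve_left hjk)]
  have hA : A • ((Pi.single k 1 : ι → R) - r) = A k k • (Pi.single k 1 : ι → R) := by
    rw [smul_sub, hfix, hr, sub_sub_cancel]
  rw [← eq_inv_smul_iff, smul_comm] at hA
  refine IsUnit.of_mul_eq_one _ (?_ : A k k * (A⁻¹ • (Pi.single k 1 : ι → R)) k = 1)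
  simpa [hrk] using (congrFun hA k).symm

theorem isUnit_of_dvd_smul_single {A : Matrix.SpecialLinearGroup ι R} {z : ι} {m : R}
    (h : ∀ i, m ∣ (A • (Pi.single z 1 : ι → R)) i) : IsUnit m := by
  choose c hc using h
  have hA : A • (Pi.single z 1 : ι → R) = m • c := funext hc
  have hz : (Pi.single z 1 : ι → R) = m • (A⁻¹ • c) := by
    rw [← smul_comm, ← hA, inv_smul_smul]
  exact IsUnit.of_mul_eq_one _ (by simpa using (congrFun hz z).symm)

/-- The subgroup of `SL ι R` generated by the transvections with both indices in `s`. -/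
def elementaryGroup (R : Type*) [CommRing R] (s : Set ι) :
    Subgroup (Matrix.SpecialLinearGroup ι R) :=
  Subgroup.closure {g | ∃ i ∈ s, ∃ j ∈ s, ∃ h : i ≠ j, ∃ c : R, g = transvection h c}

theorem transvection_mem_elementaryGroup {s : Set ι} {i j : ι} (hi : i ∈ s) (hj : j ∈ s)
    (h : i ≠ j) (c : R) : transvection h c ∈ elementaryGroup R s :=
  Subgroup.subset_closure ⟨i, hi, j, hj, h, c, rfl⟩

theorem elementaryGroup_mono {s t : Set ι} (hst : s ⊆ t) :
    elementaryGroup R s ≤ elementaryGroup R t :=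
  Subgroup.closure_mono fun _ ⟨i, hi, j, hj, h⟩ => ⟨i, hst hi, j, hst hj, h⟩

theorem smul_eq_self_of_mem_elementaryGroup {s : Set ι} {g : Matrix.SpecialLinearGroup ι R}
    (hg : g ∈ elementaryGroup R s) {v : ι → R} (hv : ∀ j ∈ s, v j = 0) : g • v = v := by
  suffices elementaryGroup R s ≤ MulAction.stabilizer (Matrix.SpecialLinearGroup ι R) v from this hg
  refine (Subgroup.closure_le _).2 ?_
  rintro _ ⟨i, _, j, hj, h, c, rfl⟩
  ext l
  simp [transvection_smul_apply, hv j hj]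

theorem smul_single_of_mem_elementaryGroup {s : Set ι} {g : Matrix.SpecialLinearGroup ι R}
    (hg : g ∈ elementaryGroup R s) {l : ι} (hl : l ∉ s) :
    g • (Pi.single l 1 : ι → R) = Pi.single l 1 :=
  smul_eq_self_of_mem_elementaryGroup hg fun _ hj =>
    Pi.single_eq_of_ne (ne_of_mem_of_not_mem hj hl) _

theorem smul_apply_of_mem_elementaryGroup {s : Set ι} {g : Matrix.SpecialLinearGroup ι R}
    (hg : g ∈ elementaryGroup R s) {l : ι} (hl : l ∉ s) (v : ι → R) : (g • v) l = v l := by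
  induction hg using Subgroup.closure_induction generalizing v with
  | mem x hx =>
    obtain ⟨i, hi, j, _, h, c, rfl⟩ := hx
    have : l ≠ i := fun e => hl (e ▸ hi)
    simp [transvection_smul_apply, this]
  | one => simp
  | mul x y _ _ hx hy => rw [mul_smul, hx, hy]
  | inv x _ hx => rw [← hx (x⁻¹ • v), smul_inv_smul]

/-- `1 + M` is the product of the commuting transvections given by the entries of `M`. -/
theorem exists_mem_coe_eq_one_add {H : Subgroup (Matrix.SpecialLinearGroup ι R)} {M : Matrix ι ι R}
    {s : Set ι} (hM : ∀ i j, M i j ≠ 0 → i ∈ s ∧ j ∉ s)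
    (hH : ∀ i j (h : i ≠ j), transvection h (M i j) ∈ H) :
    ∃ X ∈ H, (X : Matrix ι ι R) = 1 + M := by
  suffices ∀ t : Finset (ι × ι),
      ∃ X ∈ H, (X : Matrix ι ι R) = 1 + ∑ p ∈ t, single p.1 p.2 (M p.1 p.2) by
    simpa only [← Finset.univ_product_univ, Finset.sum_product,
      ← matrix_eq_sum_single M] using this Finset.univ
  intro t
  induction t using Finset.induction_on with
  | empty => exact ⟨1, one_mem _, by simp⟩
  | insert p t hp ih =>
    obtain ⟨X, hX, hXt⟩ := ih
    by_cases h0 : M p.1 p.2 = 0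
    · exact ⟨X, hX, by simp [Finset.sum_insert hp, h0, hXt]⟩
    have hp12 : p.1 ≠ p.2 := ne_of_mem_of_not_mem (hM _ _ h0).1 (hM _ _ h0).2
    refine ⟨transvection hp12 (M p.1 p.2) * X, mul_mem (hH _ _ _) hX, ?_⟩
    have hzero : single p.1 p.2 (M p.1 p.2) * ∑ r ∈ t, single r.1 r.2 (M r.1 r.2) =
        (0 : Matrix ι ι R) := by
      rw [Finset.mul_sum]
      refine Finset.sum_eq_zero fun r _ => ?_
      by_cases hr : M r.1 r.2 = 0
      · simp [hr]
      · exact single_mul_single_of_ne _ _ _ _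
          (ne_of_mem_of_not_mem (hM _ _ hr).1 (hM _ _ h0).2).symm _
    rw [Matrix.SpecialLinearGroup.coe_mul, transvection_coe, hXt, Finset.sum_insert hp, add_mul,
      one_mul, mul_add, hzero, mul_one, add_zero]
    abel

theorem exists_elementary_smul_eq_single {k : ι} {v : ι → R} (hv : v k = 1) :
    ∃ g ∈ elementaryGroup R (univ : Set ι), g • v = Pi.single k 1 ∧
      ∀ j ≠ k, g • (Pi.single j 1 : ι → R) = Pi.single j 1 := by
  obtain ⟨X, hX, hXM⟩ := exists_mem_coe_eq_one_add (H := elementaryGroup R (univ : Set ι))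
    (M := vecMulVec (v - Pi.single k 1) (Pi.single k 1)) (s := {k}ᶜ)
    (fun i j => by
      by_cases hi : i = k <;> by_cases hj : j = k <;> simp [vecMulVec_apply, hi, hj, hv])
    fun i j h => transvection_mem_elementaryGroup (mem_univ _) (mem_univ _) h _
  have hsingle (j : ι) : X • (Pi.single j 1 : ι → R) =
      Pi.single j 1 + (Pi.single k 1 : ι → R) j • (v - Pi.single k 1) := by
    rw [Matrix.SpecialLinearGroup.smul_def, smul_eq_mulVec, hXM, add_mulVec, one_mulVec,
      vecMulVec_mulVec]
    simp
  refine ⟨X⁻¹, inv_mem hX, ?_, fun j hj => ?_⟩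
  · simp [inv_smul_eq_iff, hsingle]
  · simp [inv_smul_eq_iff, hsingle, hj]

end CommRing

section EuclideanDomain

variable [EuclideanDomain R]

theorem exists_elementary_smul_apply_eq_zero {i j : ι} (hij : i ≠ j) (v : ι → R) :
    ∃ g ∈ elementaryGroup R {i, j}, (g • v) i = 0 := by
  suffices ∀ a b : R, ∀ i j : ι, i ≠ j → ∀ v : ι → R, v i = a → v j = b →
      ∃ g ∈ elementaryGroup R {i, j}, (g • v) i = 0 from this _ _ i j hij v rfl rfl
  intro a b
  induction a, b using EuclideanDomain.GCD.induction with
  | H0 b => exact fun i j _ v hi _ => ⟨1, one_mem _, by simpa using hi⟩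
  | H1 a b _ ih =>
    rintro i j hij v rfl rfl
    have hT {x y : ι} (hx : x ∈ ({i, j} : Set ι)) (hy : y ∈ ({i, j} : Set ι)) (h : x ≠ y) (c : R) :=
      transvection_mem_elementaryGroup hx hy h c
    obtain ⟨g, hg, hgv⟩ := ih j i hij.symm (transvection hij.symm (-(v j / v i)) • v)
      (by simp [transvection_smul_apply, EuclideanDomain.mod_eq_sub_mul_div]; ring)
      (by simp [transvection_smul_apply, hij])
    rw [pair_comm] at hg
    refine ⟨transvection hij (-1) * transvection hij.symm 1 * g *
      transvection hij.symm _,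
      mul_mem (mul_mem (mul_mem (hT ?_ ?_ _ _) (hT ?_ ?_ _ _)) hg)
      (hT ?_ ?_ _ (-(v j / v i))), ?_⟩
    any_goals simp
    simp only [mul_smul, transvection_smul_apply] at hgv ⊢
    simp [hij, hgv]

theorem exists_elementary_smul_apply_eq_zero_of_mem {s : Finset ι} {k : ι} (hk : k ∉ s)
    (v : ι → R) : ∃ g ∈ elementaryGroup R (insert k ↑s : Set ι), ∀ i ∈ s, (g • v) i = 0 := by
  induction s using Finset.induction_on with
  | empty => exact ⟨1, one_mem _, by simp⟩
  | insert i s his ih =>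
    rw [Finset.mem_insert, not_or] at hk
    obtain ⟨g, hg, hgs⟩ := ih hk.2
    obtain ⟨g', hg', hi⟩ := exists_elementary_smul_apply_eq_zero (Ne.symm hk.1) (g • v)
    refine ⟨g' * g, mul_mem (elementaryGroup_mono ?_ hg') (elementaryGroup_mono ?_ hg), ?_⟩
    · simp [insert_subset_iff]
    · simpa using insert_subset_insert (subset_insert i (s : Set ι))
    · intro l hl
      rw [mul_smul]
      obtain rfl | hl := Finset.mem_insert.1 hl
      · exact hi
      · rw [smul_apply_of_mem_elementaryGroup hg', hgs l hl]
        simp [ne_of_mem_of_not_mem hl his, ne_of_mem_of_not_mem hl hk.2]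

theorem exists_elementary_smul_eq_smul_single {k z : ι} (hkz : k ≠ z) {v : ι → R} (hv : v z = 0) :
    ∃ g ∈ elementaryGroup R ({z}ᶜ : Set ι), ∃ d : R, g • v = d • (Pi.single k 1 : ι → R) := by
  obtain ⟨g, hg, hgv⟩ := exists_elementary_smul_apply_eq_zero_of_mem
    (s := (Finset.univ.erase z).erase k) (Finset.notMem_erase _ _) v
  have hset : (insert k ↑((Finset.univ.erase z).erase k) : Set ι) = {z}ᶜ := by
    rw [← Finset.coe_insert, Finset.insert_erase (by simpa using hkz)]
    simp [Set.compl_eq_univ_sdiff]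
  rw [hset] at hg
  refine ⟨g, hg, (g • v) k, funext fun i => ?_⟩
  obtain rfl | hik := eq_or_ne i k
  · simp
  obtain rfl | hiz := eq_or_ne i z
  · simp [smul_apply_of_mem_elementaryGroup hg, hv, hik]
  · simpa [hik] using hgv i (by simp [hik, hiz])

/-- The Gauss–Jordan step: the entry at the pivot is first a unit, because the column completes to a
matrix of determinant one, and two transvections turn it into `1`. -/
theorem exists_elementary_smul_single_apply_eq_one {A : Matrix.SpecialLinearGroup ι R}
    {s : Finset ι} {k : ι} (hk : k ∉ s)
    (h : ∀ j ∉ (insert k ↑s : Set ι), A • (Pi.single j 1 : ι → R) = Pi.single j 1) :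
    ∃ g ∈ elementaryGroup R (insert k ↑s : Set ι), (g • A • (Pi.single k 1 : ι → R)) k = 1 := by
  obtain rfl | ⟨m, hm⟩ := s.eq_empty_or_nonempty
  · refine ⟨1, one_mem _, ?_⟩
    rw [one_smul, smul_single_one_apply]
    exact apply_self_eq_one_of_smul_single fun j hj => h j (by simpa using hj)
  have hkm : k ≠ m := (ne_of_mem_of_not_mem hm hk).symm
  obtain ⟨g, hg, hgs⟩ := exists_elementary_smul_apply_eq_zero_of_mem hk
    (A • (Pi.single k 1 : ι → R))
  have hunit : IsUnit ((g * A : Matrix.SpecialLinearGroup ι R) k k) :=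
    isUnit_apply_self_of_smul_single
      (fun j hj => by rw [mul_smul, h j hj, smul_single_of_mem_elementaryGroup hg hj])
      fun i hi => by rw [← smul_single_one_apply, mul_smul, hgs i hi]
  obtain ⟨u, hu⟩ := hunit
  rw [← smul_single_one_apply, mul_smul] at hu
  refine ⟨transvection hkm 1 * transvection hkm.symm ((↑u⁻¹ : R) - 1) * g,
    mul_mem (mul_mem (transvection_mem_elementaryGroup ?_ ?_ _ _)
      (transvection_mem_elementaryGroup ?_ ?_ _ _)) hg, ?_⟩
  any_goals simp [hm]
  simp only [mul_smul] at hu ⊢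
  simp [transvection_smul_apply, hkm, ← hu, hgs m hm, sub_mul]

theorem elementaryGroup_univ_eq_top : elementaryGroup R (univ : Set ι) = ⊤ := by
  suffices ∀ s : Finset ι, ∀ A : Matrix.SpecialLinearGroup ι R,
      (∀ j ∉ s, A • (Pi.single j 1 : ι → R) = Pi.single j 1) → A ∈ elementaryGroup R univ from
    eq_top_iff.2 fun A _ => this Finset.univ A (by simp)
  intro s
  induction s using Finset.induction_on with
  | empty =>
    intro A hA
    rw [eq_one_of_smul_single fun j => hA j (by simp)]
    exact one_mem _
  | insert k s hk ih =>
    intro A hA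
    obtain ⟨g, hg, hgk⟩ := exists_elementary_smul_single_apply_eq_one hk
      (fun j hj => hA j (by simpa using hj))
    obtain ⟨g', hg', hclear, hfix⟩ := exists_elementary_smul_eq_single hgk
    have hmem : g' * (g * A) ∈ elementaryGroup R univ := ih _ fun j hj => by
      rw [mul_smul, mul_smul]
      obtain rfl | hjk := eq_or_ne j k
      · exact hclear
      · rw [hA j (by simp [hj, hjk]),
          smul_single_of_mem_elementaryGroup hg (by simp [hj, hjk]), hfix j hjk]
    rwa [Subgroup.mul_mem_cancel_left _ hg',
      Subgroup.mul_mem_cancel_left _ (elementaryGroup_mono (subset_univ _) hg)] at hmem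

end EuclideanDomain

end ElementaryGroup

section Group

open scoped commutatorElement

variable {G : Type*} [Group G]

theorem commutatorElement_mul_mul_of_mem_center {z w : G} (hz : z ∈ Subgroup.center G)
    (hw : w ∈ Subgroup.center G) (a b : G) : ⁅a * z, b * w⁆ = ⁅a, b⁆ := by
  have hza : z * (b * w) = b * w * z := (Subgroup.mem_center_iff.1 hz _).symm
  have hwa : w * a⁻¹ = a⁻¹ * w := (Subgroup.mem_center_iff.1 hw _).symm
  rw [commutatorElement_def, mul_inv_eq_iff_eq_mul, mul_inv_eq_iff_eq_mul, mul_assoc, hza]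
  calc a * (b * w * z) = a * b * (w * a⁻¹) * a * z := by group
    _ = ⁅a, b⁆ * (b * w) * (a * z) := by rw [hwa]; group

theorem finite_commutatorSet_of_finiteIndex_center [(Subgroup.center G).FiniteIndex] :
    Finite (commutatorSet G) := by
  refine ((finite_range fun p : (G ⧸ Subgroup.center G) × (G ⧸ Subgroup.center G) =>
    ⁅p.1.out, p.2.out⁆).subset ?_).to_subtype
  rintro _ ⟨a, b, rfl⟩
  obtain ⟨z, hz⟩ := QuotientGroup.mk_out_eq_mul (Subgroup.center G) a
  obtain ⟨w, hw⟩ := QuotientGroup.mk_out_eq_mul (Subgroup.center G) b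
  exact ⟨(a, b), by simp only [hz, hw, commutatorElement_mul_mul_of_mem_center z.2 w.2]⟩

/-- By Schur's theorem `G ⧸ N`, whose center has finite index, has a finite commutator subgroup. -/
theorem finiteIndex_of_commutator_le [Group.IsPerfect G] {N Γ : Subgroup G} [N.Normal]
    [Γ.FiniteIndex] (h : ⁅Γ, (⊤ : Subgroup G)⁆ ≤ N) : N.FiniteIndex := by
  set π := QuotientGroup.mk' N
  have hπ : Function.Surjective π := QuotientGroup.mk'_surjective N
  have hcenter : Γ.map π ≤ Subgroup.center (G ⧸ N) := by
    rw [← Subgroup.centralizer_univ, ← Subgroup.coe_top,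
      ← Subgroup.commutator_eq_bot_iff_le_centralizer, ← Subgroup.map_top_of_surjective π hπ,
      ← Subgroup.map_commutator, Subgroup.map_eq_bot_iff, QuotientGroup.ker_mk']
    exact h
  have : (Γ.map π).FiniteIndex :=
    ⟨ne_zero_of_dvd_ne_zero Subgroup.FiniteIndex.index_ne_zero (Γ.index_map_dvd hπ)⟩
  have : (Subgroup.center (G ⧸ N)).FiniteIndex := Subgroup.finiteIndex_of_le hcenter
  have : Finite (commutatorSet (G ⧸ N)) := finite_commutatorSet_of_finiteIndex_center
  have : Finite (⊤ : Subgroup (G ⧸ N)) :=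
    Group.IsPerfect.commutator_eq_top (G := G ⧸ N) ▸ inferInstance
  have : Finite (G ⧸ N) := Finite.of_equiv _ Subgroup.topEquiv.toEquiv
  exact Subgroup.finiteIndex_of_finite_quotient

theorem smul_mem_orbit_iff_of_smul_eq_self {X : Type*} [MulAction G X] {N : Subgroup G} [N.Normal]
    {g : G} {x : X} (hg : g • x = x) {y : X} :
    g • y ∈ MulAction.orbit N x ↔ y ∈ MulAction.orbit N x := by
  have key {g : G} (hg : g • x = x) {y : X} (hy : y ∈ MulAction.orbit N x) :
      g • y ∈ MulAction.orbit N x := by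
    obtain ⟨n, rfl⟩ := hy
    refine ⟨⟨g * n * g⁻¹, Subgroup.Normal.conj_mem inferInstance _ n.2 _⟩, ?_⟩
    simp only [Subgroup.smul_def, mul_smul, inv_smul_eq_iff.2 hg.symm]
  exact ⟨fun h => by simpa using key (inv_smul_eq_iff.2 hg.symm) h, key hg⟩

theorem exists_pow_mem_normalCore {M : Subgroup G} [(Subgroup.normalizer (M : Set G)).FiniteIndex]
    {x : G} (hx : ∀ g, ∃ m : ℕ, m ≠ 0 ∧ g * x ^ m * g⁻¹ ∈ M) :
    ∃ q : ℕ, q ≠ 0 ∧ x ^ q ∈ M.normalCore := by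
  set L := Subgroup.normalizer (M : Set G)
  have := Subgroup.fintypeQuotientOfFiniteIndex (H := L)
  choose m hm hmM using hx
  refine ⟨∏ y : G ⧸ L, m y.out⁻¹, Finset.prod_ne_zero_iff.2 fun y _ => hm _, fun g => ?_⟩
  obtain ⟨l, hl⟩ := QuotientGroup.mk_out_eq_mul L g⁻¹
  obtain ⟨d, hd⟩ := Finset.dvd_prod_of_mem (fun y : G ⧸ L => m y.out⁻¹)
    (Finset.mem_univ (QuotientGroup.mk g⁻¹))
  have hmem := (Subgroup.mem_normalizer_iff.1 l.2 _).1 (pow_mem (hmM (g⁻¹ * l)⁻¹) d)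
  rw [hl] at hd
  rw [hd, pow_mul]
  convert hmem using 1
  rw [conj_pow]
  group

theorem exists_forall_pow_mem {κ : Type*} [Finite κ] {N : Subgroup G} {t : κ → G}
    (ht : ∀ i, ∃ m : ℕ, m ≠ 0 ∧ t i ^ m ∈ N) : ∃ m : ℕ, m ≠ 0 ∧ ∀ i, t i ^ m ∈ N := by
  have := Fintype.ofFinite κ
  choose m hm hN using ht
  refine ⟨∏ i, m i, Finset.prod_ne_zero_iff.2 fun i _ => hm i, fun i => ?_⟩
  obtain ⟨d, hd⟩ := Finset.dvd_prod_of_mem m (Finset.mem_univ i)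
  rw [hd, pow_mul]
  exact pow_mem (hN i) d

end Group

section Congruence

open Matrix Matrix.SpecialLinearGroup
open scoped commutatorElement

theorem exists_ne_ne_of_three_le_card {ι : Type*} [Fintype ι] (hι : 3 ≤ Fintype.card ι) (i j : ι) :
    ∃ l, i ≠ l ∧ l ≠ j := by
  classical
  obtain ⟨l, -, hl⟩ := Finset.exists_mem_notMem_of_card_lt_card
    (Finset.card_le_two (a := i) (b := j) |>.trans_lt hι)
  rw [Finset.mem_insert, Finset.mem_singleton, not_or] at hl
  exact ⟨l, Ne.symm hl.1, hl.2⟩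

variable {ι R : Type*} [Fintype ι] [DecidableEq ι]

section CommRing

variable [CommRing R]

/-- The principal congruence subgroup of `SL ι R` of level `I`. -/
def congruenceSubgroup (ι : Type*) [Fintype ι] [DecidableEq ι] (I : Ideal R) :
    Subgroup (Matrix.SpecialLinearGroup ι R) :=
  (Matrix.SpecialLinearGroup.map (n := ι) (Ideal.Quotient.mk I)).ker

instance normal_congruenceSubgroup (I : Ideal R) : (congruenceSubgroup ι I).Normal :=
  MonoidHom.normal_ker _

theorem mem_congruenceSubgroup {I : Ideal R} {A : Matrix.SpecialLinearGroup ι R} :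
    A ∈ congruenceSubgroup ι I ↔ ∀ i j, A i j - (1 : Matrix ι ι R) i j ∈ I := by
  rw [congruenceSubgroup, MonoidHom.mem_ker, Matrix.SpecialLinearGroup.ext_iff]
  refine forall₂_congr fun i j => ?_
  rw [← Ideal.Quotient.eq, Matrix.SpecialLinearGroup.map_apply_coe,
    Matrix.SpecialLinearGroup.coe_one, RingHom.mapMatrix_apply, Matrix.map_apply, one_apply,
    one_apply]
  split_ifs <;> simp

theorem mem_congruenceSubgroup_span_singleton {q : R} {A : Matrix.SpecialLinearGroup ι R} :
    A ∈ congruenceSubgroup ι (Ideal.span {q}) ↔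
      ∀ i j, q ∣ A i j - (1 : Matrix ι ι R) i j := by
  simp only [mem_congruenceSubgroup, Ideal.mem_span_singleton]

instance finiteIndex_congruenceSubgroup {I : Ideal R} [Finite (R ⧸ I)] :
    (congruenceSubgroup ι I).FiniteIndex := by
  have : Finite (Matrix.SpecialLinearGroup ι (R ⧸ I)) := Subtype.finite
  exact Subgroup.finiteIndex_ker _

theorem transvection_mem_congruenceSubgroup {I : Ideal R} {i j : ι} (h : i ≠ j) {c : R}
    (hc : c ∈ I) : transvection h c ∈ congruenceSubgroup ι I := by
  refine mem_congruenceSubgroup.2 fun x y => ?_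
  rw [transvection_coe, Matrix.add_apply, add_sub_cancel_left, single_apply]
  split_ifs
  exacts [hc, zero_mem _]

theorem heisenbergTriple_transvection {i j l : ι} (hil : i ≠ l) (hlj : l ≠ j) (hij : i ≠ j)
    (c d : R) :
    HeisenbergTriple (transvection hil c) (transvection hlj d) (transvection hij (c * d)) := by
  refine ⟨Subtype.ext ?_, transvection_commute hij hil hij.symm hil.symm _ _,
    transvection_commute hij hlj hlj.symm hij.symm _ _⟩
  simp only [Matrix.SpecialLinearGroup.coe_mul, transvection_coe, add_mul, mul_add, one_mul,
    mul_one, single_mul_single_same, single_mul_single_of_ne _ _ _ _ hij.symm,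
    single_mul_single_of_ne _ _ _ _ hlj.symm, add_zero]
  abel

variable {N : Subgroup (Matrix.SpecialLinearGroup ι R)} {q : R}

theorem smul_single_add_mem_orbit [N.Normal]
    (hN : ∀ i j (h : i ≠ j) c, q ∣ c → transvection h c ∈ N) {k z : ι} (hkz : k ≠ z) {a p : R}
    (ha : q ∣ a - 1) (hp : IsUnit p) :
    a • (Pi.single z 1 : ι → R) + (q * p) • (Pi.single k 1 : ι → R) ∈
      MulAction.orbit N (Pi.single z 1 : ι → R) := by
  obtain ⟨r, hr⟩ := ha
  obtain ⟨u, rfl⟩ := hp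
  rw [← smul_mem_orbit_iff_of_smul_eq_self
    (transvection_smul_single_fst hkz.symm (-(r * (↑u⁻¹ : R))))]
  refine ⟨⟨_, hN k z hkz (q * u) (dvd_mul_right _ _)⟩, ?_⟩
  have hcoef : q * u * -(r * (↑u⁻¹ : R)) = -(q * r) := by linear_combination -(q * r) * u.mul_inv
  simp only [Subgroup.mk_smul]
  rw [smul_add, smul_comm _ a, smul_comm _ (q * (u : R)), transvection_smul_single_fst,
    transvection_smul_single_snd, transvection_smul_single_snd, smul_add, smul_smul, hcoef,
    eq_add_of_sub_eq hr]
  module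

theorem commutatorElement_transvection_mem_of_smul_single
    (hN : ∀ i j (h : i ≠ j) c, q ∣ c → transvection h c ∈ N) {z j : ι}
    {B : Matrix.SpecialLinearGroup ι R} (hB : B ∈ congruenceSubgroup ι (Ideal.span {q}))
    (hBz : B • (Pi.single z 1 : ι → R) = Pi.single z 1) (h : z ≠ j) (c : R) :
    ⁅B, transvection h c⁆ ∈ N := by
  have hB' := mem_congruenceSubgroup_span_singleton.1 (inv_mem hB) j
  set r : ι → R := fun l => B⁻¹ j l
  have hrz : r z = 0 := by
    simp only [r, ← smul_single_one_apply, inv_smul_eq_iff.2 hBz.symm, Pi.single_eq_of_ne h.symm]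
  obtain ⟨X, hX, hXM⟩ := exists_mem_coe_eq_one_add (H := N) (s := {z})
    (M := vecMulVec (Pi.single z 1) (c • (r - Pi.single j 1)))
    (fun i l => by
      by_cases hi : i = z <;> by_cases hl : l = z <;> simp [vecMulVec_apply, hi, hl, hrz, h])
    fun i l hil => hN _ _ _ _ (by
      rw [vecMulVec_apply, Pi.smul_apply, smul_eq_mul]
      refine ((dvd_mul_of_dvd_right ?_ _).mul_left _)
      simpa only [Pi.sub_apply, Pi.single_apply, one_apply, eq_comm (a := l)] using hB' l)
  suffices hcomm : B * transvection h c = X * transvection h c * B by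
    rwa [commutatorElement_def, hcomm, mul_inv_cancel_right, mul_inv_cancel_right]
  have hBz' : (B : Matrix ι ι R) *ᵥ Pi.single z 1 = Pi.single z 1 := hBz
  have hrB : r ᵥ* (B : Matrix ι ι R) = Pi.single j 1 := by
    have hrow : r = Pi.single j 1 ᵥ* (B⁻¹ : Matrix.SpecialLinearGroup ι R).1 :=
      (single_one_vecMul j _).symm
    rw [hrow, vecMul_vecMul, ← Matrix.SpecialLinearGroup.coe_mul, inv_mul_cancel,
      Matrix.SpecialLinearGroup.coe_one, vecMul_one]
  have hT : (transvection h c : Matrix ι ι R) =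
      1 + vecMulVec (Pi.single z 1) (c • Pi.single j 1) := by
    rw [transvection_coe, vecMulVec_smul, ← single_eq_single_vecMulVec_single, smul_single,
      smul_eq_mul, mul_one]
  have hXT : (X * transvection h c : Matrix ι ι R) = 1 + vecMulVec (Pi.single z 1) (c • r) := by
    have horth : (c • (r - Pi.single j 1)) ⬝ᵥ (Pi.single z 1 : ι → R) = 0 := by simp [hrz, h]
    rw [hXM, hT, add_mul, one_mul, mul_add, mul_one, vecMulVec_mul_vecMulVec, horth, zero_smul,
      vecMulVec_zero, add_zero, add_assoc, ← vecMulVec_add, ← smul_add, add_sub_cancel]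
  apply Subtype.ext
  rw [Matrix.SpecialLinearGroup.coe_mul, Matrix.SpecialLinearGroup.coe_mul,
    Matrix.SpecialLinearGroup.coe_mul, hXT, hT, mul_add, add_mul, mul_vecMulVec, vecMulVec_mul,
    hBz', smul_vecMul, hrB, mul_one, one_mul]

end CommRing

section EuclideanDomain

variable [EuclideanDomain R] {N : Subgroup (Matrix.SpecialLinearGroup ι R)} [N.Normal] {q : R}

theorem smul_single_mem_orbit (hι : 3 ≤ Fintype.card ι)
    (hN : ∀ i j (h : i ≠ j) c, q ∣ c → transvection h c ∈ N)
    {A : Matrix.SpecialLinearGroup ι R} (hA : A ∈ congruenceSubgroup ι (Ideal.span {q})) (z : ι) :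
    A • (Pi.single z 1 : ι → R) ∈ MulAction.orbit N (Pi.single z 1 : ι → R) := by
  obtain ⟨k, -, hkz⟩ := exists_ne_ne_of_three_le_card hι z z
  obtain ⟨m, hkm, hmz⟩ := exists_ne_ne_of_three_le_card hι k z
  set e : ι → ι → R := fun i => Pi.single i 1
  set a : R := A z z
  obtain ⟨b, hbz, hb⟩ : ∃ b : ι → R, b z = 0 ∧ A • e z = a • e z + q • b := by
    choose b hb using fun i => mem_congruenceSubgroup_span_singleton.1 hA i z
    refine ⟨Function.update b z 0, by simp, funext fun i => ?_⟩
    obtain rfl | hi := eq_or_ne i z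
    · simp [e, a, smul_single_one_apply]
    · simpa [e, hi, smul_single_one_apply] using hb i
  obtain ⟨g, hg, d, hgb⟩ := exists_elementary_smul_eq_smul_single hkz hbz
  obtain ⟨g', hg', p, hgp⟩ := exists_elementary_smul_eq_smul_single hkz
    (v := d • e k + a • e m) (by simp [e, hkz.symm, hmz.symm])
  have hge : g • e z = e z := smul_single_of_mem_elementaryGroup hg (by simp)
  have hge' : g' • e z = e z := smul_single_of_mem_elementaryGroup hg' (by simp)
  have hpa : p ∣ a := by
    rw [← eq_inv_smul_iff, smul_comm] at hgp
    exact ⟨_, by simpa [e, hkm.symm] using congrFun hgp m⟩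
  have hred : g' • transvection hmz q • g • A • e z = a • e z + (q * p) • e k := by
    have hT : transvection hmz q • (a • e z + (q * d) • e k) =
        a • e z + q • (d • e k + a • e m) := by
      rw [smul_add, smul_comm _ a, smul_comm _ (q * d), transvection_smul_single_of_ne hmz hkz,
        transvection_smul_single_snd]
      module
    rw [hb, smul_add g, smul_comm g, smul_comm g, hge, hgb, smul_smul q d, hT, smul_add g',
      smul_comm g', smul_comm g', hge', hgp, smul_smul q p]
  have hp : IsUnit p := isUnit_of_dvd_smul_single
    (A := g' * (transvection hmz q * (g * A))) (z := z) fun i => by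
      rw [mul_smul, mul_smul, mul_smul, hred]
      exact dvd_add (hpa.mul_right _) ((dvd_mul_left p q).mul_right _)
  have hT : transvection hmz q • g • A • e z ∈ MulAction.orbit N (e z) := by
    rw [← smul_mem_orbit_iff_of_smul_eq_self hge', hred]
    exact smul_single_add_mem_orbit hN hkz
      (by simpa using mem_congruenceSubgroup_span_singleton.1 hA z z) hp
  let t : N := ⟨_, hN m z hmz q dvd_rfl⟩
  rw [← smul_mem_orbit_iff_of_smul_eq_self hge]
  rwa [← MulAction.orbit_eq_iff, ← MulAction.orbit_smul t (g • A • e z), MulAction.orbit_eq_iff]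

/-- Modulo `N` one may assume that `A` fixes the basis vector `e_z`, and then conjugation by `A`
multiplies a transvection in row `z` by transvections in the same row only. -/
theorem commutator_congruenceSubgroup_le (hι : 3 ≤ Fintype.card ι)
    (hN : ∀ i j (h : i ≠ j) c, q ∣ c → transvection h c ∈ N)
    (hNq : N ≤ congruenceSubgroup ι (Ideal.span {q})) :
    ⁅congruenceSubgroup ι (Ideal.span {q}), (⊤ : Subgroup (Matrix.SpecialLinearGroup ι R))⁆ ≤
      N := by
  set π := QuotientGroup.mk' N
  have hπ {x : Matrix.SpecialLinearGroup ι R} : π x = 1 ↔ x ∈ N := QuotientGroup.eq_one_iff x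
  rw [← QuotientGroup.ker_mk' N, ← Subgroup.map_eq_bot_iff, Subgroup.map_commutator,
    Subgroup.commutator_eq_bot_iff_le_centralizer, Subgroup.le_centralizer_iff,
    Subgroup.map_le_iff_le_comap, ← elementaryGroup_univ_eq_top, elementaryGroup,
    Subgroup.closure_le]
  rintro _ ⟨z, -, j, -, h, c, rfl⟩ _ ⟨A, hA, rfl⟩
  obtain ⟨ν, hν : ν.1 • (Pi.single z 1 : ι → R) = A • (Pi.single z 1 : ι → R)⟩ :=
    smul_single_mem_orbit hι hN hA z
  set B := ν.1⁻¹ * A with hB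
  have hcomm : ⁅B, transvection h c⁆ ∈ N :=
    commutatorElement_transvection_mem_of_smul_single hN (mul_mem (inv_mem (hNq ν.2)) hA)
      (by rw [mul_smul, ← hν, inv_smul_smul]) h c
  have hA' : π A = π B := by rw [hB, map_mul, hπ.2 (inv_mem ν.2), one_mul]
  rw [hA', ← commutatorElement_eq_one_iff_mul_comm, ← map_commutatorElement, hπ]
  exact hcomm

theorem isPerfect_specialLinearGroup (hι : 3 ≤ Fintype.card ι) :
    Group.IsPerfect (Matrix.SpecialLinearGroup ι R) := by
  rw [Group.isPerfect_def, eq_top_iff, ← elementaryGroup_univ_eq_top, elementaryGroup,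
    Subgroup.closure_le]
  rintro _ ⟨i, -, j, -, hij, c, rfl⟩
  obtain ⟨l, hil, hlj⟩ := exists_ne_ne_of_three_le_card hι i j
  have h := heisenbergTriple_transvection hil hlj hij c 1
  rw [mul_one] at h
  rw [h.eq_commutatorElement]
  exact Subgroup.commutator_mem_commutator (Subgroup.mem_top _) (Subgroup.mem_top _)

theorem finiteIndex_of_transvection_mem (hι : 3 ≤ Fintype.card ι) [Finite (R ⧸ Ideal.span {q})]
    (hN : ∀ i j (h : i ≠ j) c, q ∣ c → transvection h c ∈ N) : N.FiniteIndex := by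
  set P := N ⊓ congruenceSubgroup ι (Ideal.span {q})
  have hP : ∀ i j (h : i ≠ j) c, q ∣ c → transvection h c ∈ P := fun i j h c hc =>
    ⟨hN i j h c hc, transvection_mem_congruenceSubgroup h (Ideal.mem_span_singleton.2 hc)⟩
  have := isPerfect_specialLinearGroup (R := R) hι
  have : P.FiniteIndex :=
    finiteIndex_of_commutator_le (commutator_congruenceSubgroup_le hι hP inf_le_right)
  exact Subgroup.finiteIndex_of_le (H := P) inf_le_left

end EuclideanDomain

/-- Raising a Heisenberg triple of elementary matrices to a power and conjugating it gives a triple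
in `Γ`. -/
theorem exists_conj_transvection_pow_mem_map_ker {H : Type*} [Group H] [CommRing R]
    (hι : 3 ≤ Fintype.card ι) {Γ : Subgroup (Matrix.SpecialLinearGroup ι R)} [Γ.FiniteIndex]
    {φ : Γ →* H} (hφ : ∀ a b c : Γ, HeisenbergTriple a b c → IsOfFinOrder (φ c)) {i j : ι}
    (hij : i ≠ j) (g : Matrix.SpecialLinearGroup ι R) :
    ∃ m : ℕ, m ≠ 0 ∧ g * transvection hij 1 ^ m * g⁻¹ ∈ φ.ker.map Γ.subtype := by
  set k := Γ.normalCore.index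
  have hk : k ≠ 0 := Subgroup.FiniteIndex.index_ne_zero
  have hΓ (x : Matrix.SpecialLinearGroup ι R) : MulAut.conj g (x ^ k) ∈ Γ :=
    Subgroup.pow_index_mem Γ.normalCore x g
  obtain ⟨l, hil, hlj⟩ := exists_ne_ne_of_three_le_card hι i j
  have h := heisenbergTriple_transvection hil hlj hij (1 : R) 1
  rw [mul_one] at h
  replace h := (h.pow_pow k k).map (MulAut.conj g)
  rw [pow_mul] at h
  obtain ⟨m, hm, hc⟩ := isOfFinOrder_iff_pow_eq_one.1 <| hφ ⟨_, hΓ _⟩ ⟨_, hΓ _⟩ ⟨_, hΓ _⟩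
    (HeisenbergTriple.of_map (f := Γ.subtype) Γ.subtype_injective h)
  exact ⟨k * k * m, by positivity, _, (map_pow φ _ m).trans hc, by simp [pow_mul]⟩

theorem finite_range_of_heisenbergTriple_isOfFinOrder {H : Type*} [Group H]
    (hι : 3 ≤ Fintype.card ι) {Γ : Subgroup (Matrix.SpecialLinearGroup ι ℤ)} [Γ.FiniteIndex]
    (φ : Γ →* H) (hφ : ∀ a b c : Γ, HeisenbergTriple a b c → IsOfFinOrder (φ c)) :
    (range φ).Finite := by
  set M := φ.ker.map Γ.subtype
  have hMΓ : Γ ≤ Subgroup.normalizer (M : Set (Matrix.SpecialLinearGroup ι ℤ)) := by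
    have := Subgroup.le_normalizer_map (H := φ.ker) Γ.subtype
    rwa [Subgroup.normalizer_eq_top, ← MonoidHom.range_eq_map, Subgroup.range_subtype] at this
  have : (Subgroup.normalizer (M : Set (Matrix.SpecialLinearGroup ι ℤ))).FiniteIndex :=
    Subgroup.finiteIndex_of_le hMΓ
  obtain ⟨q, hq, hqM⟩ := exists_forall_pow_mem
    fun p : {p : ι × ι // p.1 ≠ p.2} =>
      exists_pow_mem_normalCore (exists_conj_transvection_pow_mem_map_ker hι hφ p.2)
  have hN (i j : ι) (h : i ≠ j) (c : ℤ) (hc : (q : ℤ) ∣ c) : transvection h c ∈ M.normalCore := by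
    obtain ⟨d, rfl⟩ := hc
    have := zpow_mem (hqM ⟨(i, j), h⟩) d
    rwa [← zpow_natCast, ← _root_.zpow_mul, transvection_zpow, mul_one, Int.cast_id] at this
  have : Finite (ℤ ⧸ Ideal.span {(q : ℤ)}) :=
    Ideal.finiteQuotientOfFreeOfNeBot _ (by simpa using hq)
  have : M.FiniteIndex :=
    have := finiteIndex_of_transvection_mem hι hN
    Subgroup.finiteIndex_of_le M.normalCore_le
  have hker : φ.ker.index ≠ 0 :=
    ne_zero_of_dvd_ne_zero this.index_ne_zero (Subgroup.index_map_subtype φ.ker ▸ dvd_mul_right _ _)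
  rw [Subgroup.index_ker] at hker
  exact finite_coe_iff.1 (Nat.finite_of_card_ne_zero hker)

end Congruence

section Distortion

/-- The bounded distortion property: any two difference quotients of `f` inside `D` agree up to
the factor `C`. It is stated without division so that degenerate quotients need no exception. -/
def DistortionLE {X Y : Type*} [Dist X] [Dist Y] (f : X → Y) (D : Set X) (C : ℝ) : Prop :=
  ∀ ⦃y⦄, y ∈ D → ∀ ⦃z⦄, z ∈ D → ∀ ⦃y'⦄, y' ∈ D → ∀ ⦃z'⦄, z' ∈ D →
    dist (f y) (f z) * dist y' z' ≤ C * (dist (f y') (f z') * dist y z)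

/-- The logarithms of the difference quotients of `f` inside `S` are `L`-Lipschitz, in the sense
that their oscillation over a subset of diameter `r` is at most `L * r`. -/
def LogSlopeLipschitzOn {X Y : Type*} [Dist X] [Dist Y] (f : X → Y) (S : Set X) (L : NNReal) :
    Prop :=
  ∀ ⦃D⦄, D ⊆ S → ∀ ⦃r : ℝ⦄, (∀ y ∈ D, ∀ z ∈ D, dist y z ≤ r) → DistortionLE f D (Real.exp (L * r))

theorem LogSlopeLipschitzOn.of_semiconj {X Y X' Y' : Type*} [PseudoMetricSpace X]
    [PseudoMetricSpace Y] [PseudoMetricSpace X'] [PseudoMetricSpace Y'] {i : X → X'} {j : Y → Y'}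
    (hi : Isometry i) (hj : Isometry j) {f : X → Y} {F : X' → Y'} {S : Set X} {L : NNReal}
    (hF : ∀ x ∈ S, F (i x) = j (f x)) (h : LogSlopeLipschitzOn F (i '' S) L) :
    LogSlopeLipschitzOn f S L := by
  intro D hD r hr y hy z hz y' hy' z' hz'
  have key := h (image_mono hD) (r := r) (by
    rintro _ ⟨u, hu, rfl⟩ _ ⟨v, hv, rfl⟩
    exact (hi.dist_eq u v).trans_le (hr u hu v hv)) (mem_image_of_mem i hy)
    (mem_image_of_mem i hz) (mem_image_of_mem i hy') (mem_image_of_mem i hz')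
  simpa only [hi.dist_eq, hj.dist_eq, hF _ (hD hy), hF _ (hD hz), hF _ (hD hy'), hF _ (hD hz')]
    using key

namespace DistortionLE

theorem mono {X Y : Type*} [PseudoMetricSpace X] [PseudoMetricSpace Y] {f : X → Y} {D : Set X}
    {C C' : ℝ} (h : DistortionLE f D C) (hC : C ≤ C') : DistortionLE f D C' :=
  fun _ hy _ hz _ hy' _ hz' => (h hy hz hy' hz').trans (by gcongr)

theorem comp {X Y Z : Type*} [PseudoMetricSpace X] [MetricSpace Y] [PseudoMetricSpace Z]
    {f : X → Y} {g : Y → Z} {D : Set X} {C C' : ℝ} (hg : DistortionLE g (f '' D) C')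
    (hf : DistortionLE f D C) (hinj : InjOn f D) (hC' : 0 ≤ C') :
    DistortionLE (g ∘ f) D (C' * C) := by
  intro y hy z hz y' hy' z' hz'
  rcases eq_or_ne y' z' with rfl | hne
  · simp
  have hpos : 0 < dist (f y') (f z') := dist_pos.2 (hinj.ne hy' hz' hne)
  refine le_of_mul_le_mul_right ?_ hpos
  calc dist (g (f y)) (g (f z)) * dist y' z' * dist (f y') (f z')
      = dist (g (f y)) (g (f z)) * dist (f y') (f z') * dist y' z' := by ring
    _ ≤ C' * (dist (g (f y')) (g (f z')) * dist (f y) (f z)) * dist y' z' := by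
        gcongr ?_ * _
        exact hg (mem_image_of_mem f hy) (mem_image_of_mem f hz) (mem_image_of_mem f hy')
          (mem_image_of_mem f hz')
    _ = C' * dist (g (f y')) (g (f z')) * (dist (f y) (f z) * dist y' z') := by ring
    _ ≤ C' * dist (g (f y')) (g (f z')) * (C * (dist (f y') (f z') * dist y z)) := by
        gcongr _ * ?_
        exact hf hy hz hy' hz'
    _ = C' * C * (dist ((g ∘ f) y') ((g ∘ f) z') * dist y z) * dist (f y') (f z') := by
        simp only [Function.comp_apply]
        ring

theorem dist_le_mul_of_isFixedPt {X : Type*} [MetricSpace X] {f : X → X} {D : Set X} {C : ℝ}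
    (h : DistortionLE f D C) {p q : X} (hp : p ∈ D) (hq : q ∈ D) (hpq : p ≠ q)
    (hfp : f.IsFixedPt p) (hfq : f.IsFixedPt q) {y z : X} (hy : y ∈ D) (hz : z ∈ D) :
    dist y z ≤ C * dist (f y) (f z) := by
  have key := h hp hq hy hz
  rw [hfp, hfq] at key
  exact le_of_mul_le_mul_left (by linarith) (dist_pos.2 hpq)

theorem dist_le_pow_mul_of_isFixedPt {X : Type*} [MetricSpace X] {f : X → X} {D : Set X} {C : ℝ}
    (h : DistortionLE f D C) (hf : MapsTo f D D) (hC : 0 ≤ C) {p q : X} (hp : p ∈ D) (hq : q ∈ D)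
    (hpq : p ≠ q) (hfp : f.IsFixedPt p) (hfq : f.IsFixedPt q) {y z : X} (hy : y ∈ D) (hz : z ∈ D)
    (m : ℕ) : dist y z ≤ C ^ m * dist (f^[m] y) (f^[m] z) := by
  induction m with
  | zero => simp
  | succ m ih =>
    rw [pow_succ, mul_assoc, Function.iterate_succ_apply', Function.iterate_succ_apply']
    refine ih.trans (mul_le_mul_of_nonneg_left ?_ (pow_nonneg hC m))
    exact h.dist_le_mul_of_isFixedPt hp hq hpq hfp hfq (hf.iterate m hy) (hf.iterate m hz)

end DistortionLE

theorem LogSlopeLipschitzOn.mono {X Y : Type*} [PseudoMetricSpace X] [PseudoMetricSpace Y]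
    {f : X → Y} {S S' : Set X} {L L' : NNReal} (h : LogSlopeLipschitzOn f S L) (hS : S' ⊆ S)
    (hL : L ≤ L') : LogSlopeLipschitzOn f S' L' := by
  intro D hD r hr y hy
  have hr₀ : 0 ≤ r := dist_nonneg.trans (hr y hy y hy)
  exact (h (hD.trans hS) hr).mono (by gcongr) hy

theorem LogSlopeLipschitzOn.distortionLE_iterate {X : Type*} [MetricSpace X] {f : X → X}
    {L : NNReal} (hf : LogSlopeLipschitzOn f univ L) (hinj : f.Injective) {D : Set X} {r : ℕ → ℝ}
    (hr : ∀ i, ∀ y ∈ D, ∀ z ∈ D, dist (f^[i] y) (f^[i] z) ≤ r i) (n : ℕ) :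
    DistortionLE f^[n] D (Real.exp (L * ∑ i ∈ Finset.range n, r i)) := by
  induction n with
  | zero => simp [DistortionLE, mul_comm]
  | succ n ih =>
    have hn : DistortionLE f (f^[n] '' D) (Real.exp (L * r n)) := hf (subset_univ _) <| by
      rintro _ ⟨y, hy, rfl⟩ _ ⟨z, hz, rfl⟩
      exact hr n y hy z hz
    rw [Function.iterate_succ', Finset.sum_range_succ, add_comm, mul_add, Real.exp_add]
    exact hn.comp ih (hinj.iterate n).injOn (Real.exp_nonneg _)

end Distortion

section Kopell

open Filter Topology

variable {X : Type*} [LinearOrder X] [MetricSpace X] {c : X → ℝ} {f h : X → X} {x y : X}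

theorem dist_le_dist_of_mem_uIcc (hc : StrictMono c) (hi : Isometry c) {a b y z : X}
    (hy : y ∈ uIcc a b) (hz : z ∈ uIcc a b) : dist y z ≤ dist a b := by
  rw [← hi.dist_eq, ← hi.dist_eq]
  exact Real.dist_le_of_mem_uIcc (hc.monotone.mapsTo_uIcc hy) (hc.monotone.mapsTo_uIcc hz)

theorem exists_tendsto_iterate_of_map_le [CompactSpace X] (hc : StrictMono c) (hi : Isometry c)
    (hf : Monotone f) (hx : f x ≤ x) :
    ∃ y, Tendsto (fun n => f^[n] x) atTop (𝓝 y) ∧ ∀ n, y ≤ f^[n] x := by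
  have hanti : Antitone fun n => c (f^[n] x) := hc.monotone.comp_antitone <|
    hf.antitone_iterate_of_map_le hx
  have hcompact : IsCompact (range c) := isCompact_range hi.continuous
  have hbdd : BddBelow (range fun n => c (f^[n] x)) :=
    hcompact.bddBelow.mono (range_comp_subset_range _ c)
  have hlim := tendsto_atTop_ciInf hanti hbdd
  obtain ⟨y, hy⟩ := hcompact.isClosed.mem_of_tendsto hlim (.of_forall fun n => mem_range_self _)
  refine ⟨y, hi.isEmbedding.tendsto_nhds_iff.2 (hy ▸ hlim), fun n => ?_⟩
  exact hc.le_iff_le.1 (hy ▸ ciInf_le hbdd n)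

theorem sum_dist_iterate_le (hc : StrictMono c) (hi : Isometry c) (hf : Monotone f) (hyx : y ≤ x)
    (hxy : f x ≤ y) (n : ℕ) :
    ∑ i ∈ Finset.range n, dist (f^[i] x) (f^[i] y) ≤ dist x (f^[n] x) := by
  have key (i : ℕ) : dist (f^[i] x) (f^[i] y) ≤ c (f^[i] x) - c (f^[i + 1] x) := by
    rw [← hi.dist_eq, Real.dist_eq, abs_of_nonneg (sub_nonneg.2 (hc.monotone (hf.iterate i hyx))),
      Function.iterate_succ_apply]
    exact sub_le_sub_left (hc.monotone (hf.iterate i hxy)) _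
  calc ∑ i ∈ Finset.range n, dist (f^[i] x) (f^[i] y)
      ≤ ∑ i ∈ Finset.range n, (c (f^[i] x) - c (f^[i + 1] x)) := Finset.sum_le_sum fun i _ => key i
    _ = c x - c (f^[n] x) := Finset.sum_range_sub' (fun i => c (f^[i] x)) n
    _ ≤ dist x (f^[n] x) := by
      rw [← hi.dist_eq, Real.dist_eq]
      exact le_abs_self _

/-- The intervals `[fⁿ y, fⁿ x]` have disjoint interiors, so that the distortions of `f` on them
add up to a bounded amount. -/
theorem LogSlopeLipschitzOn.distortionLE_iterate_Icc [CompactSpace X] {L : NNReal}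
    (hf : LogSlopeLipschitzOn f univ L) (hc : StrictMono c) (hi : Isometry c) (hmono : StrictMono f)
    (hyx : y ≤ x) (hxy : f x ≤ y) (n : ℕ) :
    DistortionLE f^[n] (Icc y x) (Real.exp (L * Metric.diam (univ : Set X))) := by
  refine (hf.distortionLE_iterate hmono.injective (r := fun i => dist (f^[i] x) (f^[i] y))
    (fun i u hu v hv => ?_) n).mono ?_
  · have hmem {w : X} (hw : w ∈ Icc y x) : f^[i] w ∈ Icc (f^[i] y) (f^[i] x) :=
      (hmono.monotone.iterate i).mapsTo_Icc hw
    exact dist_le_dist_of_mem_uIcc hc hi (Icc_subset_uIcc' (hmem hu)) (Icc_subset_uIcc' (hmem hv))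
  · gcongr
    exact (sum_dist_iterate_le hc hi hmono.monotone hyx hxy n).trans
      (Metric.dist_le_diam_of_mem isCompact_univ.isBounded (mem_univ _) (mem_univ _))

/-- `h` is nearly an isometry on `[fⁿ⁺¹ p, fⁿ x]`, because it fixes the distinct points `fⁿ⁺¹ p` and
`fⁿ p` of this short interval. -/
theorem dist_iterate_le_of_commute {L : NNReal} {p : X} (hh : LogSlopeLipschitzOn h univ L)
    (hc : StrictMono c) (hi : Isometry c) (hfm : StrictMono f) (hhm : Monotone h)
    (hcomm : Function.Commute f h) (hp : h.IsFixedPt p) (hpx : ∀ m, p ≤ h^[m] x) (hx : h x < x)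
    (hfx : f x ≤ p) (m n : ℕ) :
    dist (f^[n] x) (f^[n] (h x)) ≤ Real.exp (L * dist (f^[n] x) (f^[n + 2] x)) ^ m *
      dist (f^[n] (h^[m] x)) (f^[n] (h^[m + 1] x)) := by
  have hfp : f p < p := (hfm ((hpx 1).trans_lt hx)).trans_le hfx
  have hfix (i : ℕ) : h.IsFixedPt (f^[i] p) := hp.map (hcomm.iterate_left i)
  have hf2 : f^[n + 2] x ≤ f^[n + 1] p := hfm.monotone.iterate (n + 1) hfx
  have hfn : f^[n + 1] p ≤ f^[n] p := hfm.monotone.iterate n hfp.le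
  have hpn (i : ℕ) : f^[n] p ≤ f^[n] (h^[i] x) := hfm.monotone.iterate n (hpx i)
  have hhx : f^[n] (h x) ≤ f^[n] x := hfm.monotone.iterate n hx.le
  set D : Set X := Icc (f^[n + 1] p) (f^[n] x)
  have hD : DistortionLE h D (Real.exp (L * dist (f^[n] x) (f^[n + 2] x))) :=
    hh (subset_univ _) fun u hu v hv =>
      dist_le_dist_of_mem_uIcc hc hi (Icc_subset_uIcc' ⟨hf2.trans hu.1, hu.2⟩)
        (Icc_subset_uIcc' ⟨hf2.trans hv.1, hv.2⟩)
  have hmaps : MapsTo h D D := fun u hu => ⟨(hfix _).symm.trans_le (hhm hu.1),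
    (hhm hu.2).trans (((hcomm.iterate_left n).eq x).symm.trans_le hhx)⟩
  have key := hD.dist_le_pow_mul_of_isFixedPt hmaps (Real.exp_nonneg _)
    ⟨le_rfl, hfn.trans (hpn 0)⟩ ⟨hfn, hpn 0⟩ (hfm.iterate n hfp).ne (hfix (n + 1)) (hfix n)
    ⟨hfn.trans (hpn 0), le_rfl⟩ ⟨hfn.trans (hpn 1), hhx⟩ m
  rwa [← (hcomm.iterate_iterate n m).eq, ← (hcomm.iterate_iterate n m).eq] at key

theorem dist_map_le_of_commute [CompactSpace X] {Lf Lh : NNReal} {p : X}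
    (hf : LogSlopeLipschitzOn f univ Lf) (hh : LogSlopeLipschitzOn h univ Lh)
    (hc : StrictMono c) (hi : Isometry c) (hfm : StrictMono f) (hhm : Monotone h)
    (hcomm : Function.Commute f h) (hp : h.IsFixedPt p) (hpx : ∀ m, p ≤ h^[m] x) (hx : h x < x)
    (hfx : f x ≤ p) (m n : ℕ) :
    dist x (h x) ≤ Real.exp (Lf * Metric.diam (univ : Set X)) *
      Real.exp (Lh * dist (f^[n] x) (f^[n + 2] x)) ^ m * dist (h^[m] x) (h^[m + 1] x) := by
  have hmem (i : ℕ) : h^[i] x ∈ Icc p x :=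
    ⟨hpx i, hhm.antitone_iterate_of_map_le hx.le i.zero_le⟩
  set δ := dist (f^[n] x) (f^[n] (h x))
  set E := Real.exp (Lf * Metric.diam (univ : Set X))
  set e := Real.exp (Lh * dist (f^[n] x) (f^[n + 2] x))
  have hslope : δ ≤ e ^ m * dist (f^[n] (h^[m] x)) (f^[n] (h^[m + 1] x)) :=
    dist_iterate_le_of_commute hh hc hi hfm hhm hcomm hp hpx hx hfx m n
  have hdist : dist (f^[n] (h^[m] x)) (f^[n] (h^[m + 1] x)) * dist x (h x) ≤
      E * (δ * dist (h^[m] x) (h^[m + 1] x)) :=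
    hf.distortionLE_iterate_Icc hc hi hfm (hpx 0) hfx n (hmem m) (hmem (m + 1)) (hmem 0) (hmem 1)
  have hδ : 0 < δ := dist_pos.2 (hfm.iterate n hx).ne'
  refine le_of_mul_le_mul_left ?_ hδ
  calc δ * dist x (h x)
      ≤ e ^ m * dist (f^[n] (h^[m] x)) (f^[n] (h^[m + 1] x)) * dist x (h x) := by gcongr
    _ = e ^ m * (dist (f^[n] (h^[m] x)) (f^[n] (h^[m + 1] x)) * dist x (h x)) := mul_assoc ..
    _ ≤ e ^ m * (E * (δ * dist (h^[m] x) (h^[m + 1] x))) := by gcongr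
    _ = δ * (E * e ^ m * dist (h^[m] x) (h^[m + 1] x)) := by ring

/-- **Kopell's lemma**, in a form for maps of a compact subset of the line. -/
theorem exists_iterate_le_of_commute [CompactSpace X] {Lf Lh : NNReal}
    (hf : LogSlopeLipschitzOn f univ Lf) (hh : LogSlopeLipschitzOn h univ Lh)
    (hc : StrictMono c) (hi : Isometry c) (hfm : StrictMono f) (hhm : Monotone h)
    (hcomm : Function.Commute f h) (hcont : Continuous h) (htop : IsTop x) (hx : h x < x) :
    ∃ r, h^[r] x ≤ f x := by
  by_contra! hlt
  obtain ⟨p, hlim, hpx⟩ := exists_tendsto_iterate_of_map_le hc hi hhm hx.le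
  have hp : h.IsFixedPt p := isFixedPt_of_tendsto_iterate hlim hcont.continuousAt
  have hfx : f x ≤ p := hc.le_iff_le.1 <| ge_of_tendsto' (f := fun r => c (h^[r] x))
    ((hi.continuous.tendsto p).comp hlim) fun r => hc.monotone (hlt r).le
  obtain ⟨q, hq, -⟩ := exists_tendsto_iterate_of_map_le hc hi hfm.monotone (htop (f x))
  set E := Real.exp (Lf * Metric.diam (univ : Set X))
  have hle (m : ℕ) : dist x (h x) ≤ E * dist (h^[m] x) (h^[m + 1] x) := by
    have hone := (hq.dist ((tendsto_add_atTop_iff_nat 2).2 hq)).const_mul (Lh : ℝ)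
    have hlimE := ((hone.rexp.pow m).const_mul E).mul_const (dist (h^[m] x) (h^[m + 1] x))
    rw [dist_self, mul_zero, Real.exp_zero, one_pow, mul_one] at hlimE
    exact ge_of_tendsto' hlimE <|
      dist_map_le_of_commute hf hh hc hi hfm hhm hcomm hp hpx hx hfx m
  have hzero : Tendsto (fun m => E * dist (h^[m] x) (h^[m + 1] x)) atTop (𝓝 0) := by
    simpa using (hlim.dist ((tendsto_add_atTop_iff_nat 1).2 hlim)).const_mul E
  exact (dist_pos.2 hx.ne').not_ge (ge_of_tendsto' hzero hle)

end Kopell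

section TameMaps

open Function

theorem iterate_iterate_of_heisenbergTriple {X : Type*} {f g h : X → X}
    (H : HeisenbergTriple (G := Function.End X) f g h) (m n : ℕ) (x : X) :
    f^[m] (g^[n] x) = h^[m * n] (g^[n] (f^[m] x)) :=
  congrFun (H.pow_pow m n).mul_eq x

/-- If `h` dominates `f` and `g` up to a power, then `fⁿ gⁿ` moves `x` down by `O(n)` powers of `h`
only, while the Heisenberg relation moves it by `n²`. -/
theorem map_eq_of_heisenbergTriple_of_iterate_le {X : Type*} [LinearOrder X]
    {f g h : X → X} (H : HeisenbergTriple (G := Function.End X) f g h) (hf : Monotone f)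
    (hg : Monotone g) (hh : StrictMono h) {x : X} (hx : IsTop x) {r s : ℕ} (hr : h^[r] x ≤ f x)
    (hs : h^[s] x ≤ g x) : h x = x := by
  by_contra hne
  have hhf : Function.Commute h f := congrFun H.commute_left.eq
  have hhg : Function.Commute h g := congrFun H.commute_right.eq
  set n := r + s + 1 with hn
  have hfn : h^[r * n] x ≤ f^[n] x := by
    rw [iterate_mul]
    exact (hhf.iterate_left r).iterate_le_of_map_le (hh.monotone.iterate r) hf hr n
  have hgn : h^[s * n] x ≤ g^[n] x := by
    rw [iterate_mul]
    exact (hhg.iterate_left s).iterate_le_of_map_le (hh.monotone.iterate s) hg hs n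
  have hlow : h^[s * n + r * n] x ≤ h^[n * n] x :=
    calc h^[s * n + r * n] x = h^[s * n] (h^[r * n] x) := iterate_add_apply ..
      _ ≤ h^[s * n] (f^[n] x) := hh.monotone.iterate _ hfn
      _ = f^[n] (h^[s * n] x) := (hhf.iterate_iterate _ n).eq x
      _ ≤ f^[n] (g^[n] x) := hf.iterate n hgn
      _ = h^[n * n] (g^[n] (f^[n] x)) := iterate_iterate_of_heisenbergTriple H n n x
      _ ≤ h^[n * n] x := hh.monotone.iterate _ (hx _)
  have hanti : StrictAnti fun k => h^[k] x :=
    hh.strictAnti_iterate_of_map_lt ((hx _).lt_of_ne hne)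
  exact (hanti (by rw [hn]; ring_nf; omega : s * n + r * n < n * n)).not_ge hlow

/-- `f` is an increasing self-map of `T` whose logarithmic slopes are Lipschitz, as is the
restriction to `T` of an orientation-preserving diffeomorphism of class `C^{1+Lip}`. -/
structure IsTameOn {X : Type*} [Preorder X] [PseudoMetricSpace X] (f : X → X) (T : Set X) :
    Prop where
  mapsTo : MapsTo f T T
  continuousOn : ContinuousOn f T
  strictMonoOn : StrictMonoOn f T
  exists_logSlopeLipschitzOn : ∃ L, LogSlopeLipschitzOn f T L

theorem IsTameOn.dual {X : Type*} [Preorder X] [PseudoMetricSpace X] {f : X → X} {T : Set X}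
    (h : IsTameOn f T) :
    IsTameOn (OrderDual.toDual ∘ f ∘ OrderDual.ofDual) (OrderDual.ofDual ⁻¹' T) :=
  ⟨h.mapsTo, h.continuousOn, h.strictMonoOn.dual, h.exists_logSlopeLipschitzOn⟩

theorem IsTameOn.restrict {X : Type*} [Preorder X] [PseudoMetricSpace X] {f : X → X} {T : Set X}
    (h : IsTameOn f T) :
    IsTameOn (h.mapsTo.restrict f T T) univ := by
  obtain ⟨L, hL⟩ := h.exists_logSlopeLipschitzOn
  exact ⟨mapsTo_univ _ _, (h.continuousOn.mapsToRestrict h.mapsTo).continuousOn,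
    fun y _ z _ hyz => h.strictMonoOn y.2 z.2 hyz, L, .of_semiconj (F := f) isometry_subtype_coe
      isometry_subtype_coe (fun _ _ => rfl) (hL.mono (by rintro _ ⟨w, -, rfl⟩; exact w.2) le_rfl)⟩

variable {X : Type*} [LinearOrder X] [MetricSpace X] {c : X → ℝ} {T : Set X} {x : X}

theorem map_eq_of_heisenbergTriple [CompactSpace X] (hc : StrictMono c) (hi : Isometry c)
    {f g h : X → X} (H : HeisenbergTriple (G := Function.End X) f g h) (hf : IsTameOn f univ)
    (hg : IsTameOn g univ) (hh : IsTameOn h univ) (hx : IsTop x) : h x = x := by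
  by_contra hne
  have mono {u : X → X} (hu : IsTameOn u univ) : StrictMono u := strictMonoOn_univ.1 hu.strictMonoOn
  obtain ⟨Lh, hLh⟩ := hh.exists_logSlopeLipschitzOn
  have hdom {u : X → X} (hu : IsTameOn u univ) (hcomm : Function.Commute u h) :
      ∃ r, h^[r] x ≤ u x := by
    obtain ⟨Lu, hLu⟩ := hu.exists_logSlopeLipschitzOn
    exact exists_iterate_le_of_commute hLu hLh hc hi (mono hu) (mono hh).monotone hcomm
      (continuousOn_univ.1 hh.continuousOn) hx ((hx _).lt_of_ne hne)
  obtain ⟨r, hr⟩ := hdom hf (congrFun H.commute_left.symm.eq)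
  obtain ⟨s, hs⟩ := hdom hg (congrFun H.commute_right.symm.eq)
  exact hne (map_eq_of_heisenbergTriple_of_iterate_le H (mono hf).monotone (mono hg).monotone
    (mono hh) hx hr hs)

theorem apply_eq_of_heisenbergTriple_of_isGreatest (hc : StrictMono c) (hi : Isometry c)
    (hT : IsCompact T) {f g h : Equiv.Perm X} (H : HeisenbergTriple f g h) (hf : IsTameOn f T)
    (hg : IsTameOn g T) (hh : IsTameOn h T) (hx : IsGreatest T x) : h x = x := by
  have : CompactSpace T := isCompact_iff_compactSpace.1 hT
  have hT : HeisenbergTriple (G := Function.End T) (hf.mapsTo.restrict f T T)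
      (hg.mapsTo.restrict g T T) (hh.mapsTo.restrict h T T) := by
    refine ⟨?_, ?_, ?_⟩ <;> refine funext fun y => Subtype.ext ?_
    exacts [DFunLike.congr_fun H.mul_eq y.1, DFunLike.congr_fun H.commute_left.eq y.1,
      DFunLike.congr_fun H.commute_right.eq y.1]
  exact congrArg Subtype.val <| map_eq_of_heisenbergTriple (hc.comp (Subtype.strictMono_coe T))
    (hi.comp isometry_subtype_coe) hT hf.restrict hg.restrict hh.restrict (x := ⟨x, hx.1⟩)
    fun y => hx.2 y.2

theorem apply_eq_of_heisenbergTriple_of_isLeast (hc : StrictMono c) (hi : Isometry c)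
    (hT : IsCompact T) {f g h : Equiv.Perm X} (H : HeisenbergTriple f g h) (hf : IsTameOn f T)
    (hg : IsTameOn g T) (hh : IsTameOn h T) (hx : IsLeast T x) : h x = x :=
  apply_eq_of_heisenbergTriple_of_isGreatest (X := Xᵒᵈ) (c := fun y => -c (OrderDual.ofDual y))
    (fun _ _ hyz => neg_lt_neg (hc hyz)) ((IsometryEquiv.neg ℝ).isometry.comp hi) hT H hf.dual
    hg.dual hh.dual hx.dual

end TameMaps

section Charts

open Topology

theorem logSlopeLipschitzOn_of_hasDerivAt {F F' : ℝ → ℝ} {S : Set ℝ} {C : NNReal}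
    (hS : Convex ℝ S) (hF : ∀ y ∈ S, HasDerivAt F (F' y) y) (hF' : ∀ y ∈ S, F' y ≠ 0)
    (hC : LipschitzOnWith C (fun y => Real.log |F' y|) S) : LogSlopeLipschitzOn F S C := by
  intro D hD r hr y hy z hz y' hy' z' hz'
  have hsub : convexHull ℝ D ⊆ S := convexHull_min hD hS
  have slope {u v : ℝ} (hu : u ∈ D) (hv : v ∈ D) :
      ∃ ξ ∈ convexHull ℝ D, dist (F u) (F v) = |F' ξ| * dist u v := by
    obtain ⟨ξ, hξ, hslope⟩ := domain_mvt
      (fun t ht => (hF t (hsub ht)).hasFDerivAt.hasFDerivWithinAt) (convex_convexHull ℝ D)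
      (subset_convexHull ℝ D hv) (subset_convexHull ℝ D hu)
    refine ⟨ξ, segment_subset_convexHull hv hu hξ, ?_⟩
    rw [Real.dist_eq, hslope, Real.dist_eq, ContinuousLinearMap.toSpanSingleton_apply, smul_eq_mul,
      abs_mul, mul_comm]
  obtain ⟨ξ, hξ, hslope⟩ := slope hy hz
  obtain ⟨ξ', hξ', hslope'⟩ := slope hy' hz'
  have hlog : Real.log |F' ξ| ≤ C * r + Real.log |F' ξ'| := by
    obtain ⟨u, hu, v, hv, huv⟩ := convexHull_exists_dist_ge2 hξ hξ'
    have hdist : dist ξ ξ' ≤ r := huv.trans (hr u hu v hv)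
    have hlip := hC.dist_le_mul ξ (hsub hξ) ξ' (hsub hξ')
    rw [← sub_le_iff_le_add]
    exact (le_abs_self _).trans (hlip.trans (by gcongr))
  have hderiv : |F' ξ| ≤ Real.exp (C * r) * |F' ξ'| := by
    rwa [← Real.exp_log (abs_pos.2 (hF' ξ (hsub hξ))),
      ← Real.exp_log (abs_pos.2 (hF' ξ' (hsub hξ'))), ← Real.exp_add, Real.exp_le_exp]
  calc dist (F y) (F z) * dist y' z' = |F' ξ| * (dist y z * dist y' z') := by
        rw [hslope, mul_assoc]
    _ ≤ Real.exp (C * r) * |F' ξ'| * (dist y z * dist y' z') := by gcongr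
    _ = Real.exp (C * r) * (dist (F y') (F z') * dist y z) := by rw [hslope']; ring

/-- `f` is strictly monotone on `S` with Lipschitz logarithmic slopes, as is a diffeomorphism of
class `C^{1+Lip}` on a small interval. -/
structure IsChartOn {X Y : Type*} [Preorder X] [Preorder Y] [Dist X] [Dist Y] (f : X → Y)
    (S : Set X) (L : NNReal) : Prop where
  logSlopeLipschitzOn : LogSlopeLipschitzOn f S L
  strictMonoOn_or_strictAntiOn : StrictMonoOn f S ∨ StrictAntiOn f S

theorem IsChartOn.mono {X Y : Type*} [Preorder X] [Preorder Y] [PseudoMetricSpace X]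
    [PseudoMetricSpace Y] {f : X → Y} {S S' : Set X} {L L' : NNReal} (h : IsChartOn f S L)
    (hS : S' ⊆ S) (hL : L ≤ L') : IsChartOn f S' L' :=
  ⟨h.1.mono hS hL, h.2.imp (·.mono hS) (·.mono hS)⟩

variable {K : Set ℝ} {f : Equiv.Perm K}

theorem IsD1Lip.exists_isChartOn (hf : IsD1Lip K f) (x : K) :
    ∃ U ∈ 𝓝 x, ∃ L, IsChartOn f U L := by
  obtain ⟨a, b, hx, F, F', hF, -, hinj, ⟨C, hC⟩, hFf⟩ := hf x
  have hval {y : K} (hy : (y : ℝ) ∈ Ioo a b) : F y = f y := by simp [hFf y hy y.2, apK]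
  refine ⟨Subtype.val ⁻¹' Ioo a b, continuous_subtype_val.continuousAt (isOpen_Ioo.mem_nhds hx),
    C, ?_, ?_⟩
  · exact .of_semiconj isometry_subtype_coe isometry_subtype_coe (fun y hy => hval hy) <|
      (logSlopeLipschitzOn_of_hasDerivAt (convex_Ioo a b) (fun y hy => (hF y hy).1)
        (fun y hy => (hF y hy).2) hC).mono (image_preimage_subset _ _) le_rfl
  · have hcont : ContinuousOn F (Ioo a b) := fun y hy => (hF y hy).1.continuousAt.continuousWithinAt
    refine (hcont.strictMonoOn_of_injOn_Ioo (hx.1.trans hx.2) hinj).imp ?_ ?_ <;>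
      exact fun h y hy z hz hyz => by simpa only [hval hy, hval hz] using! h hy hz hyz

theorem IsD1Lip.exists_forall_isChartOn_ball [CompactSpace K] (hf : IsD1Lip K f) :
    ∃ δ > 0, ∃ L, ∀ x, IsChartOn f (Metric.ball x δ) L := by
  choose U hU L h using hf.exists_isChartOn
  obtain ⟨t, -, ht⟩ := isCompact_univ.elim_nhds_subcover (fun x => interior (U x))
    fun x _ => interior_mem_nhds.2 (hU x)
  obtain ⟨δ, hδ, hball⟩ := lebesgue_number_lemma_of_metric (ι := t)
    (c := fun x => interior (U x)) isCompact_univ (fun _ => isOpen_interior) (by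
      rwa [iUnion_subtype])
  refine ⟨δ, hδ, ∑ x ∈ t, L x, fun y => ?_⟩
  obtain ⟨⟨x, hx⟩, hxy⟩ := hball y (mem_univ _)
  exact (h x).mono (hxy.trans interior_subset) (Finset.single_le_sum (fun x _ => zero_le) hx)

end Charts

section TameNear

open Filter Topology

/-- `f` is continuous and fixes `p`, and near `p` it is increasing with Lipschitz logarithmic
slopes. -/
structure IsTameNear {X : Type*} [Preorder X] [PseudoMetricSpace X] (f : X → X) (p : X) :
    Prop where
  continuous : Continuous f
  map_eq : f p = p
  exists_nhds : ∃ U ∈ 𝓝 p, StrictMonoOn f U ∧ ∃ L, LogSlopeLipschitzOn f U L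

section Interval

variable {X : Type*} [LinearOrder X] [MetricSpace X] {i : X → ℝ} {p : X}

theorem eventually_uIcc_subset (hi : StrictMono i) (hi' : Isometry i) {U : Set X} (hU : U ∈ 𝓝 p) :
    ∀ᶠ x in 𝓝 p, uIcc p x ⊆ U := by
  obtain ⟨ε, hε, hball⟩ := Metric.mem_nhds_iff.1 hU
  filter_upwards [Metric.ball_mem_nhds p hε] with x hx y hy
  refine hball (lt_of_le_of_lt (?_ : dist y p ≤ dist x p) hx)
  rw [dist_comm x]
  exact dist_le_dist_of_mem_uIcc hi hi' hy left_mem_uIcc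

theorem isCompact_uIcc_of_isometry [CompactSpace X] (hi : StrictMono i) (hi' : Isometry i)
    (a b : X) : IsCompact (uIcc a b) := by
  have hpre : uIcc a b = i ⁻¹' Icc (i (a ⊓ b)) (i (a ⊔ b)) := by
    ext x
    simp only [uIcc, mem_preimage, mem_Icc, hi.le_iff_le]
  exact hpre ▸ (isClosed_Icc.preimage hi'.continuous).isCompact

theorem IsTameNear.eventually_isTameOn (hi : StrictMono i) (hi' : Isometry i) {f : X → X}
    (hf : IsTameNear f p) : ∀ᶠ x in 𝓝 p, f x ∈ uIcc p x → IsTameOn f (uIcc p x) := by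
  obtain ⟨U, hU, hmono, L, hL⟩ := hf.exists_nhds
  filter_upwards [eventually_uIcc_subset hi hi' hU] with x hx hfx
  refine ⟨fun y hy => ?_, hf.continuous.continuousOn, hmono.mono hx, L, hL.mono hx le_rfl⟩
  have hy := (hmono.mono hx).monotoneOn.mapsTo_uIcc hy
  rw [hf.map_eq] at hy
  exact uIcc_subset_uIcc_left hfx hy

theorem IsTameNear.eventually_mem_uIcc {f : Equiv.Perm X} (hf : IsTameNear f p)
    (hf' : IsTameNear ⇑f⁻¹ p) : ∀ᶠ x in 𝓝 p, f x ∈ uIcc p x ∨ f⁻¹ x ∈ uIcc p x := by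
  obtain ⟨U, hU, hmono, -⟩ := hf.exists_nhds
  have hinv : Tendsto ⇑f⁻¹ (𝓝 p) (𝓝 p) := by
    simpa only [hf'.map_eq] using hf'.continuous.tendsto p
  filter_upwards [hU, hinv hU] with x hx hx'
  have hp : p ∈ U := mem_of_mem_nhds hU
  have hxp : f x ≤ p ↔ x ≤ p := by rw [← hmono.le_iff_le hx hp, hf.map_eq]
  have hpx : p ≤ f x ↔ p ≤ x := by rw [← hmono.le_iff_le hp hx, hf.map_eq]
  have hfx : f (f⁻¹ x) = x := f.apply_symm_apply x
  have hxp' : f⁻¹ x ≤ p ↔ x ≤ p := by rw [← hmono.le_iff_le hx' hp, hf.map_eq, hfx]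
  have hpx' : p ≤ f⁻¹ x ↔ p ≤ x := by rw [← hmono.le_iff_le hp hx', hf.map_eq, hfx]
  rcases le_total p x with h | h <;> rcases le_total x (f x) with h' | h'
  · exact .inr (mem_uIcc.2 (.inl ⟨hpx'.2 h, (hmono.le_iff_le hx' hx).1 (hfx.trans_le h')⟩))
  · exact .inl (mem_uIcc.2 (.inl ⟨hpx.2 h, h'⟩))
  · exact .inl (mem_uIcc.2 (.inr ⟨h', hxp.2 h⟩))
  · exact .inr (mem_uIcc.2 (.inr ⟨(hmono.le_iff_le hx hx').1 (h'.trans_eq hfx.symm), hxp'.2 h⟩))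

theorem HeisenbergTriple.eventually_apply_eq_of_isTameNear [CompactSpace X] (hi : StrictMono i)
    (hi' : Isometry i) {a b c : Equiv.Perm X} (h : HeisenbergTriple a b c) (ha : IsTameNear a p)
    (ha' : IsTameNear ⇑a⁻¹ p) (hb : IsTameNear b p) (hb' : IsTameNear ⇑b⁻¹ p) (hc : IsTameNear c p)
    (hc' : IsTameNear ⇑c⁻¹ p) : ∀ᶠ x in 𝓝 p, c x = x := by
  have htame {f : Equiv.Perm X} (hf : IsTameNear f p) (hf' : IsTameNear ⇑f⁻¹ p) :
      ∀ᶠ x in 𝓝 p, ∃ f' : Equiv.Perm X, (f' = f ∨ f' = f⁻¹) ∧ IsTameOn f' (uIcc p x) := by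
    filter_upwards [hf.eventually_isTameOn hi hi', hf'.eventually_isTameOn hi hi',
      hf.eventually_mem_uIcc hf'] with x hx hx' hmem
    exact hmem.elim (fun h => ⟨f, .inl rfl, hx h⟩) fun h => ⟨f⁻¹, .inr rfl, hx' h⟩
  filter_upwards [htame ha ha', htame hb hb', htame hc hc'] with x ⟨a', haa, hta⟩ ⟨b', hbb, htb⟩
    ⟨c', hcc, htc⟩
  have hT : IsCompact (uIcc p x) := isCompact_uIcc_of_isometry hi hi' p x
  have key {u v : Equiv.Perm X} (hu : IsTameOn u (uIcc p x)) (hv : IsTameOn v (uIcc p x))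
      (H : HeisenbergTriple u v c') : c' x = x := by
    rcases le_total p x with hpx | hxp
    · exact apply_eq_of_heisenbergTriple_of_isGreatest hi hi' hT H hu hv htc
        (uIcc_of_le hpx ▸ isGreatest_Icc hpx)
    · exact apply_eq_of_heisenbergTriple_of_isLeast hi hi' hT H hu hv htc
        (uIcc_of_ge hxp ▸ isLeast_Icc hxp)
  have hc'x : c' x = x := (h.of_sign_change haa hbb hcc).elim (key hta htb) (key htb hta)
  rcases hcc with rfl | rfl
  · exact hc'x
  · exact (Equiv.Perm.inv_eq_iff_eq.1 hc'x).symm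

end Interval

variable {K : Set ℝ} {p : K}

theorem MemDiffLip.isTameNear_sq {ψ : Equiv.Perm K} (h : MemDiffLip K ψ)
    (h2 : MemDiffLip K (ψ ^ 2)) (hp : ψ p = p) : IsTameNear ⇑(ψ ^ 2) p := by
  obtain ⟨U, hU, -, -, hmono⟩ := h.2.2.exists_isChartOn p
  obtain ⟨V, hV, L, hL⟩ := h2.2.2.exists_isChartOn p
  have hψ : Tendsto ψ (𝓝 p) (𝓝 p) := by simpa only [hp] using h.1.tendsto p
  refine ⟨h2.1, by simp [sq, hp], V ∩ (U ∩ ψ ⁻¹' U), inter_mem hV (inter_mem hU (hψ hU)),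
    ?_, L, hL.1.mono inter_subset_left le_rfl⟩
  have hmaps : MapsTo ψ (V ∩ (U ∩ ψ ⁻¹' U)) U := fun y hy => hy.2.2
  have hsub : V ∩ (U ∩ ψ ⁻¹' U) ⊆ U := fun y hy => hy.2.1
  exact hmono.elim (fun hmono => hmono.comp (hmono.mono hsub) hmaps)
    fun hmono => hmono.comp (hmono.mono hsub) hmaps

theorem HeisenbergTriple.eventually_pow_four_apply_eq [CompactSpace K]
    {G : Subgroup (Equiv.Perm K)} (hG : ∀ g ∈ G, MemDiffLip K g) {a b c : Equiv.Perm K}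
    (h : HeisenbergTriple a b c) (ha : a ∈ G) (hb : b ∈ G) (hc : c ∈ G) (hap : a p = p)
    (hbp : b p = p) : ∀ᶠ x in 𝓝 p, (c ^ 4) x = x := by
  have hcp : c p = p := by simpa [hap, hbp, eq_comm] using DFunLike.congr_fun h.mul_eq p
  have htame {ψ : Equiv.Perm K} (hψ : ψ ∈ G) (hp : ψ p = p) :
      IsTameNear ⇑(ψ ^ 2) p ∧ IsTameNear ⇑(ψ ^ 2)⁻¹ p := by
    refine ⟨(hG _ hψ).isTameNear_sq (hG _ (pow_mem hψ 2)) hp, ?_⟩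
    have hψ' := inv_mem hψ
    rw [← inv_pow]
    exact (hG _ hψ').isTameNear_sq (hG _ (pow_mem hψ' 2)) (Equiv.Perm.inv_eq_iff_eq.2 hp.symm)
  have hta := htame ha hap
  have htb := htame hb hbp
  have htc := htame (pow_mem hc 2) (by simp [sq, hcp])
  rw [← pow_mul] at htc
  exact (h.pow_pow 2 2).eventually_apply_eq_of_isTameNear (Subtype.strictMono_coe K)
    isometry_subtype_coe hta.1 hta.2 htb.1 htb.2 htc.1 htc.2

end TameNear

section Gaps

open Filter Topology MeasureTheory

/-- `e` lists the two end points, in either order, of a gap of `M`: they are distinct points of `M`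
with no point of `M` strictly in between. -/
structure IsGapPair {X : Type*} [Lattice X] (M : Set X) (e : X × X) : Prop where
  fst_mem : e.1 ∈ M
  snd_mem : e.2 ∈ M
  ne : e.1 ≠ e.2
  eq_or_eq : ∀ y ∈ M, y ∈ uIcc e.1 e.2 → y = e.1 ∨ y = e.2

namespace IsGapPair

theorem swap {X : Type*} [Lattice X] {M : Set X} {e : X × X} (he : IsGapPair M e) :
    IsGapPair M e.swap :=
  ⟨he.snd_mem, he.fst_mem, he.ne.symm, fun y hy h =>
    (he.eq_or_eq y hy (uIcc_comm e.1 e.2 ▸ h)).symm⟩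

variable {X : Type*} [LinearOrder X] {M : Set X} {e e' : X × X}

theorem le_or_le (he : IsGapPair M e) {y : X} (hy : y ∈ M) : y ≤ e.1 ∨ e.2 ≤ y := by
  by_contra! h
  rcases he.eq_or_eq y hy (Icc_subset_uIcc ⟨h.1.le, h.2.le⟩) with rfl | rfl
  exacts [h.1.false, h.2.false]

theorem eq_of_lt (he : IsGapPair M e) (he' : IsGapPair M e') (h : e.1 < e'.2) (h' : e'.1 < e.2) :
    e = e' :=
  Prod.ext
    (((he'.le_or_le he.fst_mem).resolve_right h.not_ge).antisymm
      ((he.le_or_le he'.fst_mem).resolve_right h'.not_ge))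
    (((he.le_or_le he'.snd_mem).resolve_left h.not_ge).antisymm
      ((he'.le_or_le he.snd_mem).resolve_left h'.not_ge))

end IsGapPair

variable {K : Set ℝ} {M : Set K}

theorem sum_dist_le_diam_of_lt (hK : Bornology.IsBounded K) {P : Finset (K × K)}
    (hP : ∀ e ∈ P, IsGapPair M e) (hlt : ∀ e ∈ P, e.1 < e.2) :
    ∑ e ∈ P, dist e.1 e.2 ≤ Metric.diam K := by
  have hdisj : (P : Set (K × K)).PairwiseDisjoint fun e => Ioo (e.1 : ℝ) e.2 :=
    fun e he e' he' hne => disjoint_left.2 fun t ht ht' => hne <|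
      (hP e he).eq_of_lt (hP e' he') (Subtype.coe_lt_coe.1 (ht.1.trans ht'.2))
        (Subtype.coe_lt_coe.1 (ht'.1.trans ht.2))
  have hsub : ⋃ e ∈ P, Ioo (e.1 : ℝ) e.2 ⊆ Icc (sInf K) (sSup K) :=
    iUnion₂_subset fun e _ => Ioo_subset_Icc_self.trans <| Icc_subset_Icc
      (hK.subset_Icc_sInf_sSup e.1.2).1 (hK.subset_Icc_sInf_sSup e.2.2).2
  have hle {e : K × K} (he : e ∈ P) : (e.1 : ℝ) ≤ e.2 := (hlt e he).le
  calc ∑ e ∈ P, dist e.1 e.2 = ∑ e ∈ P, volume.real (Ioo (e.1 : ℝ) e.2) :=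
        Finset.sum_congr rfl fun e he => by
          rw [Real.volume_real_Ioo_of_le (hle he), dist_comm, Subtype.dist_eq, Real.dist_eq,
            abs_of_nonneg (sub_nonneg.2 (hle he))]
    _ = volume.real (⋃ e ∈ P, Ioo (e.1 : ℝ) e.2) :=
        (measureReal_biUnion_finset hdisj (fun _ _ => measurableSet_Ioo) fun _ _ =>
          measure_Ioo_lt_top.ne).symm
    _ ≤ volume.real (Icc (sInf K) (sSup K)) := measureReal_mono hsub isCompact_Icc.measure_ne_top
    _ = Metric.diam K := by
        rw [Real.diam_eq hK, Real.volume_real_Icc, max_eq_left]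
        exact sub_nonneg.2 (Real.sInf_le_sSup K hK.bddBelow hK.bddAbove)

theorem sum_dist_le_two_mul_diam (hK : Bornology.IsBounded K) {P : Finset (K × K)}
    (hP : ∀ e ∈ P, IsGapPair M e) : ∑ e ∈ P, dist e.1 e.2 ≤ 2 * Metric.diam K := by
  classical
  rw [two_mul, ← Finset.sum_filter_add_sum_filter_not P (fun e => e.1 < e.2)]
  refine add_le_add (sum_dist_le_diam_of_lt hK (fun e he => hP e (Finset.mem_filter.1 he).1)
    fun e he => (Finset.mem_filter.1 he).2) ?_
  have hswap : ∑ e ∈ P with ¬ e.1 < e.2, dist e.1 e.2 =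
      ∑ e ∈ {e ∈ P | ¬ e.1 < e.2}.map (Equiv.prodComm K K).toEmbedding, dist e.1 e.2 := by
    simp [dist_comm]
  rw [hswap]
  refine sum_dist_le_diam_of_lt (M := M) hK ?_ ?_ <;> rw [Finset.forall_mem_map] <;> intro e he
  · exact (hP e (Finset.mem_filter.1 he).1).swap
  · obtain ⟨heP, hge⟩ := Finset.mem_filter.1 he
    exact (not_lt.1 hge).lt_of_ne (hP e heP).ne.symm

theorem finite_setOf_isGapPair_le_dist (hK : Bornology.IsBounded K) (M : Set K) {ε : ℝ}
    (hε : 0 < ε) : {e | IsGapPair M e ∧ ε ≤ dist e.1 e.2}.Finite := by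
  by_contra hinf
  obtain ⟨n, hn⟩ := exists_nat_gt (2 * Metric.diam K / ε)
  obtain ⟨P, hP, hcard⟩ := Set.Infinite.exists_subset_card_eq hinf n
  refine ((div_lt_iff₀ hε).1 hn).not_ge ?_
  calc (n : ℝ) * ε = P.card • ε := by rw [hcard, nsmul_eq_mul]
    _ ≤ ∑ e ∈ P, dist e.1 e.2 := Finset.card_nsmul_le_sum _ _ _ fun e he => (hP he).2
    _ ≤ 2 * Metric.diam K := sum_dist_le_two_mul_diam hK fun e he => (hP he).1

theorem exists_isGapPair_subset_Icc [CompactSpace K] (hK : IsTotallyDisconnected K)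
    (hM : IsClosed M) {a b : K} (ha : a ∈ M) (hb : b ∈ M) (hab : a < b) :
    ∃ u ∈ Icc a b, ∃ v ∈ Icc a b, IsGapPair M (u, v) := by
  obtain ⟨t, ht, hta, htb⟩ := isTotallyDisconnected_iff_lt.1 hK a a.2 b b.2 hab
  have hc : Continuous (Subtype.val : K → ℝ) := continuous_subtype_val
  obtain ⟨u, ⟨huM, hut⟩, hu⟩ := (hM.inter (isClosed_le hc continuous_const)).isCompact
    |>.exists_isGreatest (s := M ∩ {y : K | (y : ℝ) ≤ t}) ⟨a, ha, hta.le⟩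
  obtain ⟨v, ⟨hvM, hvt⟩, hv⟩ := (hM.inter (isClosed_le continuous_const hc)).isCompact
    |>.exists_isLeast (s := M ∩ {y : K | t ≤ (y : ℝ)}) ⟨b, hb, htb.le⟩
  have hut' : (u : ℝ) < t := lt_of_le_of_ne hut fun h => ht (h ▸ u.2)
  have huv : u < v := Subtype.coe_lt_coe.1 (hut'.trans_le hvt)
  have hau : a ≤ u := hu ⟨ha, hta.le⟩
  have hvb : v ≤ b := hv ⟨hb, htb.le⟩
  refine ⟨u, ⟨hau, huv.le.trans hvb⟩, v, ⟨hau.trans huv.le, hvb⟩, huM, hvM, huv.ne,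
    fun y hy h => ?_⟩
  rw [uIcc_of_le huv.le] at h
  exact (le_total (y : ℝ) t).imp (fun hyt => (hu ⟨hy, hyt⟩).antisymm h.1)
    fun hyt => h.2.antisymm (hv ⟨hy, hyt⟩)

theorem exists_isGapPair_dist_lt [CompactSpace K] (hK : IsTotallyDisconnected K)
    (hM : IsClosed M) (hinf : M.Infinite) {ε : ℝ} (hε : 0 < ε) :
    ∃ e, IsGapPair M e ∧ dist e.1 e.2 < ε := by
  obtain ⟨x, hxM, hx⟩ := hinf.exists_accPt_of_subset_isCompact hM.isCompact subset_rfl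
  obtain ⟨y, ⟨hy, hyM⟩, hne⟩ := accPt_iff_nhds.1 hx _ (Metric.ball_mem_nhds x hε)
  have key {a b : K} (ha : a ∈ M) (hb : b ∈ M) (hab : a < b) (hlt : dist b a < ε) :
      ∃ e, IsGapPair M e ∧ dist e.1 e.2 < ε := by
    obtain ⟨u, hu, v, hv, he⟩ := exists_isGapPair_subset_Icc hK hM ha hb hab
    exact ⟨(u, v), he, (dist_le_dist_of_mem_uIcc (Subtype.strictMono_coe K) isometry_subtype_coe
      (Icc_subset_uIcc' hu) (Icc_subset_uIcc' hv)).trans_lt hlt⟩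
  rcases hne.lt_or_gt with hlt | hlt
  exacts [key hyM hxM hlt (dist_comm y x ▸ hy), key hxM hyM hlt hy]

theorem exists_isGapPair_notMem [CompactSpace K] (hK : IsTotallyDisconnected K)
    (hM : IsClosed M) (hinf : M.Infinite) {R : Set (K × K)} (hR : R.Finite)
    (hgap : ∀ e ∈ R, IsGapPair M e) : ∃ e, IsGapPair M e ∧ e ∉ R := by
  rcases R.eq_empty_or_nonempty with rfl | hne
  · obtain ⟨e, he, -⟩ := exists_isGapPair_dist_lt hK hM hinf one_pos
    exact ⟨e, he, notMem_empty e⟩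
  · obtain ⟨e₀, he₀, hmin⟩ := R.exists_min_image (fun e => dist e.1 e.2) hR hne
    obtain ⟨e, he, hlt⟩ := exists_isGapPair_dist_lt hK hM hinf (dist_pos.2 (hgap e₀ he₀).ne)
    exact ⟨e, he, fun h => (hmin e h).not_gt hlt⟩

theorem exists_forall_exists_gapPair_near [CompactSpace K] (hM : IsClosed M) {Q : Set (K × K)}
    (hQ : Q.Infinite) (hgap : ∀ e ∈ Q, IsGapPair M e) :
    ∃ q ∈ M, ∀ ε > 0, ∃ e ∈ Q, dist e.1 e.2 < ε ∧ dist e.1 q < ε := by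
  have := hQ.cofinite_inf_principal_neBot
  have hbdd : Bornology.IsBounded K := (isCompact_iff_compactSpace.2 ‹_›).isBounded
  obtain ⟨q, hq, hlim⟩ := hM.isCompact (f := map Prod.fst (cofinite ⊓ 𝓟 Q))
    (tendsto_principal.2 <| mem_inf_of_right fun e he => (hgap e he).fst_mem)
  refine ⟨q, hq, fun ε hε => ?_⟩
  have hsmall : ∀ᶠ e in cofinite ⊓ 𝓟 Q, e ∈ Q ∧ dist e.1 e.2 < ε := by
    filter_upwards [mem_inf_of_left (finite_setOf_isGapPair_le_dist hbdd M hε).compl_mem_cofinite,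
      mem_inf_of_right (mem_principal_self Q)] with e he heQ
    exact ⟨heQ, not_le.1 fun hle => he ⟨hgap e heQ, hle⟩⟩
  obtain ⟨e, he, heQ, hlt⟩ := ((mapClusterPt_iff_frequently.1 hlim _
    (Metric.ball_mem_nhds q hε)).and_eventually hsmall).exists
  exact ⟨e, heQ, hlt, he⟩

end Gaps

section MinimalSets

open Filter Topology

variable {X : Type*}

theorem mapsTo_of_mem_closure {S : Set (Equiv.Perm X)} (hinv : ∀ s ∈ S, s⁻¹ ∈ S) {N : Set X}
    (hS : ∀ s ∈ S, MapsTo s N N) {g : Equiv.Perm X} (hg : g ∈ Subgroup.closure S) :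
    MapsTo g N N := by
  suffices MapsTo g N N ∧ MapsTo ⇑g⁻¹ N N from this.1
  induction hg using Subgroup.closure_induction with
  | mem s hs => exact ⟨hS s hs, hS _ (hinv s hs)⟩
  | one => simp [mapsTo_id]
  | mul g h _ _ ihg ihh => exact ⟨ihg.1.comp ihh.1, mul_inv_rev g h ▸ ihh.2.comp ihg.2⟩
  | inv g _ ih => exact ⟨ih.2, (inv_inv g).symm ▸ ih.1⟩

theorem exists_pow_apply_eq_of_mapsTo_finite {M : Set X} (hM : M.Finite) {g : Equiv.Perm X}
    (hg : MapsTo g M M) {p : X} (hp : p ∈ M) : ∃ k > 0, (g ^ k) p = p := by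
  obtain ⟨m, n, hmn, heq⟩ := hM.exists_lt_map_eq_of_forall_mem fun n => hg.iterate n hp
  refine ⟨n - m, Nat.sub_pos_of_lt hmn, (g ^ m).injective ?_⟩
  rw [← Equiv.Perm.mul_apply, ← pow_add, Nat.add_sub_cancel' hmn.le, ← Equiv.Perm.iterate_eq_pow,
    ← Equiv.Perm.iterate_eq_pow, heq]

variable [TopologicalSpace X] {G : Subgroup (Equiv.Perm X)} {M : Set X}

/-- `M` is a minimal set of the permutation group `G`, that is, a minimal element among the
nonempty closed `G`-invariant sets. -/
structure IsMinimalSet (G : Subgroup (Equiv.Perm X)) (M : Set X) : Prop where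
  isClosed : IsClosed M
  nonempty : M.Nonempty
  mapsTo : ∀ g ∈ G, MapsTo g M M
  eq_of_subset : ∀ N ⊆ M, IsClosed N → N.Nonempty → (∀ g ∈ G, MapsTo g N N) → N = M

/-- The group `G` contracts the set `D` to the point `q`: some elements of `G` map `D` into
arbitrarily small neighbourhoods of `q`. -/
def ContractsTo (G : Subgroup (Equiv.Perm X)) (D : Set X) (q : X) : Prop :=
  ∀ U ∈ 𝓝 q, ∃ w ∈ G, MapsTo w D U

theorem exists_isMinimalSet_subset [CompactSpace X] {C : Set X} (hC : IsClosed C)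
    (hne : C.Nonempty) (hinv : ∀ g ∈ G, MapsTo g C C) : ∃ M ⊆ C, IsMinimalSet G M := by
  obtain ⟨M, hMC, hM⟩ := zorn_superset_nonempty
    {N : Set X | IsClosed N ∧ N.Nonempty ∧ ∀ g ∈ G, MapsTo g N N} (fun c hc hchain hcne => by
      have := hcne.to_subtype
      refine ⟨⋂₀ c, ⟨isClosed_sInter fun N hN => (hc hN).1, ?_, ?_⟩,
        fun N hN => sInter_subset_of_mem hN⟩
      · exact IsCompact.nonempty_sInter_of_directed_nonempty_isCompact_isClosed
          (fun N hN N' hN' => (hchain.total hN hN').elim (fun h => ⟨N, hN, subset_rfl, h⟩)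
            fun h => ⟨N', hN', h, subset_rfl⟩)
          (fun N hN => (hc hN).2.1) (fun N hN => (hc hN).1.isCompact) fun N hN => (hc hN).1
      · exact fun g hg x hx N hN => (hc hN).2.2 g hg (hx N hN)) C ⟨hC, hne, hinv⟩
  exact ⟨M, hMC, hM.prop.1, hM.prop.2.1, hM.prop.2.2, fun N hNM hN hN' hN'' =>
    hNM.antisymm (hM.le_of_le ⟨hN, hN', hN''⟩ hNM)⟩

theorem mapsTo_closure_orbit {g : Equiv.Perm X} (hg : g ∈ G) (hcont : Continuous g) (x : X) :
    MapsTo g (closure (MulAction.orbit G x)) (closure (MulAction.orbit G x)) := by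
  refine MapsTo.closure ?_ hcont
  rintro _ ⟨g', rfl⟩
  exact ⟨⟨g, hg⟩ * g', rfl⟩

theorem exists_isMinimalSet_subset_closure_orbit [CompactSpace X]
    (hcont : ∀ g ∈ G, Continuous g) (x : X) :
    ∃ M ⊆ closure (MulAction.orbit G x), IsMinimalSet G M :=
  exists_isMinimalSet_subset isClosed_closure ⟨x, subset_closure (MulAction.mem_orbit_self x)⟩
    fun g hg => mapsTo_closure_orbit hg (hcont g hg) x

namespace IsMinimalSet

theorem exists_apply_mem (hM : IsMinimalSet G M) (hcont : ∀ g ∈ G, Continuous g) {x y : X}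
    (hx : x ∈ M) (hy : y ∈ M) {U : Set X} (hU : U ∈ 𝓝 y) : ∃ g ∈ G, g x ∈ U := by
  have horbit : MulAction.orbit G x ⊆ M := by
    rintro _ ⟨g, rfl⟩
    exact hM.mapsTo g g.2 hx
  have hdense : closure (MulAction.orbit G x) = M :=
    hM.eq_of_subset _ (closure_minimal horbit hM.isClosed) isClosed_closure
      ⟨x, subset_closure (MulAction.mem_orbit_self x)⟩
      fun g hg => mapsTo_closure_orbit hg (hcont g hg) x
  obtain ⟨_, hgx, g, rfl⟩ := mem_closure_iff_nhds.1 (hdense ▸ hy) U hU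
  exact ⟨g, g.2, hgx⟩

theorem contractsTo (hM : IsMinimalSet G M) (hcont : ∀ g ∈ G, Continuous g) {D : Set X} {p q : X}
    (hp : p ∈ M) (hq : q ∈ M) (h : ContractsTo G D p) : ContractsTo G D q := by
  intro U hU
  obtain ⟨g, hg, hgp⟩ := hM.exists_apply_mem hcont hp hq (interior_mem_nhds.2 hU)
  obtain ⟨w, hw, hwD⟩ := h (g ⁻¹' U)
    ((hcont g hg).continuousAt (mem_interior_iff_mem_nhds.1 hgp))
  exact ⟨g * w, mul_mem hg hw, fun y hy => hwD hy⟩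

theorem accPt [CompactSpace X] [T1Space X] (hM : IsMinimalSet G M)
    (hcont : ∀ g ∈ G, Continuous g) (hinf : M.Infinite) {x : X} (hx : x ∈ M) : AccPt x (𝓟 M) := by
  have hderived : derivedSet M = M := by
    refine hM.eq_of_subset _ (isClosed_iff_derivedSet_subset M |>.1 hM.isClosed)
      (isClosed_derivedSet M) ?_ fun g hg x hx => ?_
    · obtain ⟨x, -, hx⟩ := hinf.exists_accPt_of_subset_isCompact hM.isClosed.isCompact subset_rfl
      exact ⟨x, hx⟩
    · refine accPt_iff_nhds.2 fun U hU => ?_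
      obtain ⟨y, ⟨hy, hyM⟩, hne⟩ := accPt_iff_nhds.1 hx _ ((hcont g hg).continuousAt hU)
      exact ⟨g y, ⟨hy, hM.mapsTo g hg hyM⟩, g.injective.ne hne⟩
  exact hderived.ge hx

/-- Ping-pong with two elements contracting the same neighbourhood to two of its points. -/
theorem exists_mul_ne_of_contractsTo [CompactSpace X] [T2Space X] (hM : IsMinimalSet G M)
    (hcont : ∀ g ∈ G, Continuous g) (hinf : M.Infinite) {u q : X} (hu : u ∈ M) (hq : q ∈ M)
    {D : Set X} (hD : D ∈ 𝓝 u) (h : ContractsTo G D q) :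
    ∃ A ∈ G, ∃ B ∈ G, A * B * (B * A) ≠ B * A * (A * B) := by
  obtain ⟨v, ⟨hvD, hvM⟩, hne⟩ :=
    accPt_iff_nhds.1 (hM.accPt hcont hinf hu) _ (interior_mem_nhds.2 hD)
  obtain ⟨U, V, hU, hV, hUV⟩ := t2_separation_nhds hne
  obtain ⟨A, hA, hAD⟩ := hM.contractsTo hcont hq hvM h (U ∩ D)
    (inter_mem hU (mem_interior_iff_mem_nhds.1 hvD))
  obtain ⟨B, hB, hBD⟩ := hM.contractsTo hcont hq hu h (V ∩ D) (inter_mem hV hD)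
  have hA' : MapsTo A D D := fun y hy => (hAD hy).2
  have hB' : MapsTo B D D := fun y hy => (hBD hy).2
  have huD := mem_of_mem_nhds hD
  refine ⟨A, hA, B, hB, fun heq => disjoint_left.1 hUV (hAD (hB' (hB' (hA' huD)))).1 ?_⟩
  have hmem := (hBD (hA' (hA' (hB' huD)))).1
  exact (DFunLike.congr_fun heq u).symm ▸ hmem

end IsMinimalSet

end MinimalSets

section RadialDistortion

variable {X Y Z : Type*} [PseudoMetricSpace X] [PseudoMetricSpace Y] [PseudoMetricSpace Z]

/-- `w` expands distances to `u` by at most `C` times the factor by which it expands `dist u v`,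
at all points whose distance to `u` is at most `dist u v / C`. -/
def RadialDistortionLE (w : X → Y) (u v : X) (C : ℝ) : Prop :=
  ∀ y, dist y u * C ≤ dist u v →
    dist (w y) (w u) * dist u v ≤ C * (dist (w u) (w v) * dist y u)

namespace RadialDistortionLE

variable {w : X → Y} {u v : X} {C C' : ℝ}

theorem mono (h : RadialDistortionLE w u v C) (hC : C ≤ C') : RadialDistortionLE w u v C' :=
  fun y hy => (h y (le_trans (by gcongr) hy)).trans (by gcongr)

theorem dist_le (h : RadialDistortionLE w u v C) (huv : 0 < dist u v) {y : X}
    (hy : dist y u * C ≤ dist u v) : dist (w y) (w u) ≤ dist (w u) (w v) := by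
  refine le_of_mul_le_mul_right ?_ huv
  calc dist (w y) (w u) * dist u v ≤ C * (dist (w u) (w v) * dist y u) := h y hy
    _ = dist (w u) (w v) * (dist y u * C) := by ring
    _ ≤ dist (w u) (w v) * dist u v := by gcongr

theorem comp {s : Y → Z}
    (hs : DistortionLE s (Metric.closedBall (w u) (dist (w u) (w v))) C')
    (hw : RadialDistortionLE w u v C) (hC : 0 ≤ C) (hC' : 1 ≤ C') (huv : 0 < dist u v)
    (hwuv : 0 < dist (w u) (w v)) : RadialDistortionLE (s ∘ w) u v (C' * C) := by
  intro y hy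
  have hyC : dist y u * C ≤ dist u v :=
    le_trans (by gcongr; exact le_mul_of_one_le_left hC hC') hy
  have hu : w u ∈ Metric.closedBall (w u) (dist (w u) (w v)) :=
    Metric.mem_closedBall_self dist_nonneg
  have hv : w v ∈ Metric.closedBall (w u) (dist (w u) (w v)) := (dist_comm _ _).le
  refine le_of_mul_le_mul_right ?_ hwuv
  calc dist (s (w y)) (s (w u)) * dist u v * dist (w u) (w v)
      = dist (s (w y)) (s (w u)) * dist (w u) (w v) * dist u v := by ring
    _ ≤ C' * (dist (s (w u)) (s (w v)) * dist (w y) (w u)) * dist u v := by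
        gcongr ?_ * _
        exact hs (hw.dist_le huv hyC) hu hu hv
    _ = C' * dist (s (w u)) (s (w v)) * (dist (w y) (w u) * dist u v) := by ring
    _ ≤ C' * dist (s (w u)) (s (w v)) * (C * (dist (w u) (w v) * dist y u)) := by
        gcongr _ * ?_
        exact hw y hyC
    _ = C' * C * (dist ((s ∘ w) u) ((s ∘ w) v) * dist y u) * dist (w u) (w v) := by
        simp only [Function.comp_apply]
        ring

end RadialDistortionLE

end RadialDistortion

section UniformCharts

open Filter Topology

/-- `S` is a finite symmetric set of permutations which at scale `δ` have uniformly bounded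
distortion and map intervals onto intervals. -/
structure IsUniformlyCharted {X : Type*} [Lattice X] [PseudoMetricSpace X]
    (S : Set (Equiv.Perm X)) (δ : ℝ) (L : NNReal) : Prop where
  finite : S.Finite
  inv_mem : ∀ s ∈ S, s⁻¹ ∈ S
  pos : 0 < δ
  distortionLE : ∀ s ∈ S, ∀ u, ∀ r < δ,
    DistortionLE s (Metric.closedBall u r) (Real.exp (L * (2 * r)))
  mapsTo_uIcc : ∀ s ∈ S, ∀ u v, dist u v < δ → MapsTo ⇑s⁻¹ (uIcc (s u) (s v)) (uIcc u v)

theorem IsUniformlyCharted.isGapPair_smul {X : Type*} [Lattice X] [PseudoMetricSpace X]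
    {S : Set (Equiv.Perm X)} {M : Set X} {δ : ℝ} {L : NNReal} (h : IsUniformlyCharted S δ L)
    (hM : ∀ s ∈ S, MapsTo s M M) {e : X × X} (he : IsGapPair M e) (hlt : dist e.1 e.2 < δ)
    {s : Equiv.Perm X} (hs : s ∈ S) : IsGapPair M (s • e) :=
  ⟨hM s hs he.fst_mem, hM s hs he.snd_mem, s.injective.ne he.ne, fun y hy hyI =>
    (he.eq_or_eq (s⁻¹ y) (hM _ (h.inv_mem s hs) hy) (h.mapsTo_uIcc s hs _ _ hlt hyI)).imp
      Equiv.Perm.inv_eq_iff_eq.1 Equiv.Perm.inv_eq_iff_eq.1⟩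

variable {K : Set ℝ}

theorem MemDiffLip.exists_distortionLE_closedBall [CompactSpace K] {s : Equiv.Perm K}
    (hs : MemDiffLip K s) : ∃ δ > 0, ∃ L : NNReal, ∀ u, ∀ r < δ,
      DistortionLE s (Metric.closedBall u r) (Real.exp (L * (2 * r))) := by
  obtain ⟨δ, hδ, L, hL⟩ := hs.2.2.exists_forall_isChartOn_ball
  refine ⟨δ, hδ, L, fun u r hr => (hL u).logSlopeLipschitzOn (Metric.closedBall_subset_ball hr)
    fun y hy z hz => ?_⟩
  exact (dist_triangle_right y z u).trans (two_mul r ▸ add_le_add hy hz)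

theorem MemDiffLip.exists_mapsTo_uIcc [CompactSpace K] {s : Equiv.Perm K} (hs : MemDiffLip K s⁻¹) :
    ∃ δ > 0, ∀ u v, dist u v < δ → MapsTo ⇑s⁻¹ (uIcc (s u) (s v)) (uIcc u v) := by
  obtain ⟨δ, hδ, L, hL⟩ := hs.2.2.exists_forall_isChartOn_ball
  obtain ⟨η, hη, hcont⟩ := Metric.uniformContinuous_iff.1
    (CompactSpace.uniformContinuous_of_continuous hs.2.1) δ hδ
  refine ⟨η, hη, fun u v huv => ?_⟩
  have hsub : uIcc (s u) (s v) ⊆ Metric.ball (s u) δ := fun z hz =>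
    (dist_le_dist_of_mem_uIcc (Subtype.strictMono_coe K) isometry_subtype_coe hz
      left_mem_uIcc).trans_lt (hcont huv)
  have hu : s⁻¹ (s u) = u := s.symm_apply_apply u
  have hv : s⁻¹ (s v) = v := s.symm_apply_apply v
  rcases (hL (s u)).strictMonoOn_or_strictAntiOn with hmono | hanti
  · simpa only [hu, hv] using (hmono.mono hsub).monotoneOn.mapsTo_uIcc
  · simpa only [hu, hv] using (hanti.mono hsub).antitoneOn.mapsTo_uIcc

theorem exists_isUniformlyCharted [CompactSpace K] {S : Set (Equiv.Perm K)} (hS : S.Finite)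
    (hinv : ∀ s ∈ S, s⁻¹ ∈ S) (hdiff : ∀ s ∈ S, MemDiffLip K s) :
    ∃ δ L, IsUniformlyCharted S δ L := by
  have hdistortion : ∀ᶠ q : ℝ × NNReal in 𝓝[>] 0 ×ˢ atTop, ∀ s ∈ S, ∀ u, ∀ r < q.1,
      DistortionLE s (Metric.closedBall u r) (Real.exp (q.2 * (2 * r))) := by
    refine (eventually_all_finite hS).2 fun s hs => ?_
    obtain ⟨δ, hδ, L, h⟩ := (hdiff s hs).exists_distortionLE_closedBall
    filter_upwards [prod_mem_prod (Ioo_mem_nhdsGT hδ) (Ici_mem_atTop L)] with q hq u r hr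
    rcases lt_or_ge r 0 with hr0 | hr0
    · simp [Metric.closedBall_eq_empty.2 hr0, DistortionLE]
    · refine (h u r (hr.trans hq.1.2)).mono ?_
      gcongr
      exact hq.2
  have huIcc : ∀ᶠ q : ℝ × NNReal in 𝓝[>] 0 ×ˢ atTop, ∀ s ∈ S, ∀ u v, dist u v < q.1 →
      MapsTo ⇑s⁻¹ (uIcc (s u) (s v)) (uIcc u v) := by
    refine (eventually_all_finite hS).2 fun s hs => ?_
    obtain ⟨δ, hδ, h⟩ := (hdiff _ (hinv s hs)).exists_mapsTo_uIcc
    filter_upwards [prod_mem_prod (Ioo_mem_nhdsGT hδ) univ_mem] with q hq u v huv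
    exact h u v (huv.trans hq.1.2)
  have hpos : ∀ᶠ q : ℝ × NNReal in 𝓝[>] 0 ×ˢ atTop, 0 < q.1 :=
    tendsto_fst.eventually self_mem_nhdsWithin
  obtain ⟨q, hq, hq', hq0⟩ := (hdistortion.and (huIcc.and hpos)).exists
  exact ⟨q.1, q.2, hS, hinv, hq0, hq, hq'⟩

end UniformCharts

section GapOrbits

open Topology

section GapBall

variable {X : Type*} [Lattice X] {S : Set (Equiv.Perm X)} {M : Set X} {T : Set (X × X)}

/-- The pairs reached from `T` in at most `n` steps, where a step applies an element of `S` and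
has to end in a gap of `M`. -/
def gapBall (S : Set (Equiv.Perm X)) (M : Set X) (T : Set (X × X)) : ℕ → Set (X × X)
  | 0 => T
  | n + 1 => gapBall S M T n ∪ {e | IsGapPair M e ∧ ∃ s ∈ S, ∃ e' ∈ gapBall S M T n, e = s • e'}

/-- The pairs reached from `T` by applying elements of `S` along gaps of `M`. -/
def gapClosure (S : Set (Equiv.Perm X)) (M : Set X) (T : Set (X × X)) : Set (X × X) :=
  ⋃ n, gapBall S M T n

theorem gapBall_mono : Monotone (gapBall S M T) :=
  monotone_nat_of_le_succ fun _ => subset_union_left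

theorem finite_gapBall (hS : S.Finite) (hT : T.Finite) (n : ℕ) : (gapBall S M T n).Finite := by
  induction n with
  | zero => exact hT
  | succ n ih =>
    refine ih.union ((hS.image2 (fun s e => s • e) ih).subset ?_)
    rintro _ ⟨-, s, hs, e, he, rfl⟩
    exact mem_image2_of_mem hs he

theorem isGapPair_of_mem_gapBall (hT : ∀ e ∈ T, IsGapPair M e) (n : ℕ) :
    ∀ e ∈ gapBall S M T n, IsGapPair M e := by
  induction n with
  | zero => exact hT
  | succ n ih => exact fun e he => he.elim (ih e) And.left

theorem subset_gapClosure : T ⊆ gapClosure S M T :=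
  subset_iUnion (gapBall S M T) 0

theorem isGapPair_of_mem_gapClosure (hT : ∀ e ∈ T, IsGapPair M e) {e : X × X}
    (he : e ∈ gapClosure S M T) : IsGapPair M e :=
  (mem_iUnion.1 he).elim fun n => isGapPair_of_mem_gapBall hT n e

theorem smul_mem_gapClosure {e : X × X} (he : e ∈ gapClosure S M T) {s : Equiv.Perm X}
    (hs : s ∈ S) (hse : IsGapPair M (s • e)) : s • e ∈ gapClosure S M T :=
  (mem_iUnion.1 he).elim fun n hn => mem_iUnion.2 ⟨n + 1, Or.inr ⟨hse, s, hs, e, hn, rfl⟩⟩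

end GapBall

/-- `T` is a set of gaps of `M` containing all those of length at least `δ`. -/
structure IsGapBase {X : Type*} [Lattice X] [Dist X] (M : Set X) (δ : ℝ) (T : Set (X × X)) :
    Prop where
  isGapPair : ∀ e ∈ T, IsGapPair M e
  dist_lt : ∀ e, IsGapPair M e → e ∉ T → dist e.1 e.2 < δ

namespace IsGapBase

variable {X : Type*} [Lattice X] [Dist X] {M : Set X} {δ : ℝ} {T T' : Set (X × X)}

theorem superset (h : IsGapBase M δ T) (hTT' : T ⊆ T') (hT' : ∀ e ∈ T', IsGapPair M e) :
    IsGapBase M δ T' :=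
  ⟨hT', fun e he hne => h.dist_lt e he fun hT => hne (hTT' hT)⟩

theorem gapClosure (h : IsGapBase M δ T) (S : Set (Equiv.Perm X)) :
    IsGapBase M δ (gapClosure S M T) :=
  h.superset subset_gapClosure fun _ => isGapPair_of_mem_gapClosure h.isGapPair

end IsGapBase

namespace IsUniformlyCharted

section Lattice

variable {X : Type*} [Lattice X] [MetricSpace X] {S : Set (Equiv.Perm X)} {M : Set X} {δ : ℝ}
  {L : NNReal} {T C C' : Set (X × X)}

theorem exists_radialDistortionLE (h : IsUniformlyCharted S δ L) (hT : IsGapBase M δ T) (n : ℕ) :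
    ∀ J ∈ gapBall S M T (n + 1) \ gapBall S M T n, ∃ I ∈ gapBall S M T 1 \ T,
      ∃ w ∈ Subgroup.closure S, J = w • I ∧ ∃ P : Finset (X × X), ↑P ⊆ gapBall S M T n ∧
        RadialDistortionLE w I.1 I.2 (Real.exp (L * (2 * ∑ e ∈ P, dist e.1 e.2))) := by
  classical
  induction n with
  | zero =>
    refine fun J hJ => ⟨J, hJ, 1, one_mem _, (one_smul _ J).symm, ∅, by simp, fun y _ => ?_⟩
    simp [mul_comm]
  | succ n ih =>
    rintro J ⟨hJ | ⟨hJ, s, hs, J', hJ', rfl⟩, hJn⟩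
    · exact absurd hJ hJn
    have hJ'n : J' ∉ gapBall S M T n := fun hmem => hJn (Or.inr ⟨hJ, s, hs, J', hmem, rfl⟩)
    have hJ'gap := isGapPair_of_mem_gapBall hT.isGapPair _ J' hJ'
    have hJ'lt : dist J'.1 J'.2 < δ :=
      hT.dist_lt J' hJ'gap fun hmem => hJ'n (gapBall_mono (Nat.zero_le n) hmem)
    obtain ⟨I, hI, w, hw, rfl, P, hP, hdist⟩ := ih J' ⟨hJ', hJ'n⟩
    refine ⟨I, hI, s * w, mul_mem (Subgroup.subset_closure hs) hw, (mul_smul s w I).symm,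
      insert (w • I) P, ?_, ?_⟩
    · rw [Finset.coe_insert]
      exact insert_subset hJ' (hP.trans (gapBall_mono (Nat.le_succ n)))
    · rw [Finset.sum_insert fun hmem => hJ'n (hP hmem), mul_add, mul_add, Real.exp_add]
      exact RadialDistortionLE.comp (w := w) (s := s) (h.distortionLE s hs _ _ hJ'lt) hdist
        (Real.exp_pos _).le (Real.one_le_exp (by positivity))
        (dist_pos.2 (isGapPair_of_mem_gapBall hT.isGapPair _ I hI.1).ne) (dist_pos.2 hJ'gap.ne)

/-- The left end points of the pairs in `C' \ C` form a finite closed invariant set. -/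
theorem subset_of_isGapBase (h : IsUniformlyCharted S δ L)
    (hM : IsMinimalSet (Subgroup.closure S) M) (hinf : M.Infinite) (hC : IsGapBase M δ C)
    (hCS : ∀ e ∈ C, ∀ s ∈ S, IsGapPair M (s • e) → s • e ∈ C) (hC' : ∀ e ∈ C', IsGapPair M e)
    (hfin : C'.Finite) (hC'S : ∀ e ∈ C', ∀ s ∈ S, IsGapPair M (s • e) → s • e ∈ C') :
    C' ⊆ C := by
  by_contra hnot
  obtain ⟨I, hI⟩ := not_subset.1 hnot
  have hfin' : (Prod.fst '' (C' \ C)).Finite := (hfin.subset sdiff_subset).image _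
  have hinv : ∀ s ∈ S, MapsTo s (Prod.fst '' (C' \ C)) (Prod.fst '' (C' \ C)) := by
    rintro s hs _ ⟨e, ⟨heC', heC⟩, rfl⟩
    have hgap := hC' e heC'
    have hse := h.isGapPair_smul (fun s hs => hM.mapsTo s (Subgroup.subset_closure hs)) hgap
      (hC.dist_lt e hgap heC) hs
    refine ⟨s • e, ⟨hC'S e heC' s hs hse, fun hmem => heC ?_⟩, rfl⟩
    simpa only [inv_smul_smul, hgap, forall_const] using hCS _ hmem s⁻¹ (h.inv_mem s hs)
  refine hinf (hM.eq_of_subset _ ?_ hfin'.isClosed ⟨I.1, I, hI, rfl⟩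
    (fun g hg => mapsTo_of_mem_closure h.inv_mem hinv hg) ▸ hfin')
  rintro _ ⟨e, he, rfl⟩
  exact (hC' e he.1).fst_mem

end Lattice

variable {K : Set ℝ} {S : Set (Equiv.Perm K)} {M : Set K} {δ : ℝ} {L : NNReal} {T : Set (K × K)}

theorem exists_infinite_gapClosure [CompactSpace K] (hK : IsTotallyDisconnected K)
    (h : IsUniformlyCharted S δ L) (hM : IsMinimalSet (Subgroup.closure S) M)
    (hinf : M.Infinite) :
    ∃ T, T.Finite ∧ IsGapBase M δ T ∧ (gapClosure S M T).Infinite := by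
  by_contra! hfin
  set C := gapClosure S M {e | IsGapPair M e ∧ δ ≤ dist e.1 e.2}
  have hbdd : Bornology.IsBounded K := (isCompact_iff_compactSpace.2 ‹_›).isBounded
  have hbase : IsGapBase M δ {e | IsGapPair M e ∧ δ ≤ dist e.1 e.2} :=
    ⟨fun e he => he.1, fun e he hne => not_le.1 fun hle => hne ⟨he, hle⟩⟩
  have hC := hbase.gapClosure S
  have hCfin := hfin _ (finite_setOf_isGapPair_le_dist hbdd M h.pos) hbase
  obtain ⟨I, hI, hIC⟩ := exists_isGapPair_notMem hK hM.isClosed hinf hCfin hC.isGapPair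
  have hbase' : IsGapBase M δ (insert I C) :=
    hC.superset (subset_insert I C) (forall_mem_insert.2 ⟨hI, hC.isGapPair⟩)
  exact hIC <| h.subset_of_isGapBase hM hinf hC (fun e he s hs => smul_mem_gapClosure he hs)
    (hbase'.gapClosure S).isGapPair (hfin _ (hCfin.insert I) hbase')
    (fun e he s hs => smul_mem_gapClosure he hs) (subset_gapClosure (mem_insert I C))

theorem exists_radialDistortionLE_diam (h : IsUniformlyCharted S δ L)
    (hK : Bornology.IsBounded K) (hT : IsGapBase M δ T) {J : K × K}
    (hJ : J ∈ gapClosure S M T) (hJT : J ∉ T) :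
    ∃ I ∈ gapBall S M T 1 \ T, ∃ w ∈ Subgroup.closure S, J = w • I ∧
      RadialDistortionLE w I.1 I.2 (Real.exp (L * (2 * (2 * Metric.diam K)))) := by
  obtain ⟨n, hn, hn'⟩ := Nat.exists_not_and_succ_of_not_zero_of_exists
    (p := fun n => J ∈ gapBall S M T n) hJT (mem_iUnion.1 hJ)
  obtain ⟨I, hI, w, hw, hwI, P, hP, hdist⟩ := h.exists_radialDistortionLE hT n J ⟨hn', hn⟩
  refine ⟨I, hI, w, hw, hwI, hdist.mono ?_⟩
  gcongr
  exact sum_dist_le_two_mul_diam hK fun e he => isGapPair_of_mem_gapBall hT.isGapPair n e (hP he)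

theorem exists_infinite_setOf_isGapPair (h : IsUniformlyCharted S δ L)
    (hK : Bornology.IsBounded K) (hfin : T.Finite) (hT : IsGapBase M δ T)
    (hinf : (gapClosure S M T).Infinite) :
    ∃ u ∈ M, ∃ ρ > 0, {J | IsGapPair M J ∧ ∃ w ∈ Subgroup.closure S,
      ∀ y, dist y u ≤ ρ → dist (w y) J.1 ≤ dist J.1 J.2}.Infinite := by
  set E := Real.exp (L * (2 * (2 * Metric.diam K)))
  have hE : 0 < E := Real.exp_pos _
  have hgap {I : K × K} (hI : I ∈ gapBall S M T 1) : IsGapPair M I :=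
    isGapPair_of_mem_gapBall hT.isGapPair 1 I hI
  by_contra! hcon
  have hfinite : (⋃ I ∈ gapBall S M T 1, {J | IsGapPair M J ∧ ∃ w ∈ Subgroup.closure S,
      ∀ y, dist y I.1 ≤ dist I.1 I.2 / E → dist (w y) J.1 ≤ dist J.1 J.2}).Finite :=
    (finite_gapBall h.finite hfin 1).biUnion fun I hI =>
      hcon I.1 (hgap hI).fst_mem _ (div_pos (dist_pos.2 (hgap hI).ne) hE)
  refine hinf.sdiff hfin (hfinite.subset fun J hJ => ?_)
  obtain ⟨I, hI, w, hw, rfl, hdist⟩ := h.exists_radialDistortionLE_diam hK hT hJ.1 hJ.2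
  exact mem_biUnion hI.1 ⟨isGapPair_of_mem_gapClosure hT.isGapPair hJ.1, w, hw, fun y hy =>
    hdist.dist_le (dist_pos.2 (hgap hI.1).ne) ((le_div_iff₀ hE).1 hy)⟩

theorem exists_contractsTo [CompactSpace K] (hK : IsTotallyDisconnected K)
    (h : IsUniformlyCharted S δ L) (hM : IsMinimalSet (Subgroup.closure S) M)
    (hinf : M.Infinite) :
    ∃ u ∈ M, ∃ q ∈ M, ∃ D ∈ 𝓝 u, ContractsTo (Subgroup.closure S) D q := by
  obtain ⟨T, hfin, hT, hgrow⟩ := h.exists_infinite_gapClosure hK hM hinf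
  obtain ⟨u, hu, ρ, hρ, hQ⟩ := h.exists_infinite_setOf_isGapPair
    (isCompact_iff_compactSpace.2 ‹_›).isBounded hfin hT hgrow
  obtain ⟨q, hq, hnear⟩ := exists_forall_exists_gapPair_near hM.isClosed hQ fun _ => And.left
  refine ⟨u, hu, q, hq, _, Metric.closedBall_mem_nhds u hρ, fun U hU => ?_⟩
  obtain ⟨ε, hε, hεU⟩ := Metric.mem_nhds_iff.1 hU
  obtain ⟨J, ⟨-, w, hw, hwJ⟩, hJ, hJq⟩ := hnear (ε / 2) (half_pos hε)
  refine ⟨w, hw, fun y hy => hεU ?_⟩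
  calc dist (w y) q ≤ dist (w y) J.1 + dist J.1 q := dist_triangle _ _ _
    _ < ε / 2 + ε / 2 := add_lt_add ((hwJ y hy).trans_lt hJ) hJq
    _ = ε := add_halves ε

end IsUniformlyCharted

end GapOrbits

section FiniteOrder

open Filter Topology

theorem isOfFinOrder_of_eventually_pow_apply_eq {X : Type*} [TopologicalSpace X] [CompactSpace X]
    {g : Equiv.Perm X} (h : ∀ x, ∃ m > 0, ∀ᶠ y in 𝓝 x, (g ^ m) y = y) : IsOfFinOrder g := by
  have hcover : ∃ m > 0, ∀ y ∈ univ, (g ^ m) y = y := by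
    refine isCompact_univ.induction_on ⟨1, one_pos, fun y hy => hy.elim⟩
      (fun s t hst ⟨m, hm, ht⟩ => ⟨m, hm, fun y hy => ht y (hst hy)⟩) ?_ fun x _ => ?_
    · rintro s t ⟨m, hm, hs⟩ ⟨n, hn, ht⟩
      refine ⟨m * n, mul_pos hm hn, fun y hy => hy.elim (fun hy => ?_) fun hy => ?_⟩
      · rw [pow_mul]
        exact Equiv.Perm.pow_apply_eq_self_of_apply_eq_self (hs y hy) n
      · rw [pow_mul']
        exact Equiv.Perm.pow_apply_eq_self_of_apply_eq_self (ht y hy) m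
    · obtain ⟨m, hm, hx⟩ := h x
      exact ⟨_, mem_nhdsWithin_of_mem_nhds hx, m, hm, fun y hy => hy⟩
  obtain ⟨m, hm, hfix⟩ := hcover
  exact isOfFinOrder_iff_pow_eq_one.2 ⟨m, hm, Equiv.ext fun y => hfix y (mem_univ y)⟩

variable {K : Set ℝ} [CompactSpace K] {M : Set K} {a b c : Equiv.Perm K}

theorem IsMinimalSet.exists_mul_ne_of_infinite (hK : IsTotallyDisconnected K)
    {G : Subgroup (Equiv.Perm K)} (hfg : G.FG) (hG : ∀ g ∈ G, MemDiffLip K g)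
    (hM : IsMinimalSet G M) (hinf : M.Infinite) :
    ∃ A ∈ G, ∃ B ∈ G, A * B * (B * A) ≠ B * A * (A * B) := by
  obtain ⟨T, hT, hTfin⟩ := G.fg_iff.1 hfg
  obtain ⟨S, hS, hSfin, hinv⟩ : ∃ S, Subgroup.closure S = G ∧ S.Finite ∧ ∀ s ∈ S, s⁻¹ ∈ S :=
    ⟨T ∪ T⁻¹, by simp [Subgroup.closure_union, hT], hTfin.union hTfin.inv,
      fun s hs => by simpa [or_comm] using hs⟩
  subst hS
  obtain ⟨δ, L, hcharts⟩ :=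
    exists_isUniformlyCharted hSfin hinv fun s hs => hG s (Subgroup.subset_closure hs)
  obtain ⟨u, hu, q, hq, D, hD, hcontr⟩ := hcharts.exists_contractsTo hK hM hinf
  exact hM.exists_mul_ne_of_contractsTo (fun g hg => (hG g hg).1) hinf hu hq hD hcontr

namespace HeisenbergTriple

theorem finite_of_isMinimalSet (hK : IsTotallyDisconnected K)
    (hG : ∀ g ∈ Subgroup.closure {a, b}, MemDiffLip K g) (h : HeisenbergTriple a b c)
    (hM : IsMinimalSet (Subgroup.closure {a, b}) M) : M.Finite := by
  by_contra hinf
  have hfg : (Subgroup.closure {a, b}).FG :=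
    (Subgroup.fg_iff _).2 ⟨{a, b}, rfl, toFinite _⟩
  obtain ⟨A, hA, B, hB, hne⟩ := hM.exists_mul_ne_of_infinite hK hfg hG hinf
  exact hne (h.mul_mul_mul_comm hA hB)

theorem exists_eventually_pow_apply_eq (hK : IsTotallyDisconnected K)
    (hG : ∀ g ∈ Subgroup.closure {a, b}, MemDiffLip K g) (h : HeisenbergTriple a b c) (x : K) :
    ∃ m > 0, ∀ᶠ y in 𝓝 x, (c ^ m) y = y := by
  have hcont : ∀ g ∈ Subgroup.closure {a, b}, Continuous g := fun g hg => (hG g hg).1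
  have ha : a ∈ Subgroup.closure {a, b} := Subgroup.subset_closure (mem_insert a _)
  have hb : b ∈ Subgroup.closure {a, b} := Subgroup.subset_closure (mem_insert_of_mem a rfl)
  have hc : c ∈ Subgroup.closure {a, b} := by
    rw [h.eq_commutatorElement, commutatorElement_def]
    exact mul_mem (mul_mem (mul_mem ha hb) (inv_mem ha)) (inv_mem hb)
  obtain ⟨M, hMx, hM⟩ := exists_isMinimalSet_subset_closure_orbit hcont x
  have hfin := h.finite_of_isMinimalSet hK hG hM
  obtain ⟨p, hp⟩ := hM.nonempty
  obtain ⟨k, hk, hak⟩ := exists_pow_apply_eq_of_mapsTo_finite hfin (hM.mapsTo a ha) hp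
  obtain ⟨l, hl, hbl⟩ := exists_pow_apply_eq_of_mapsTo_finite hfin (hM.mapsTo b hb) hp
  have hfix : ∀ᶠ y in 𝓝 p, ((c ^ (k * l)) ^ 4) y = y :=
    (h.pow_pow k l).eventually_pow_four_apply_eq hG (pow_mem ha k) (pow_mem hb l)
      (pow_mem hc (k * l)) hak hbl
  obtain ⟨_, hgx, ⟨g, hg⟩, rfl⟩ :=
    mem_closure_iff_nhds.1 (hMx hp) _ (eventually_eventually_nhds.2 hfix)
  have hfix' : ∀ᶠ y in 𝓝 (g x), ((c ^ (k * l)) ^ 4) y = y := hgx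
  refine ⟨k * l * 4, by positivity, ?_⟩
  filter_upwards [(hcont g hg).continuousAt.eventually hfix'] with y hy
  have hcg : Commute (c ^ (k * l * 4)) g := (h.commute_of_mem_closure hg).pow_left _
  apply g.injective
  rw [← Equiv.Perm.mul_apply, ← hcg.eq, Equiv.Perm.mul_apply, pow_mul]
  exact hy

theorem isOfFinOrder (hK : IsTotallyDisconnected K)
    (hG : ∀ g ∈ Subgroup.closure {a, b}, MemDiffLip K g) (h : HeisenbergTriple a b c) :
    IsOfFinOrder c :=
  isOfFinOrder_of_eventually_pow_apply_eq (h.exists_eventually_pow_apply_eq hK hG)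

end HeisenbergTriple

end FiniteOrder

theorem sl_n_finite_image_general {K : Set ℝ} (hK : IsCompact K) (hK' : IsTotallyDisconnected K)
    {ι : Type*} [Fintype ι] [DecidableEq ι] (hι : 3 ≤ Fintype.card ι)
    {Γ : Subgroup (Matrix.SpecialLinearGroup ι ℤ)} [Γ.FiniteIndex] (φ : Γ →* Equiv.Perm K)
    (hφ : ∀ γ, MemDiffLip K (φ γ)) : (range φ).Finite := by
  have := isCompact_iff_compactSpace.1 hK
  refine finite_range_of_heisenbergTriple_isOfFinOrder hι φ fun a b c h => ?_
  refine (h.map φ).isOfFinOrder hK' fun g hg => ?_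
  have hle : Subgroup.closure {φ a, φ b} ≤ φ.range :=
    (Subgroup.closure_le _).2 (pair_subset ⟨a, rfl⟩ ⟨b, rfl⟩)
  obtain ⟨γ, rfl⟩ := hle hg
  exact hφ γ

/-- For `n ≥ 3` and `Γ` a finite-index subgroup of `SL_n(ℤ)`, every
homomorphism `Γ → diff^{1+Lip}(K)` has finite image. -/
theorem sl_n_finite_image (K : Set ℝ) (hK : IsCantorInR K)
    (n : ℕ) (hn : 3 ≤ n)
    (Γ : Subgroup (Matrix.SpecialLinearGroup (Fin n) ℤ))
    (hΓ : Γ.index ≠ 0)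
    (φ : Γ →* Equiv.Perm K)
    (hφ : ∀ γ : Γ, MemDiffLip K (φ γ)) :
    (Set.range φ).Finite :=
  have : Γ.FiniteIndex := ⟨hΓ⟩
  sl_n_finite_image_general hK.2.1 hK.2.2.1 (by simpa using hn) φ hφ
end
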